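/- Let C1 and C2 be two longest cycles in a finite simple graph G with k := |V(C1) ∩ V(C2)| > 0, let A := V(C1) \ V(C2) and B := V(C2) \ V(C1), and let S be a minimum A–B separator in G. Then there exists a finite simple graph F on at most 2k vertices that contains no subgraph isomorphic to Q3+ and no subgraph isomorphic to K_{3,3} and that has at least |S| edges (equivalently, |S| ≤ ex(2k, {Q3+, K_{3,3}})). -/

import Mathlib

open SimpleGraph

/-- `c` is a longest cycle in `G`: it is a cycle and its length is at least
the length of every cycle in `G`. -/
def IsLongestCycle {V : Type*} (G : SimpleGraph V) {v : V} (c : G.Walk v v) : Prop :=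
  c.IsCycle ∧ ∀ (u : V) (c' : G.Walk u u), c'.IsCycle → c'.length ≤ c.length

/-- `F` contains a subgraph isomorphic to `H`. -/
def ContainsCopy {α β : Type*} (H : SimpleGraph α) (F : SimpleGraph β) : Prop :=
  ∃ f : α → β, Function.Injective f ∧ ∀ a b : α, H.Adj a b → F.Adj (f a) (f b)

/-- The complete bipartite graph `K_{3,3}`. -/
def K33 : SimpleGraph (Fin 3 ⊕ Fin 3) := completeBipartiteGraph (Fin 3) (Fin 3)

/-- `Q₃⁺`: the graph obtained from `K_{4,4}` by deleting a matching of size 3. -/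
def Q3plus : SimpleGraph (Fin 4 ⊕ Fin 4) :=
  (completeBipartiteGraph (Fin 4) (Fin 4)).deleteEdges
    {e | ∃ i : Fin 4, i.val < 3 ∧ e = s(Sum.inl i, Sum.inr i)}

/-- `S` is an `A`–`B` separator in `G`: every path with one endpoint in `A` and the
other in `B` contains a vertex of `S`. -/
def IsSeparator {V : Type*} (G : SimpleGraph V) (A B S : Finset V) : Prop :=
  ∀ (a b : V), a ∈ A → b ∈ B → ∀ p : G.Walk a b, p.IsPath → ∃ s ∈ S, s ∈ p.support

/-- `S` is a minimum `A`–`B` separator in `G`. -/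
def IsMinSeparator {V : Type*} (G : SimpleGraph V) (A B S : Finset V) : Prop :=
  IsSeparator G A B S ∧ ∀ S' : Finset V, IsSeparator G A B S' → S.card ≤ S'.card

/-!
By Menger's theorem there are `|S|` disjoint paths between the two cycles, possibly trivial ones.
The `k` common vertices cut each cycle into `k` segments. The vertices of `F` are these `2k`
segments, and each path gives an edge joining the two segments that contain its ends.

Pick an even number of the paths and pair up their ends by arcs within segments of one cycle. These
arcs have no inner vertex on the other cycle, from which we remove alternate arcs between the ends
of the paths. If what remains links up with the paths and the new arcs to a single cycle, then the
removed arcs are strictly longer in total than the added ones, as no cycle is longer than the given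
two and at least one of the paths is nontrivial.
Such inequalities in both directions contradict each other. Two paths joining the same two segments
always allow both exchanges, so `F` has `|S|` edges. If the paths form a copy of `K₃,₃` or `Q₃⁺`,
then for almost all orders in which their ends may lie on the two cycles some set of paths allows
both exchanges. For the remaining orders the inequalities from several exchanges add up to a
contradiction.
-/

namespace LongestCycles

section Masks

variable {α β : Type*}

/-- `m` encodes the predicate `P` on the list `L`: its `i`-th binary digit tells whether the
`i`-th entry of `L` satisfies `P`. -/
def IsMask (m : ℕ) (P : α → Prop) (L : List α) : Prop :=
  ∀ i, m.testBit i ↔ ∃ a, L[i]? = some a ∧ P a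

theorem IsMask.prop_of_testBit {m i : ℕ} {P : α → Prop} {L : List α} {a : α} (h : IsMask m P L)
    (ha : L[i]? = some a) (hi : m.testBit i) : P a := by
  obtain ⟨b, hb, hPb⟩ := (h i).1 hi
  rwa [Option.some_inj.1 (ha.symm.trans hb)]

theorem IsMask.congr {m : ℕ} {P Q : α → Prop} {L : List α} (h : IsMask m P L)
    (hPQ : ∀ a ∈ L, P a ↔ Q a) : IsMask m Q L := fun i => by
  refine (h i).trans (exists_congr fun a => and_congr_right fun ha => hPQ a ?_)
  exact List.mem_of_getElem? ha

theorem isMask_zero (L : List α) : IsMask 0 (fun _ => False) L := fun i => by simp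

theorem isMask_two_pow_length_sub_one (L : List α) :
    IsMask (2 ^ L.length - 1) (fun _ => True) L := fun i => by
  simp [Nat.testBit_two_pow_sub_one, List.getElem?_eq_some_iff]

theorem IsMask.and {m n : ℕ} {P Q : α → Prop} {L : List α} (hm : IsMask m P L)
    (hn : IsMask n Q L) : IsMask (m &&& n) (fun a => P a ∧ Q a) L := fun i => by
  rw [Nat.testBit_and, Bool.and_eq_true, hm i, hn i]
  cases L[i]? <;> simp

theorem IsMask.or {m n : ℕ} {P Q : α → Prop} {L : List α} (hm : IsMask m P L)
    (hn : IsMask n Q L) : IsMask (m ||| n) (fun a => P a ∨ Q a) L := fun i => by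
  rw [Nat.testBit_or, Bool.or_eq_true, hm i, hn i]
  cases L[i]? <;> simp

theorem IsMask.map {m : ℕ} {P : β → Prop} {f : α → β} {L : List α}
    (h : IsMask m (fun a => P (f a)) L) : IsMask m P (L.map f) := fun i => by
  rw [h i, List.getElem?_map]
  cases L[i]? <;> simp

theorem IsMask.append {m n : ℕ} {P : α → Prop} {K L : List α} (hm : IsMask m P K)
    (hn : IsMask n P L) : IsMask (m ||| n <<< K.length) P (K ++ L) := fun i => by
  rw [Nat.testBit_or, Bool.or_eq_true, hm i, Nat.testBit_shiftLeft, Bool.and_eq_true, hn,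
    List.getElem?_append]
  by_cases hi : i < K.length
  · simp [hi, Nat.not_le.2 hi]
  · simp [hi, Nat.not_lt.1 hi]

/-- The concatenation of the masks `ms`, each of width `N`. -/
def concatMasks (N : ℕ) (ms : List ℕ) : ℕ :=
  ms.foldr (fun m n => m ||| n <<< N) 0

theorem isMask_concatMasks {N : ℕ} {P : β → Prop} {F : α → ℕ} {B : α → List β} (L : List α)
    (hN : ∀ a ∈ L, (B a).length = N) (hF : ∀ a ∈ L, IsMask (F a) P (B a)) :
    IsMask (concatMasks N (L.map F)) P (L.flatMap B) := by
  induction L with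
  | nil => exact fun i => by simp [concatMasks]
  | cons a L ih =>
    have h := (hF a List.mem_cons_self).append
      (ih (fun b hb => hN b (.tail _ hb)) fun b hb => hF b (.tail _ hb))
    rwa [hN a List.mem_cons_self] at h

/-- The digits `lo, …, lo + len - 1` of `m`. -/
def slice (lo len m : ℕ) : ℕ := (m >>> lo) &&& (2 ^ len - 1)

theorem testBit_slice {lo len m i : ℕ} (hi : i < len) :
    (slice lo len m).testBit i = m.testBit (lo + i) := by
  simp [slice, hi, Nat.testBit_shiftRight]

/-- Do the combinatorial rectangles `rows`, each a pair of masks, cover all pairs `(i, j)` with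
`i < radices.prod` and `j` a digit of `full` missing from `acc`?  The left index is determined
radix by radix, and the right masks of the rows that are full on the remaining left indices are
collected in `acc`. -/
def covers (full : ℕ) : List ℕ → List (ℕ × ℕ) → ℕ → Bool
  | [], _, acc => acc == full
  | r :: rs, rows, acc => acc == full ||
    (List.range r).all fun k =>
      let rows' := rows.map fun q => (slice (k * rs.prod) rs.prod q.1, q.2)
      covers full rs (rows'.filter fun q => q.1 != 0 && q.1 != 2 ^ rs.prod - 1)
        (rows'.foldr (fun q m => bif q.1 == 2 ^ rs.prod - 1 then q.2 ||| m else m) acc)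

theorem testBit_foldr_full {ones acc j : ℕ} {rows : List (ℕ × ℕ)}
    (h : (rows.foldr (fun q m => bif q.1 == ones then q.2 ||| m else m) acc).testBit j) :
    acc.testBit j ∨ ∃ q ∈ rows, q.1 = ones ∧ q.2.testBit j := by
  induction rows with
  | nil => exact .inl h
  | cons q rows ih =>
    by_cases hq : q.1 = ones
    · simp only [List.foldr_cons, hq, beq_self_eq_true, cond_true, Nat.testBit_or,
        Bool.or_eq_true] at h
      rcases h with h | h
      · exact .inr ⟨q, List.mem_cons_self, hq, h⟩
      · exact (ih h).imp_right fun ⟨s, hs, hs'⟩ => ⟨s, .tail _ hs, hs'⟩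
    · simp only [List.foldr_cons, beq_eq_false_iff_ne.2 hq, cond_false] at h
      exact (ih h).imp_right fun ⟨s, hs, hs'⟩ => ⟨s, .tail _ hs, hs'⟩

theorem exists_row_of_covers {full : ℕ} {radices : List ℕ} {rows : List (ℕ × ℕ)} {acc : ℕ}
    (h : covers full radices rows acc) {i j : ℕ} (hi : i < radices.prod) (hj : full.testBit j) :
    acc.testBit j ∨ ∃ q ∈ rows, q.1.testBit i ∧ q.2.testBit j := by
  induction radices generalizing rows acc i with
  | nil => exact .inl (by rwa [eq_of_beq h])
  | cons r rs ih =>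
    rw [covers, Bool.or_eq_true] at h
    rcases h with h | h
    · exact .inl (by rwa [eq_of_beq h])
    have hpos : 0 < rs.prod := Nat.pos_of_ne_zero fun h0 => by simp [h0] at hi
    have hmod : i % rs.prod < rs.prod := Nat.mod_lt _ hpos
    have hk : i / rs.prod < r := Nat.div_lt_of_lt_mul (by rwa [mul_comm, ← List.prod_cons])
    have hdigit (m : ℕ) : (slice (i / rs.prod * rs.prod) rs.prod m).testBit (i % rs.prod) =
        m.testBit i := by
      rw [testBit_slice hmod, Nat.div_add_mod']
    rcases ih (List.all_eq_true.1 h _ (List.mem_range.2 hk)) hmod with h | ⟨q, hq, hqi, hqj⟩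
    · rcases testBit_foldr_full h with h | ⟨q, hq, hq1, hqj⟩
      · exact .inl h
      · obtain ⟨s, hs, rfl⟩ := List.mem_map.1 hq
        refine .inr ⟨s, hs, ?_, hqj⟩
        rw [← hdigit, show slice _ _ s.1 = _ from hq1, Nat.testBit_two_pow_sub_one,
          decide_eq_true hmod]
    · obtain ⟨s, hs, rfl⟩ := List.mem_map.1 (List.mem_of_mem_filter hq)
      exact .inr ⟨s, hs, by rwa [← hdigit], hqj⟩

end Masks

section BlockOrders

/-- All lists that list the elements of the first block of `Bs` in some order, then those of the
second block, and so on. -/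
def blockOrders : List (List ℕ) → List (List ℕ)
  | [] => [[]]
  | b :: bs => b.permutations'.flatMap fun l => (blockOrders bs).map (l ++ ·)

/-- The length of `blockOrders Bs`. -/
def numOrders (Bs : List (List ℕ)) : ℕ := (Bs.map fun b => b.length.factorial).prod

theorem length_blockOrders (Bs : List (List ℕ)) : (blockOrders Bs).length = numOrders Bs := by
  induction Bs with
  | nil => rfl
  | cons b bs ih =>
    simp [blockOrders, List.length_flatMap, ih, numOrders,
      (List.permutations_perm_permutations' b).length_eq.symm, List.length_permutations]

theorem mem_blockOrders_cons {b o : List ℕ} {bs : List (List ℕ)} :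
    o ∈ blockOrders (b :: bs) ↔ ∃ l, l.Perm b ∧ ∃ o' ∈ blockOrders bs, l ++ o' = o := by
  simp [blockOrders]

theorem perm_flatten_of_mem_blockOrders {Bs : List (List ℕ)} {o : List ℕ}
    (ho : o ∈ blockOrders Bs) : o.Perm Bs.flatten := by
  induction Bs generalizing o with
  | nil => simp_all [blockOrders]
  | cons b bs ih =>
    obtain ⟨l, hl, o', ho', rfl⟩ := mem_blockOrders_cons.1 ho
    exact hl.append (ih ho')

/-- The blocks of `Bs` with only the elements of `H` kept. -/
def restrictBlocks (Bs : List (List ℕ)) (H : List ℕ) : List (List ℕ) :=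
  Bs.map (List.filter H.elem)

theorem filter_mem_blockOrders {Bs : List (List ℕ)} {o : List ℕ} (ho : o ∈ blockOrders Bs)
    (H : List ℕ) : o.filter H.elem ∈ blockOrders (restrictBlocks Bs H) := by
  induction Bs generalizing o with
  | nil => simp_all [blockOrders, restrictBlocks]
  | cons b bs ih =>
    obtain ⟨l, hl, o', ho', rfl⟩ := mem_blockOrders_cons.1 ho
    exact mem_blockOrders_cons.2 ⟨_, hl.filter _, _, ih ho', (List.filter_append ..).symm⟩

theorem exists_pairwise_mem_blockOrders {p : ℕ → ℤ} {Bs : List (List ℕ)}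
    (hinj : Set.InjOn p {e | e ∈ Bs.flatten}) (hnd : Bs.flatten.Nodup)
    (hlt : Bs.Pairwise fun b b' => ∀ x ∈ b, ∀ y ∈ b', p x < p y) :
    ∃ o ∈ blockOrders Bs, o.Pairwise fun x y => p x < p y := by
  induction Bs with
  | nil => exact ⟨[], by simp [blockOrders], .nil⟩
  | cons b bs ih =>
    rw [List.flatten_cons] at hinj hnd
    rw [List.pairwise_cons] at hlt
    obtain ⟨o, ho, hsorted⟩ := ih (hinj.mono fun e he => List.mem_append_right b he)
      hnd.of_append_right hlt.2
    have hperm := List.mergeSort_perm b fun x y => decide (p x ≤ p y)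
    refine ⟨_, mem_blockOrders_cons.2 ⟨_, hperm, o, ho, rfl⟩,
      List.pairwise_append.2 ⟨?_, hsorted, fun x hx y hy => ?_⟩⟩
    · have hle := b.pairwise_mergeSort (le := fun x y => decide (p x ≤ p y))
        (fun _ _ _ h h' => by simp only [decide_eq_true_eq] at *; exact h.trans h')
        fun x y => by simpa using le_total (p x) (p y)
      refine (hle.and (hperm.nodup_iff.2 hnd.of_append_left)).imp_of_mem
        fun {x y} hx hy h => lt_of_le_of_ne (of_decide_eq_true h.1) fun heq => h.2 ?_
      exact hinj (List.mem_append_left _ (hperm.mem_iff.1 hx))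
        (List.mem_append_left _ (hperm.mem_iff.1 hy)) heq
    · obtain ⟨b', hb', hy⟩ := List.mem_flatten.1 ((perm_flatten_of_mem_blockOrders ho).mem_iff.1 hy)
      exact hlt.1 b' hb' x (hperm.mem_iff.1 hx) y hy

/-- The mask on `blockOrders Bs` of the orders in which `x` comes before `y`. -/
def beforeMask : List (List ℕ) → ℕ → ℕ → ℕ
  | [], _, _ => 0
  | b :: bs, x, y =>
    concatMasks (numOrders bs) (b.permutations'.map fun l =>
      bif b.elem x || b.elem y then
        bif Nat.blt (l.idxOf x) (l.idxOf y) then 2 ^ numOrders bs - 1 else 0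
      else beforeMask bs x y)

theorem isMask_beforeMask (Bs : List (List ℕ)) (x y : ℕ) :
    IsMask (beforeMask Bs x y) (fun o => o.idxOf x < o.idxOf y) (blockOrders Bs) := by
  induction Bs with
  | nil => exact (isMask_zero _).congr (by simp [blockOrders])
  | cons b bs ih =>
    refine isMask_concatMasks _ (fun l _ => by simp [length_blockOrders]) fun l hl => .map ?_
    have hmem (z : ℕ) : z ∈ b ↔ z ∈ l := (List.mem_permutations'.1 hl).mem_iff.symm
    have hle (z : ℕ) : l.idxOf z ≤ l.length := List.idxOf_le_length
    have hlt (z : ℕ) : l.idxOf z < l.length ↔ z ∈ l := List.idxOf_lt_length_iff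
    by_cases hxy : x ∈ l ∨ y ∈ l
    · have key (o : List ℕ) : (l ++ o).idxOf x < (l ++ o).idxOf y ↔ l.idxOf x < l.idxOf y := by
        grind
      rw [show (b.elem x || b.elem y) = true by simpa [hmem] using hxy, cond_true]
      cases h : Nat.blt (l.idxOf x) (l.idxOf y)
      · have h : ¬l.idxOf x < l.idxOf y := by simpa [← Nat.blt_eq] using h
        simpa [key, h] using isMask_zero (blockOrders bs)
      · have h : l.idxOf x < l.idxOf y := by simpa using h
        simpa [key, h, ← length_blockOrders] using isMask_two_pow_length_sub_one (blockOrders bs)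
    · obtain ⟨hx, hy⟩ := not_or.1 hxy
      simpa [hmem, hx, hy, List.idxOf_append] using ih

/-- The mask on `blockOrders Bs` of the orders that have `r` as a subsequence. -/
def sortedMask (Bs : List (List ℕ)) : List ℕ → ℕ
  | x :: y :: r => beforeMask Bs x y &&& sortedMask Bs (y :: r)
  | _ => 2 ^ numOrders Bs - 1

theorem isMask_sortedMask (Bs : List (List ℕ)) : ∀ r : List ℕ,
    IsMask (sortedMask Bs r) (fun o => r.Pairwise fun x y => o.idxOf x < o.idxOf y)
      (blockOrders Bs)
  | [] => by simpa [length_blockOrders, sortedMask] using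
      isMask_two_pow_length_sub_one (blockOrders Bs)
  | [x] => by simpa [length_blockOrders, sortedMask] using
      isMask_two_pow_length_sub_one (blockOrders Bs)
  | x :: y :: r => ((isMask_beforeMask Bs x y).and (isMask_sortedMask Bs (y :: r))).congr
      fun o _ => by
        have : Trans (fun x y => o.idxOf x < o.idxOf y) (fun x y => o.idxOf x < o.idxOf y)
          fun x y => o.idxOf x < o.idxOf y := ⟨lt_trans⟩
        rw [← List.isChain_iff_pairwise, ← List.isChain_iff_pairwise, List.isChain_cons_cons]

theorem pairwise_idxOf {o : List ℕ} (ho : o.Nodup) :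
    o.Pairwise fun x y => o.idxOf x < o.idxOf y := by
  refine List.pairwise_iff_getElem.2 fun i j hi hj hij => ?_
  rwa [ho.idxOf_getElem, ho.idxOf_getElem]

theorem pairwise_idxOf_iff {Bs : List (List ℕ)} {o r H : List ℕ} (hnd : Bs.flatten.Nodup)
    (ho : o ∈ blockOrders Bs) (hr : r.Perm (Bs.flatten.filter H.elem)) :
    (r.Pairwise fun x y => o.idxOf x < o.idxOf y) ↔ o.filter H.elem = r := by
  have hperm := perm_flatten_of_mem_blockOrders ho
  have hsorted := (pairwise_idxOf (hperm.nodup_iff.2 hnd)).filter (p := H.elem)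
  refine ⟨fun h => ?_, fun h => h ▸ hsorted⟩
  exact List.Perm.eq_of_pairwise (fun _ _ _ _ h h' => absurd h h'.asymm) hsorted h
    ((hperm.filter _).trans hr.symm)

/-- The mask on `blockOrders Bs` of the orders whose restriction to `H` satisfies `P`. -/
def restrictMask (Bs : List (List ℕ)) (H : List ℕ) (P : List ℕ → Bool) : ℕ :=
  (blockOrders (restrictBlocks Bs H)).foldr
    (fun r m => (bif P r then sortedMask Bs r else 0) ||| m) 0

theorem isMask_restrictMask {Bs : List (List ℕ)} (hnd : Bs.flatten.Nodup) (H : List ℕ)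
    (P : List ℕ → Bool) :
    IsMask (restrictMask Bs H P) (fun o => P (o.filter H.elem)) (blockOrders Bs) := by
  suffices ∀ R : List (List ℕ), (∀ r ∈ R, r.Perm (Bs.flatten.filter H.elem)) →
      IsMask (R.foldr (fun r m => (bif P r then sortedMask Bs r else 0) ||| m) 0)
        (fun o => o.filter H.elem ∈ R ∧ P (o.filter H.elem)) (blockOrders Bs) by
    refine (this _ fun r hr => ?_).congr fun o ho => and_iff_right (filter_mem_blockOrders ho H)
    rw [List.filter_flatten]
    exact perm_flatten_of_mem_blockOrders hr
  intro R hR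
  induction R with
  | nil => simpa using isMask_zero (blockOrders Bs)
  | cons r R ih =>
    have hmask : IsMask (bif P r then sortedMask Bs r else 0)
        (fun o => o.filter H.elem = r ∧ P r) (blockOrders Bs) := by
      cases hP : P r
      · simpa using isMask_zero (blockOrders Bs)
      · exact (isMask_sortedMask Bs r).congr fun o ho => by
          rw [pairwise_idxOf_iff hnd ho (hR r List.mem_cons_self), and_iff_left rfl]
    refine (hmask.or (ih fun r' hr' => hR r' (.tail _ hr'))).congr fun o _ => ?_
    rw [List.mem_cons, or_and_right]
    exact or_congr_left (and_congr_right fun h => by rw [h])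

end BlockOrders

section Pairings

variable {α : Type*}

/-- The consecutive disjoint pairs `(x₀, x₁), (x₂, x₃), …` of a list. -/
def pairUp : List α → List (α × α)
  | x :: y :: t => (x, y) :: pairUp t
  | _ => []

/-- The total length of the intervals between the positions `p x` and `p y` of the pairs `(x, y)`
of `pairUp r`, if `r` has even length and is sorted by position. -/
def span (p : α → ℤ) (r : List α) : ℤ := -(r.map p).alternatingSum

@[simp]
theorem span_nil (p : α → ℤ) : span p [] = 0 := by simp [span]

@[simp]
theorem span_cons (p : α → ℤ) (x : α) (r : List α) : span p (x :: r) = -span p r - p x := by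
  simp [span, List.alternatingSum_cons]

theorem span_append_singleton (p : α → ℤ) (r : List α) (x : α) :
    span p (r ++ [x]) = span p r + if Even r.length then -p x else p x := by
  induction r with
  | nil => simp
  | cons y r ih =>
    simp only [List.cons_append, span_cons, ih, List.length_cons, Nat.even_add_one]
    split_ifs <;> omega

/-- `f` is a perfect matching of the elements of `r`, encoded as a fixed-point-free involution. -/
structure IsMatchingOn (f : α → α) (r : List α) : Prop where
  mem : ∀ e ∈ r, f e ∈ r
  invol : ∀ e ∈ r, f (f e) = e
  ne : ∀ e ∈ r, f e ≠ e

theorem IsMatchingOn.perm {f : α → α} {r s : List α} (hf : IsMatchingOn f r) (h : r.Perm s) :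
    IsMatchingOn f s where
  mem e he := h.mem_iff.1 (hf.mem e (h.mem_iff.2 he))
  invol e he := hf.invol e (h.mem_iff.2 he)
  ne e he := hf.ne e (h.mem_iff.2 he)

/-- No position of `r` lies between the positions of a matched pair. -/
def IsConsecutive (p : α → ℤ) (f : α → α) (r : List α) : Prop :=
  ∀ e ∈ r, ∀ e' ∈ r, p e' ∈ Set.uIcc (p e) (p (f e)) → e' = e ∨ e' = f e

theorem IsConsecutive.perm {p : α → ℤ} {f : α → α} {r s : List α} (hf : IsConsecutive p f r)
    (h : r.Perm s) : IsConsecutive p f s :=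
  fun e he e' he' => hf e (h.mem_iff.2 he) e' (h.mem_iff.2 he')

variable [DecidableEq α]

/-- The element paired with `e` in the list `g` of pairs, or `e` itself if there is none. -/
def partner (g : List (α × α)) (e : α) : α :=
  g.foldr (fun q m => bif e == q.1 then q.2 else bif e == q.2 then q.1 else m) e

theorem partner_cons (x y : α) (g : List (α × α)) (e : α) :
    partner ((x, y) :: g) e = if e = x then y else if e = y then x else partner g e := by
  simp [partner, Bool.cond_eq_ite]

theorem isMatchingOn_partner_pairUp : ∀ {r : List α}, r.Nodup → Even r.length →
    IsMatchingOn (partner (pairUp r)) r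
  | [], _, _ => ⟨by simp, by simp, by simp⟩
  | [x], _, h => by simp at h
  | x :: y :: t, hnd, heven => by
    have ih := isMatchingOn_partner_pairUp (r := t) (hnd.of_cons.of_cons)
      (by simpa [Nat.even_add_one] using heven)
    obtain ⟨hmem, hinvol, hne⟩ := ih
    constructor <;> intro e he <;> simp only [pairUp, partner_cons] <;> grind

theorem isConsecutive_partner_pairUp {p : α → ℤ} : ∀ {r : List α},
    (r.Pairwise fun x y => p x < p y) → Even r.length →
    IsConsecutive p (partner (pairUp r)) r
  | [], _, _ => by simp [IsConsecutive]
  | [x], _, h => by simp at h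
  | x :: y :: t, hp, heven => by
    have heven : Even t.length := by simpa [Nat.even_add_one] using heven
    simp only [List.pairwise_cons, List.mem_cons] at hp
    have ih := isConsecutive_partner_pairUp hp.2.2 heven
    have hmem := (isMatchingOn_partner_pairUp (hp.2.2.imp fun h => ne_of_apply_ne p h.ne) heven).mem
    intro e he e' he'
    simp only [pairUp, partner_cons, List.mem_cons, Set.mem_uIcc] at *
    rcases he with rfl | rfl | he
    · grind
    · grind
    · have hex : e ≠ x := fun h => (hp.1 e (.inr he)).ne (h ▸ rfl)
      have hey : e ≠ y := fun h => (hp.2.1 e he).ne (h ▸ rfl)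
      rw [if_neg hex, if_neg hey]
      have hfe := hp.2.1 _ (hmem e he)
      rcases he' with rfl | rfl | he'
      · grind
      · grind
      · exact fun h => ih e he e' he' (Set.mem_uIcc.2 h)

theorem sum_abs_partner_pairUp {p : α → ℤ} : ∀ {r : List α},
    (r.Pairwise fun x y => p x < p y) → Even r.length →
    (r.map fun e => |p e - p (partner (pairUp r) e)|).sum = 2 * span p r
  | [], _, _ => by simp
  | [x], _, h => by simp at h
  | x :: y :: t, hp, heven => by
    have ih := sum_abs_partner_pairUp hp.of_cons.of_cons (by simpa [Nat.even_add_one] using heven)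
    have hxy : p x < p y := (List.pairwise_cons.1 hp).1 y (by simp)
    have hnd : (x :: y :: t).Nodup := hp.imp fun h => ne_of_apply_ne p h.ne
    have ht : (t.map fun e => |p e - p (partner (pairUp (x :: y :: t)) e)|) =
        t.map fun e => |p e - p (partner (pairUp t) e)| := by
      refine List.map_congr_left fun e he => ?_
      rw [pairUp, partner_cons, if_neg, if_neg] <;> grind
    rw [List.map_cons, List.map_cons, List.sum_cons, List.sum_cons, ht, ih]
    simp only [pairUp, partner_cons, if_true, if_neg (ne_of_apply_ne p hxy.ne').symm,
      abs_of_neg (sub_neg.2 hxy), span_cons]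
    grind

/-- Does the matching `g` agree with `pairUp r` on the elements of `r`? -/
def agrees (g : List (α × α)) (r : List α) : Bool :=
  (pairUp r).all fun q => partner g q.1 == q.2 && partner g q.2 == q.1

theorem partner_eq_of_agrees {g : List (α × α)} : ∀ {r : List α}, agrees g r → Even r.length →
    ∀ e ∈ r, partner g e = partner (pairUp r) e
  | [], _, _ => by simp
  | [x], _, h => by simp at h
  | x :: y :: t, h, heven => by
    simp only [agrees, pairUp, List.all_cons, Bool.and_eq_true, beq_iff_eq] at h
    have ih := partner_eq_of_agrees (r := t) h.2 (by simpa [Nat.even_add_one] using heven)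
    intro e he
    rw [pairUp, partner_cons]
    grind

end Pairings

section AlternatingOrbits

variable {α : Type*} {f g : α → α} {r : List α} {h : α}

theorem nodup_iterate_minimalPeriod (φ : α → α) (x : α) :
    (List.iterate φ x (Function.minimalPeriod φ x)).Nodup := by
  refine List.nodup_iff_injective_getElem.2 fun i j hij => Fin.ext ?_
  simp only [List.getElem_iterate] at hij
  exact Function.iterate_injOn_Iio_minimalPeriod (by simpa using i.2) (by simpa using j.2) hij

theorem IsMatchingOn.iterate_comp_mem (hf : IsMatchingOn f r) (hg : IsMatchingOn g r) (hh : h ∈ r)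
    (k : ℕ) : (g ∘ f)^[k] h ∈ r := by
  induction k with
  | zero => exact hh
  | succ k ih => exact Function.iterate_succ_apply' (g ∘ f) k h ▸ hg.mem _ (hf.mem _ ih)

/-- Otherwise undoing one step at both ends of the alternating walk from `h` to `f h` would
eventually lead to a fixed point of `f` or of `g`. -/
theorem IsMatchingOn.iterate_comp_ne (hf : IsMatchingOn f r) (hg : IsMatchingOn g r) :
    ∀ (k : ℕ) {h : α}, h ∈ r → (g ∘ f)^[k] h ≠ f h
  | 0, h, hh, heq => hf.ne h hh heq.symm
  | 1, h, hh, heq => hg.ne _ (hf.mem h hh) heq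
  | k + 2, h, hh, heq => by
    have hmem := hf.iterate_comp_mem hg (hg.mem _ (hf.mem h hh)) k
    refine hf.iterate_comp_ne hg k (hg.mem _ (hf.mem h hh)) ?_
    rw [Function.iterate_succ_apply', Function.iterate_succ_apply] at heq
    simp only [Function.comp_apply] at heq hmem ⊢
    rw [← hf.invol _ hmem, ← hg.invol _ (hf.mem _ hmem), heq]

theorem IsMatchingOn.perm_of_minimalPeriod (hf : IsMatchingOn f r) (hg : IsMatchingOn g r)
    (hh : h ∈ r) (hlen : r.length = 2 * Function.minimalPeriod (g ∘ f) h) :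
    let E := List.iterate (g ∘ f) h (Function.minimalPeriod (g ∘ f) h)
    (E.map f ++ E).Perm r := by
  intro E
  have hmem (e : α) (he : e ∈ E) : e ∈ r := by
    obtain ⟨k, -, rfl⟩ := List.mem_iterate.1 he
    exact hf.iterate_comp_mem hg hh k
  have hinj : Set.InjOn f {e | e ∈ E} := fun a ha b hb hab => by
    rw [← hf.invol a (hmem a ha), hab, hf.invol b (hmem b hb)]
  refine (List.subperm_of_subset ?_ ?_).perm_of_length_le ?_
  · have hndE : E.Nodup := nodup_iterate_minimalPeriod _ _
    refine (List.Nodup.map_on (fun a ha b hb => hinj ha hb) hndE).append hndE fun _ ha hb => ?_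
    obtain ⟨a, haE, rfl⟩ := List.mem_map.1 ha
    obtain ⟨i, hi, rfl⟩ := List.mem_iterate.1 haE
    obtain ⟨j, -, hj⟩ := List.mem_iterate.1 hb
    refine hf.iterate_comp_ne hg (j + Function.minimalPeriod (g ∘ f) h - i) (hmem _ haE) ?_
    rw [← Function.iterate_add_apply, Nat.sub_add_cancel (by lia),
      Function.iterate_add_minimalPeriod_eq, hj]
  · intro e he
    rcases List.mem_append.1 he with he | he
    · obtain ⟨a, ha, rfl⟩ := List.mem_map.1 he
      exact hf.mem a (hmem a ha)
    · exact hmem e he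
  · simp [E, hlen, two_mul]

variable [DecidableEq α]

/-- Suppose that `r = h :: t` lists positions on a cycle in order.  Does the alternating walk that
starts at `h` and follows in turn the cyclic intervals of `r` that are *not* spanned by the pairs
of `pairUp r`, and the matching `g`, close up exactly after visiting all of `r`? -/
def closesUp (g : α → α) : List α → Bool
  | [] => false
  | h :: t =>
    let f := partner (pairUp (t ++ [h]))
    (List.iterate (g ∘ f) (g (f h)) ((t.length + 1) / 2)).idxOf h * 2 + 1 == t.length

theorem minimalPeriod_of_closesUp {t : List α} (hclose : closesUp g (h :: t)) :
    (h :: t).length =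
      2 * Function.minimalPeriod (g ∘ partner (pairUp (t ++ [h]))) h := by
  set φ := g ∘ partner (pairUp (t ++ [h]))
  set L := List.iterate φ (φ h) ((t.length + 1) / 2) with hL
  have hidx : L.idxOf h * 2 + 1 = t.length := beq_iff_eq.1 hclose
  have hmem : h ∈ L := List.idxOf_lt_length_iff.1 (by rw [hL, List.length_iterate]; lia)
  have htake {k : ℕ} (hk : k ≤ (t.length + 1) / 2) :
      L.idxOf h < k ↔ ∃ i < k, h = φ^[i + 1] h := by
    rw [← List.mem_take_iff_idxOf_lt hmem, hL, ← Nat.add_sub_cancel' hk, List.take_iterate,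
      List.mem_iterate, min_eq_left (Nat.le_add_right _ _)]
    rfl
  obtain ⟨i, hi, hper⟩ := (htake (k := L.idxOf h + 1) (by lia)).1 (Nat.lt_succ_self _)
  have hle := Function.IsPeriodicPt.minimalPeriod_le i.succ_pos hper.symm
  have hpos := Function.IsPeriodicPt.minimalPeriod_pos i.succ_pos hper.symm
  have hlt : L.idxOf h < Function.minimalPeriod φ h :=
    (htake (by lia)).2 ⟨_, Nat.sub_one_lt hpos.ne', by
      rw [Nat.sub_add_cancel hpos, Function.iterate_minimalPeriod]⟩
  rw [List.length_cons]
  lia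

end AlternatingOrbits

section ExchangeInequalities

variable {α κ : Type*} [DecidableEq α] {p₁ p₂ : α → ℤ} {seg : α → κ}

theorem even_length_of_closesUp {g : α → α} : ∀ {r : List α}, closesUp g r → Even r.length
  | _ :: _, h => ⟨_, by rw [minimalPeriod_of_closesUp h, two_mul]⟩

/-- The inequality between the lengths of arcs of two longest cycles that is forced by each
exchange of arcs whose result is a single cycle.  The elements of `s` stand for paths joining the
two cycles, `pᵢ e` is the position of the end of `e` on the `i`-th cycle, and only those arcs of
the second cycle are used that lie within a segment `seg`. -/
def ExchangeInequality (seg : α → κ) (p₁ p₂ : α → ℤ) (s : List α) : Prop :=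
  ∀ ⦃r₁ r₂ : List α⦄, r₁.Perm r₂ → r₁ ⊆ s → (r₁.Pairwise fun e f => p₁ e < p₁ f) →
    (r₂.Pairwise fun e f => p₂ e < p₂ f) → (∀ q ∈ pairUp r₂, seg q.1 = seg q.2) →
    closesUp (partner (pairUp r₂)) r₁ → span p₂ r₂ < span p₁ r₁

theorem closesUp_congr {g g' : α → α} {r : List α} (hr : r.Nodup) (heven : Even r.length)
    (hg : ∀ e ∈ r, g e ∈ r) (hgg' : ∀ e ∈ r, g e = g' e) : closesUp g r = closesUp g' r := by
  cases r with
  | nil => rfl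
  | cons h t =>
    have hf := (isMatchingOn_partner_pairUp
      ((List.perm_append_singleton h t).nodup_iff.2 hr) (by simpa using heven)).perm
      (List.perm_append_singleton h t)
    have hiter (m : ℕ) : ∀ e ∈ h :: t, List.iterate (g ∘ partner (pairUp (t ++ [h]))) e m =
        List.iterate (g' ∘ partner (pairUp (t ++ [h]))) e m := by
      induction m with
      | zero => exact fun _ _ => rfl
      | succ m ih =>
        intro e he
        have hfe := hf.mem e he
        simp only [List.iterate, Function.comp_apply, ← hgg' _ hfe]
        rw [ih _ (hg _ hfe)]
    have hfh := hf.mem h List.mem_cons_self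
    simp only [closesUp, ← hgg' _ hfh, hiter _ _ (hg _ hfh)]

theorem apply_partner_eq {g : List (α × α)} (hg : ∀ q ∈ g, seg q.1 = seg q.2) (e : α) :
    seg (partner g e) = seg e := by
  induction g with
  | nil => rfl
  | cons q g ih =>
    have hq := hg q List.mem_cons_self
    have ih := ih fun q hq => hg q (.tail _ hq)
    rw [partner_cons]
    split_ifs <;> simp_all

theorem ExchangeInequality.span_lt {s r₁ r₂ : List α} (hE : ExchangeInequality seg p₁ p₂ s)
    (hr : r₁.Perm r₂) (hs : r₁ ⊆ s) (h₁ : r₁.Pairwise fun e f => p₁ e < p₁ f)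
    (h₂ : r₂.Pairwise fun e f => p₂ e < p₂ f) {g : List (α × α)}
    (hseg : ∀ q ∈ g, seg q.1 = seg q.2) (hg : agrees g r₂) (hclose : closesUp (partner g) r₁) :
    span p₂ r₂ < span p₁ r₁ := by
  have heven := even_length_of_closesUp hclose
  have hnd₁ := h₁.imp fun h => ne_of_apply_ne p₁ h.ne
  have hmatch := (isMatchingOn_partner_pairUp (hr.nodup_iff.1 hnd₁) (hr.length_eq ▸ heven)).perm
    hr.symm
  have hg' (e : α) (he : e ∈ r₁) : partner g e = partner (pairUp r₂) e :=
    partner_eq_of_agrees hg (hr.length_eq ▸ heven) e (hr.mem_iff.1 he)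
  refine hE hr hs h₁ h₂ (fun q hq => ?_) ?_
  · simp only [agrees, List.all_eq_true, Bool.and_eq_true, beq_iff_eq] at hg
    rw [← (hg q hq).1, apply_partner_eq hseg]
  rwa [← closesUp_congr hnd₁ heven (fun e he => hg' e he ▸ hmatch.mem e he) hg']

end ExchangeInequalities

section Certificates

variable {κ : Type*} [DecidableEq κ] {seg seg₁ seg₂ : ℕ → κ} {p p₁ p₂ : ℕ → ℤ}

/-- Does `seg` take the same value on both elements of every pair of `g`? -/
def joinsWithin (seg : ℕ → κ) (g : List (ℕ × ℕ)) : Bool :=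
  g.all fun q => seg q.1 == seg q.2

theorem joinsWithin_iff {g : List (ℕ × ℕ)} :
    joinsWithin seg g ↔ ∀ q ∈ g, seg q.1 = seg q.2 := by
  simp [joinsWithin]

/-- The number of members of `D` that have an odd number of elements in `l`. -/
def crossings (D : List (List ℕ)) (l : List ℕ) : ℕ :=
  D.countP fun H => l.countP H.elem % 2 == 1

/-- The sum of the spans of the members of `D`, each listed in the order of `l`. -/
def totalSpan (p : ℕ → ℤ) (D : List (List ℕ)) (l : List ℕ) : ℤ :=
  (D.map fun H => span p (l.filter H.elem)).sum

theorem totalSpan_append_singleton (D : List (List ℕ)) (l : List ℕ) (x : ℕ) :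
    totalSpan p D (l ++ [x]) + p x * crossings D (l ++ [x]) =
      totalSpan p D l + p x * crossings D l := by
  induction D with
  | nil => rfl
  | cons H D ih =>
    have hH : span p ((l ++ [x]).filter H.elem) +
          p x * (if (l ++ [x]).countP H.elem % 2 = 1 then 1 else 0) =
        span p (l.filter H.elem) + p x * (if l.countP H.elem % 2 = 1 then 1 else 0) := by
      rw [List.filter_append, List.countP_append]
      by_cases hx : x ∈ H
      · have hx' : H.elem x = true := List.elem_iff.2 hx
        simp only [List.filter_singleton, hx', cond_true, span_append_singleton,
          ← List.countP_eq_length_filter, List.countP_singleton, if_true, Nat.even_iff]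
        grind
      · simp [hx]
    simp only [totalSpan, crossings, List.map_cons, List.sum_cons, List.countP_cons, beq_iff_eq,
      Nat.cast_add, Nat.cast_ite, Nat.cast_one, Nat.cast_zero] at ih ⊢
    linear_combination ih + hH

/-- Abel summation: the total span is the integral over the position of the number of crossings. -/
theorem totalSpan_add_le_of_crossings_le {D₁ D₂ : List (List ℕ)} {o : List ℕ} {M : ℤ}
    (ho : o.Pairwise fun e f => p e < p f) (hM : ∀ e ∈ o, p e ≤ M)
    (h : ∀ l ∈ o.inits, crossings D₁ l ≤ crossings D₂ l) :
    totalSpan p D₁ o + M * crossings D₁ o ≤ totalSpan p D₂ o + M * crossings D₂ o := by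
  induction o using List.reverseRecOn generalizing M with
  | nil =>
    have hD (D : List (List ℕ)) : totalSpan p D [] = 0 := by simp [totalSpan]
    simp [hD, crossings]
  | append_singleton o x ih =>
    rw [List.pairwise_append] at ho
    have ho' := ih ho.1 (fun e he => (ho.2.2 e he x (by simp)).le) fun l hl =>
      h l (by simpa using Or.inl ((List.mem_inits _ _).1 hl))
    have hx : 0 ≤ M - p x := sub_nonneg.2 (hM x (by simp))
    have hcross : (crossings D₁ (o ++ [x]) : ℤ) ≤ crossings D₂ (o ++ [x]) :=
      mod_cast h _ (by simp)
    have h₁ := totalSpan_append_singleton (p := p) D₁ o x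
    have h₂ := totalSpan_append_singleton (p := p) D₂ o x
    linarith [mul_le_mul_of_nonneg_left hcross hx]

theorem totalSpan_le_of_crossings_le {D₁ D₂ : List (List ℕ)} {o : List ℕ}
    (ho : o.Pairwise fun e f => p e < p f)
    (hD₁ : ∀ H ∈ D₁, Even (o.filter H.elem).length) (hD₂ : ∀ H ∈ D₂, Even (o.filter H.elem).length)
    (h : ∀ l ∈ o.inits, crossings D₁ l ≤ crossings D₂ l) :
    totalSpan p D₁ o ≤ totalSpan p D₂ o := by
  have hzero (D : List (List ℕ)) (hD : ∀ H ∈ D, Even (o.filter H.elem).length) :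
      crossings D o = 0 := List.countP_eq_zero.2 fun H hH => by
    simpa [List.countP_eq_length_filter, Nat.even_iff] using hD H hH
  obtain ⟨M, hM⟩ := (o.map p).toFinset.bddAbove
  have := totalSpan_add_le_of_crossings_le ho (M := M)
    (fun e he => hM (by simpa using ⟨e, he, rfl⟩)) h
  simpa [hzero D₁ hD₁, hzero D₂ hD₂] using this

/-- An order on each of two cycles, together with exchanges in both directions (`gains₁` shortens
the spans on the second cycle, `gains₂` those on the first one) whose inequalities contradict each
other when added up. -/
structure FarkasCertificate where
  order₁ : List ℕ
  order₂ : List ℕ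
  gains₁ : List (List ℕ)
  gains₂ : List (List ℕ)

namespace FarkasCertificate

/-- The conditions on a certificate that can be checked by evaluation. -/
def isValid (seg₁ seg₂ : ℕ → κ) (c : FarkasCertificate) : Bool :=
  (c.gains₁ ++ c.gains₂) != [] &&
  (c.gains₁.all fun H => joinsWithin seg₂ (pairUp (c.order₂.filter H.elem)) &&
    closesUp (partner (pairUp (c.order₂.filter H.elem))) (c.order₁.filter H.elem)) &&
  (c.gains₂.all fun H => joinsWithin seg₁ (pairUp (c.order₁.filter H.elem)) &&
    closesUp (partner (pairUp (c.order₁.filter H.elem))) (c.order₂.filter H.elem)) &&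
  (c.order₁.inits.all fun l => (crossings c.gains₁ l).ble (crossings c.gains₂ l)) &&
  c.order₂.inits.all fun l => (crossings c.gains₂ l).ble (crossings c.gains₁ l)

theorem totalSpan_le {s o₁ o₂ : List ℕ} {D : List (List ℕ)}
    (hE : ExchangeInequality seg p₁ p₂ s) (hs : o₁ ⊆ s) (ho : o₁.Perm o₂)
    (h₁ : o₁.Pairwise fun e f => p₁ e < p₁ f) (h₂ : o₂.Pairwise fun e f => p₂ e < p₂ f)
    (hD : ∀ H ∈ D, joinsWithin seg (pairUp (o₂.filter H.elem)) ∧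
      closesUp (partner (pairUp (o₂.filter H.elem))) (o₁.filter H.elem)) :
    totalSpan p₂ D o₂ + D.length ≤ totalSpan p₁ D o₁ := by
  induction D with
  | nil => simp [totalSpan]
  | cons H D ih =>
    have hH := hE (ho.filter H.elem) (List.Subset.trans (List.filter_subset_self _) hs)
      (h₁.filter _) (h₂.filter _) (joinsWithin_iff.1 (hD H List.mem_cons_self).1)
      (hD H List.mem_cons_self).2
    have := ih fun H hH => hD H (.tail _ hH)
    simp only [totalSpan, List.map_cons, List.sum_cons, List.length_cons, Nat.cast_succ] at this ⊢
    lia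

theorem false_of_isValid {c : FarkasCertificate} (hc : c.isValid seg₁ seg₂)
    (ho : c.order₁.Perm c.order₂)
    (h₁ : c.order₁.Pairwise fun e f => p₁ e < p₁ f) (h₂ : c.order₂.Pairwise fun e f => p₂ e < p₂ f)
    (hE₁ : ExchangeInequality seg₂ p₁ p₂ c.order₁)
    (hE₂ : ExchangeInequality seg₁ p₂ p₁ c.order₁) : False := by
  simp only [isValid, Bool.and_eq_true, List.all_eq_true, bne_iff_ne, Nat.ble_eq] at hc
  obtain ⟨⟨⟨⟨hne, hD₁⟩, hD₂⟩, hcross₁⟩, hcross₂⟩ := hc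
  have hlen : 0 < (c.gains₁ ++ c.gains₂).length := List.length_pos_of_ne_nil hne
  rw [List.length_append] at hlen
  have heven {o o' : List ℕ} (ho : o.Perm o') {D : List (List ℕ)} {g : List ℕ → ℕ → ℕ}
      {Q : List ℕ → Prop} (hD : ∀ H ∈ D, Q H ∧ closesUp (g H) (o.filter H.elem))
      (H : List ℕ) (hH : H ∈ D) :
      Even (o.filter H.elem).length ∧ Even (o'.filter H.elem).length := by
    have := even_length_of_closesUp (hD H hH).2
    exact ⟨this, (ho.filter H.elem).length_eq ▸ this⟩
  have hgain₁ := totalSpan_le hE₁ (List.Subset.refl _) ho h₁ h₂ hD₁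
  have hgain₂ := totalSpan_le hE₂ ho.symm.subset ho.symm h₂ h₁ hD₂
  have hcomp₁ := totalSpan_le_of_crossings_le h₁ (fun H hH => (heven ho hD₁ H hH).1)
    (fun H hH => (heven ho.symm hD₂ H hH).2) hcross₁
  have hcomp₂ := totalSpan_le_of_crossings_le h₂ (fun H hH => (heven ho.symm hD₂ H hH).1)
    (fun H hH => (heven ho hD₁ H hH).2) hcross₂
  lia

end FarkasCertificate

end Certificates

section Search

variable {κ : Type*} [DecidableEq κ] {seg₁ seg₂ : ℕ → κ} {p₁ p₂ : ℕ → ℤ}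

/-- The matching that pairs up the elements of `H` in each block of `Bs`, in the order in which
`H` lists them. -/
def blockMatching (Bs : List (List ℕ)) (H : List ℕ) : List (ℕ × ℕ) :=
  Bs.flatMap fun b => pairUp (H.filter b.elem)

/-- The masks of the arrangements on the two sides for which both exchanges along `H` produce a
single cycle. -/
def exchangeRow (Bs : List (List ℕ)) (Cs : List (List (List ℕ))) (H : List ℕ) : ℕ × ℕ :=
  let g := blockMatching Bs H
  let g' := blockMatching Cs.headI H
  (restrictMask Bs H fun r => agrees g r && closesUp (partner g') r,
    concatMasks (numOrders Bs) (Cs.map fun C =>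
      restrictMask C H fun r => agrees g' r && closesUp (partner g) r))

/-- The masks of the pair of orders excluded by a certificate. -/
def FarkasCertificate.row (Bs : List (List ℕ)) (Cs : List (List (List ℕ)))
    (c : FarkasCertificate) : ℕ × ℕ :=
  (sortedMask Bs c.order₁, concatMasks (numOrders Bs) (Cs.map fun C => sortedMask C c.order₂))

/-- Is every pair consisting of a block order of `Bs` and a block order of a member of `Cs` either
subject to contradictory exchanges along a member of `Hs` or excluded by a certificate? -/
def excludesAll (seg₁ seg₂ : ℕ → κ) (Bs : List (List ℕ)) (Cs : List (List (List ℕ)))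
    (Hs : List (List ℕ)) (certs : List FarkasCertificate) : Bool :=
  decide Bs.flatten.Nodup &&
  (Cs.all fun C => C.flatten.isPerm Bs.flatten && numOrders C == numOrders Bs) &&
  (certs.all fun c =>
    c.isValid seg₁ seg₂ && c.order₁.isPerm Bs.flatten && c.order₂.isPerm Bs.flatten) &&
  (Hs.all fun H =>
    joinsWithin seg₁ (blockMatching Bs H) && joinsWithin seg₂ (blockMatching Cs.headI H)) &&
  covers (2 ^ (Cs.length * numOrders Bs) - 1) (Bs.map fun b => b.length.factorial)
    (certs.map (·.row Bs Cs) ++ Hs.map (exchangeRow Bs Cs)) 0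

theorem false_of_exchangeRow {g g' : List (ℕ × ℕ)} {o₁ o₂ H : List ℕ}
    (hE₁ : ExchangeInequality seg₂ p₁ p₂ o₁) (hE₂ : ExchangeInequality seg₁ p₂ p₁ o₁)
    (hseg : joinsWithin seg₁ g) (hseg' : joinsWithin seg₂ g')
    (ho : o₁.Perm o₂) (h₁ : o₁.Pairwise fun e f => p₁ e < p₁ f)
    (h₂ : o₂.Pairwise fun e f => p₂ e < p₂ f)
    (hg : agrees g (o₁.filter H.elem) && closesUp (partner g') (o₁.filter H.elem))
    (hg' : agrees g' (o₂.filter H.elem) && closesUp (partner g) (o₂.filter H.elem)) : False := by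
  rw [Bool.and_eq_true] at hg hg'
  have hperm := ho.filter H.elem
  have hsub : o₁.filter H.elem ⊆ o₁ := List.filter_subset_self _
  have hlt₁ := hE₁.span_lt hperm hsub (h₁.filter _) (h₂.filter _)
    (joinsWithin_iff.1 hseg') hg'.1 hg.2
  have hlt₂ := hE₂.span_lt hperm.symm (List.Subset.trans hperm.symm.subset hsub)
    (h₂.filter _) (h₁.filter _) (joinsWithin_iff.1 hseg) hg.1 hg'.2
  exact hlt₁.asymm hlt₂

theorem eq_of_pairwise_idxOf_lt {Bs : List (List ℕ)} {o o' : List ℕ} (hnd : Bs.flatten.Nodup)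
    (ho : o ∈ blockOrders Bs) (ho' : o'.Perm Bs.flatten)
    (h : o'.Pairwise fun x y => o.idxOf x < o.idxOf y) : o' = o := by
  have hall (l : List ℕ) (hl : l ⊆ Bs.flatten) : l.filter Bs.flatten.elem = l :=
    List.filter_eq_self.2 fun e he => List.elem_iff.2 (hl he)
  rw [← hall o (perm_flatten_of_mem_blockOrders ho).subset, eq_comm]
  exact (pairwise_idxOf_iff hnd ho (by rwa [hall _ (List.Subset.refl _)])).1 h

theorem isMask_exchangeRow {Bs : List (List ℕ)} {Cs : List (List (List ℕ))}
    (hCs : ∀ C ∈ Cs, C.flatten.Nodup ∧ (blockOrders C).length = numOrders Bs) (H : List ℕ) :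
    IsMask (exchangeRow Bs Cs H).2 (fun o => agrees (blockMatching Cs.headI H) (o.filter H.elem) &&
      closesUp (partner (blockMatching Bs H)) (o.filter H.elem)) (Cs.flatMap blockOrders) :=
  isMask_concatMasks Cs (fun C hC => (hCs C hC).2)
    fun C hC => isMask_restrictMask (hCs C hC).1 H fun r =>
      agrees (blockMatching Cs.headI H) r && closesUp (partner (blockMatching Bs H)) r

theorem FarkasCertificate.isMask_row_snd {Bs : List (List ℕ)} {Cs : List (List (List ℕ))}
    (hCs : ∀ C ∈ Cs, (blockOrders C).length = numOrders Bs) (c : FarkasCertificate) :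
    IsMask (c.row Bs Cs).2 (fun o => c.order₂.Pairwise fun x y => o.idxOf x < o.idxOf y)
      (Cs.flatMap blockOrders) :=
  isMask_concatMasks Cs hCs fun C _ => isMask_sortedMask C c.order₂

theorem exists_testBit_of_covers {Bs C : List (List ℕ)} {Cs : List (List (List ℕ))}
    {rows : List (ℕ × ℕ)} (hCs : ∀ C ∈ Cs, (blockOrders C).length = numOrders Bs)
    (h : covers (2 ^ (Cs.length * numOrders Bs) - 1) (Bs.map fun b => b.length.factorial) rows 0)
    (hC : C ∈ Cs) {o₁ o₂ : List ℕ} (ho₁ : o₁ ∈ blockOrders Bs) (ho₂ : o₂ ∈ blockOrders C) :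
    ∃ q ∈ rows, ∃ i j, (blockOrders Bs)[i]? = some o₁ ∧ (Cs.flatMap blockOrders)[j]? = some o₂ ∧
      q.1.testBit i ∧ q.2.testBit j := by
  obtain ⟨i, hi⟩ := List.mem_iff_getElem?.1 ho₁
  obtain ⟨j, hj⟩ := List.mem_iff_getElem?.1 (List.mem_flatMap.2 ⟨C, hC, ho₂⟩)
  have hi' : i < (Bs.map fun b => b.length.factorial).prod :=
    (List.getElem?_eq_some_iff.1 hi).1.trans_eq (length_blockOrders Bs)
  have hj' : j < Cs.length * numOrders Bs := by
    refine (List.getElem?_eq_some_iff.1 hj).1.trans_eq ?_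
    rw [List.length_flatMap, List.map_congr_left hCs]
    simp
  obtain hz | ⟨q, hq, hqi, hqj⟩ := exists_row_of_covers h hi'
    ((Nat.testBit_two_pow_sub_one _ _).trans (decide_eq_true hj'))
  · simp at hz
  · exact ⟨q, hq, i, j, hi, hj, hqi, hqj⟩

theorem false_of_excludesAll {Bs C : List (List ℕ)} {Cs : List (List (List ℕ))}
    {Hs : List (List ℕ)} {certs : List FarkasCertificate}
    (h : excludesAll seg₁ seg₂ Bs Cs Hs certs) (hC : C ∈ Cs) {o₁ o₂ : List ℕ}
    (ho₁ : o₁ ∈ blockOrders Bs) (ho₂ : o₂ ∈ blockOrders C)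
    (h₁ : o₁.Pairwise fun e f => p₁ e < p₁ f) (h₂ : o₂.Pairwise fun e f => p₂ e < p₂ f)
    (hE₁ : ExchangeInequality seg₂ p₁ p₂ o₁) (hE₂ : ExchangeInequality seg₁ p₂ p₁ o₁) :
    False := by
  simp only [excludesAll, Bool.and_eq_true, decide_eq_true_eq, List.all_eq_true, List.isPerm_iff,
    beq_iff_eq] at h
  obtain ⟨⟨⟨⟨hnd, hCs⟩, hcerts⟩, hHs⟩, hcovers⟩ := h
  have hlen (D : List (List ℕ)) (hD : D ∈ Cs) : (blockOrders D).length = numOrders Bs :=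
    (length_blockOrders D).trans (hCs D hD).2
  have hndCs (D : List (List ℕ)) (hD : D ∈ Cs) : D.flatten.Nodup := (hCs D hD).1.nodup_iff.2 hnd
  have ho : o₁.Perm o₂ := (perm_flatten_of_mem_blockOrders ho₁).trans
    ((perm_flatten_of_mem_blockOrders ho₂).trans (hCs C hC).1).symm
  obtain ⟨q, hq, i, j, hi, hj, hqi, hqj⟩ := exists_testBit_of_covers hlen hcovers hC ho₁ ho₂
  rcases List.mem_append.1 hq with hq | hq
  · obtain ⟨c, hc, rfl⟩ := List.mem_map.1 hq
    obtain ⟨⟨hvalid, hperm₁⟩, hperm₂⟩ := hcerts c hc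
    obtain rfl : c.order₁ = o₁ := eq_of_pairwise_idxOf_lt hnd ho₁ hperm₁
      ((isMask_sortedMask Bs c.order₁).prop_of_testBit hi hqi)
    obtain rfl : c.order₂ = o₂ := eq_of_pairwise_idxOf_lt (hndCs C hC) ho₂
      (hperm₂.trans (hCs C hC).1.symm)
      ((c.isMask_row_snd hlen).prop_of_testBit hj hqj)
    exact FarkasCertificate.false_of_isValid hvalid ho h₁ h₂ hE₁ hE₂
  · obtain ⟨H, hH, rfl⟩ := List.mem_map.1 hq
    exact false_of_exchangeRow hE₁ hE₂ (hHs H hH).1 (hHs H hH).2 ho h₁ h₂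
      ((isMask_restrictMask hnd H fun r => agrees (blockMatching Bs H) r &&
        closesUp (partner (blockMatching Cs.headI H)) r).prop_of_testBit hi hqi)
      ((isMask_exchangeRow (fun D hD => ⟨hndCs D hD, hlen D hD⟩) H).prop_of_testBit hj hqj)

end Search

section SearchData

/-- The edges `4 * i + j` of `K₃,₃`, grouped by the segment `i` of the first cycle. -/
def rowsK33 : List (List ℕ) := [[0, 1, 2], [4, 5, 6], [8, 9, 10]]

/-- The edges `4 * i + j` of `K₃,₃`, grouped by the segment `j` of the second cycle. -/
def columnsK33 : List (List ℕ) := [[0, 4, 8], [1, 5, 9], [2, 6, 10]]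

/-- The cycles of `K₃,₃`, as lists of edges. -/
def cyclesK33 : List (List ℕ) :=
  [[0, 1, 5, 4], [0, 1, 9, 8], [0, 2, 6, 4], [0, 2, 10, 8], [1, 2, 6, 5], [1, 2, 10, 9],
   [4, 5, 9, 8], [4, 6, 10, 8], [5, 6, 10, 9], [0, 1, 9, 10, 6, 4], [0, 1, 5, 6, 10, 8],
   [0, 2, 10, 9, 5, 4], [0, 2, 6, 5, 9, 8], [1, 2, 10, 8, 4, 5], [1, 2, 6, 4, 8, 9]]

/-- Certificates for the orders in which no single cycle of `K₃,₃` yields a contradiction; found by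
linear programming. -/
def certificatesK33 : List FarkasCertificate :=
  [⟨[0, 1, 2, 4, 6, 5, 9, 10, 8], [8, 4, 0, 9, 1, 5, 2, 10, 6],
    [[0, 1, 5, 4], [1, 2, 10, 9]], [[0, 2, 10, 9, 5, 4]]⟩,
   ⟨[0, 1, 2, 4, 6, 5, 10, 8, 9], [0, 8, 4, 5, 9, 1, 10, 6, 2],
    [[0, 1, 9, 8], [1, 2, 10, 8, 4, 5]], [[1, 2, 6, 5], [0, 1, 9, 10, 6, 4]]⟩,
   ⟨[0, 1, 2, 4, 6, 5, 10, 8, 9], [8, 0, 4, 5, 1, 9, 10, 6, 2],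
    [[0, 1, 9, 8], [1, 2, 10, 8, 4, 5]], [[4, 6, 10, 8], [0, 2, 6, 5, 9, 8]]⟩,
   ⟨[0, 1, 2, 5, 4, 6, 8, 10, 9], [0, 4, 8, 9, 1, 5, 10, 6, 2],
    [[4, 6, 10, 8], [0, 2, 10, 9, 5, 4]], [[1, 2, 10, 9], [0, 1, 5, 6, 10, 8]]⟩,
   ⟨[0, 1, 2, 5, 4, 6, 8, 10, 9], [0, 8, 4, 9, 1, 5, 6, 10, 2],
    [[0, 2, 10, 9, 5, 4]], [[0, 1, 5, 4], [1, 2, 10, 9]]⟩,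
   ⟨[0, 1, 2, 5, 4, 6, 10, 9, 8], [8, 4, 0, 5, 9, 1, 10, 2, 6],
    [[0, 2, 6, 4], [4, 5, 9, 8]], [[0, 2, 6, 5, 9, 8]]⟩,
   ⟨[0, 1, 2, 5, 6, 4, 9, 8, 10], [0, 8, 4, 1, 5, 9, 10, 6, 2],
    [[0, 1, 9, 10, 6, 4]], [[0, 1, 9, 8], [4, 6, 10, 8]]⟩,
   ⟨[0, 1, 2, 5, 6, 4, 9, 8, 10], [0, 8, 4, 5, 1, 9, 10, 2, 6],
    [[0, 1, 9, 10, 6, 4]], [[0, 1, 9, 8], [4, 6, 10, 8]]⟩,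
   ⟨[0, 1, 2, 6, 4, 5, 9, 8, 10], [8, 4, 0, 9, 1, 5, 2, 10, 6],
    [[1, 2, 10, 9], [0, 1, 5, 6, 10, 8]], [[4, 6, 10, 8], [0, 2, 10, 9, 5, 4]]⟩,
   ⟨[0, 1, 2, 6, 4, 5, 10, 9, 8], [0, 4, 8, 5, 1, 9, 2, 10, 6],
    [[0, 1, 5, 4], [4, 6, 10, 8]], [[0, 1, 5, 6, 10, 8]]⟩,
   ⟨[0, 1, 2, 6, 5, 4, 8, 10, 9], [8, 0, 4, 1, 5, 9, 2, 10, 6],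
    [[0, 2, 10, 8], [0, 1, 9, 10, 6, 4]], [[0, 1, 5, 4], [0, 2, 6, 5, 9, 8]]⟩,
   ⟨[0, 1, 2, 6, 5, 4, 9, 10, 8], [8, 4, 0, 5, 1, 9, 6, 10, 2],
    [[4, 6, 10, 8], [0, 2, 10, 9, 5, 4]], [[0, 1, 5, 4], [1, 2, 6, 4, 8, 9]]⟩,
   ⟨[0, 2, 1, 4, 5, 6, 9, 8, 10], [4, 0, 8, 1, 5, 9, 10, 2, 6],
    [[0, 2, 10, 8], [1, 2, 6, 4, 8, 9]], [[4, 5, 9, 8], [0, 1, 5, 6, 10, 8]]⟩,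
   ⟨[0, 2, 1, 4, 5, 6, 9, 8, 10], [4, 8, 0, 1, 5, 9, 2, 10, 6],
    [[0, 2, 10, 8], [1, 2, 6, 4, 8, 9]], [[1, 2, 6, 5], [0, 2, 10, 9, 5, 4]]⟩,
   ⟨[0, 2, 1, 4, 5, 6, 10, 9, 8], [0, 4, 8, 5, 9, 1, 6, 2, 10],
    [[0, 2, 6, 4], [1, 2, 10, 9]], [[0, 1, 9, 10, 6, 4]]⟩,
   ⟨[0, 2, 1, 5, 4, 6, 9, 10, 8], [8, 4, 0, 5, 9, 1, 10, 2, 6],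
    [[4, 5, 9, 8], [0, 1, 9, 10, 6, 4]], [[1, 2, 10, 9], [0, 2, 6, 5, 9, 8]]⟩,
   ⟨[0, 2, 1, 5, 4, 6, 10, 8, 9], [0, 4, 8, 5, 9, 1, 6, 2, 10],
    [[0, 2, 6, 4], [1, 2, 10, 9]], [[0, 1, 9, 10, 6, 4]]⟩,
   ⟨[0, 2, 1, 5, 6, 4, 8, 9, 10], [4, 0, 8, 5, 9, 1, 10, 6, 2],
    [[0, 1, 9, 8], [5, 6, 10, 9]], [[0, 1, 5, 6, 10, 8]]⟩,
   ⟨[0, 2, 1, 5, 6, 4, 10, 9, 8], [0, 4, 8, 1, 9, 5, 10, 2, 6],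
    [[4, 5, 9, 8], [0, 1, 9, 10, 6, 4]], [[0, 2, 6, 4], [1, 2, 10, 8, 4, 5]]⟩,
   ⟨[0, 2, 1, 6, 4, 5, 8, 9, 10], [4, 8, 0, 1, 9, 5, 6, 2, 10],
    [[0, 1, 9, 10, 6, 4]], [[0, 2, 6, 4], [1, 2, 10, 9]]⟩,
   ⟨[0, 2, 1, 6, 4, 5, 8, 9, 10], [8, 4, 0, 1, 5, 9, 6, 2, 10],
    [[0, 1, 9, 10, 6, 4]], [[0, 2, 6, 4], [1, 2, 10, 9]]⟩,
   ⟨[0, 2, 1, 6, 4, 5, 9, 10, 8], [0, 4, 8, 5, 1, 9, 2, 10, 6],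
    [[0, 1, 5, 4], [4, 6, 10, 8]], [[0, 1, 5, 6, 10, 8]]⟩,
   ⟨[0, 2, 1, 6, 5, 4, 10, 8, 9], [4, 8, 0, 1, 5, 9, 10, 6, 2],
    [[0, 2, 10, 9, 5, 4]], [[0, 2, 10, 8], [4, 5, 9, 8]]⟩,
   ⟨[0, 2, 1, 6, 5, 4, 10, 8, 9], [4, 8, 0, 5, 1, 9, 10, 2, 6],
    [[1, 2, 6, 5], [0, 2, 10, 9, 5, 4]], [[4, 5, 9, 8], [0, 1, 5, 6, 10, 8]]⟩,
   ⟨[1, 0, 2, 4, 5, 6, 9, 10, 8], [4, 0, 8, 5, 9, 1, 2, 10, 6],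
    [[5, 6, 10, 9], [1, 2, 10, 8, 4, 5]], [[0, 1, 5, 6, 10, 8], [0, 2, 10, 9, 5, 4]]⟩,
   ⟨[1, 0, 2, 4, 5, 6, 9, 10, 8], [4, 0, 8, 9, 5, 1, 2, 6, 10],
    [[5, 6, 10, 9], [1, 2, 10, 8, 4, 5]], [[0, 2, 10, 8], [0, 1, 9, 10, 6, 4]]⟩,
   ⟨[1, 0, 2, 4, 5, 6, 10, 8, 9], [0, 8, 4, 1, 5, 9, 6, 2, 10],
    [[1, 2, 6, 5], [0, 2, 10, 9, 5, 4]], [[0, 2, 10, 8], [1, 2, 6, 4, 8, 9]]⟩,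
   ⟨[1, 0, 2, 4, 6, 5, 8, 9, 10], [8, 0, 4, 5, 9, 1, 6, 2, 10],
    [[0, 1, 5, 6, 10, 8]], [[0, 1, 9, 8], [5, 6, 10, 9]]⟩,
   ⟨[1, 0, 2, 4, 6, 5, 8, 9, 10], [8, 4, 0, 5, 9, 1, 2, 6, 10],
    [[0, 1, 5, 6, 10, 8]], [[0, 1, 9, 8], [5, 6, 10, 9]]⟩,
   ⟨[1, 0, 2, 5, 6, 4, 8, 10, 9], [4, 0, 8, 1, 5, 9, 6, 10, 2],
    [[0, 1, 5, 6, 10, 8], [0, 2, 10, 9, 5, 4]], [[5, 6, 10, 9], [1, 2, 10, 8, 4, 5]]⟩,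
   ⟨[1, 0, 2, 5, 6, 4, 10, 9, 8], [0, 8, 4, 5, 9, 1, 2, 6, 10],
    [[0, 1, 9, 8], [0, 2, 10, 9, 5, 4]], [[0, 2, 6, 4], [0, 1, 5, 6, 10, 8]]⟩,
   ⟨[1, 0, 2, 5, 6, 4, 10, 9, 8], [8, 0, 4, 5, 1, 9, 2, 6, 10],
    [[0, 2, 10, 9, 5, 4]], [[0, 2, 6, 4], [5, 6, 10, 9]]⟩,
   ⟨[1, 0, 2, 6, 4, 5, 8, 10, 9], [8, 0, 4, 1, 5, 9, 2, 10, 6],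
    [[0, 1, 5, 6, 10, 8], [0, 2, 10, 9, 5, 4]], [[0, 1, 5, 4], [0, 2, 6, 5, 9, 8]]⟩,
   ⟨[1, 0, 2, 6, 4, 5, 9, 10, 8], [8, 4, 0, 5, 1, 9, 6, 10, 2],
    [[1, 2, 10, 9], [0, 1, 5, 6, 10, 8]], [[0, 1, 5, 4], [1, 2, 6, 4, 8, 9]]⟩,
   ⟨[1, 0, 2, 6, 5, 4, 8, 9, 10], [4, 0, 8, 1, 5, 9, 6, 10, 2],
    [[0, 2, 10, 8], [0, 1, 9, 10, 6, 4]], [[5, 6, 10, 9], [1, 2, 10, 8, 4, 5]]⟩,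
   ⟨[1, 0, 2, 6, 5, 4, 10, 8, 9], [8, 0, 4, 9, 5, 1, 6, 10, 2],
    [[0, 1, 5, 4], [5, 6, 10, 9]], [[0, 1, 9, 10, 6, 4]]⟩,
   ⟨[1, 2, 0, 4, 5, 6, 8, 10, 9], [0, 8, 4, 1, 5, 9, 6, 2, 10],
    [[4, 5, 9, 8], [0, 1, 5, 6, 10, 8]], [[0, 2, 10, 8], [1, 2, 6, 4, 8, 9]]⟩,
   ⟨[1, 2, 0, 4, 5, 6, 10, 9, 8], [0, 8, 4, 9, 5, 1, 10, 2, 6],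
    [[0, 2, 10, 8], [1, 2, 6, 5]], [[0, 1, 5, 6, 10, 8]]⟩,
   ⟨[1, 2, 0, 4, 6, 5, 9, 8, 10], [0, 8, 4, 9, 1, 5, 2, 6, 10],
    [[0, 1, 9, 8], [4, 6, 10, 8]], [[0, 1, 9, 10, 6, 4]]⟩,
   ⟨[1, 2, 0, 4, 6, 5, 10, 8, 9], [4, 8, 0, 9, 5, 1, 6, 2, 10],
    [[4, 5, 9, 8], [0, 1, 5, 6, 10, 8]], [[1, 2, 6, 5], [0, 2, 10, 9, 5, 4]]⟩,
   ⟨[1, 2, 0, 5, 4, 6, 8, 9, 10], [8, 4, 0, 1, 9, 5, 6, 10, 2],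
    [[0, 2, 6, 5, 9, 8]], [[0, 2, 6, 4], [4, 5, 9, 8]]⟩,
   ⟨[1, 2, 0, 5, 4, 6, 8, 9, 10], [8, 4, 0, 9, 1, 5, 6, 2, 10],
    [[1, 2, 10, 9], [0, 2, 6, 5, 9, 8]], [[4, 5, 9, 8], [0, 1, 9, 10, 6, 4]]⟩,
   ⟨[1, 2, 0, 5, 4, 6, 10, 8, 9], [0, 8, 4, 9, 5, 1, 10, 2, 6],
    [[0, 2, 10, 8], [1, 2, 6, 5]], [[0, 1, 5, 6, 10, 8]]⟩,
   ⟨[1, 2, 0, 6, 4, 5, 10, 9, 8], [8, 0, 4, 1, 9, 5, 6, 2, 10],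
    [[0, 2, 6, 4], [1, 2, 10, 8, 4, 5]], [[4, 5, 9, 8], [0, 1, 9, 10, 6, 4]]⟩,
   ⟨[1, 2, 0, 6, 4, 5, 10, 9, 8], [8, 4, 0, 1, 9, 5, 2, 6, 10],
    [[0, 2, 6, 4], [1, 2, 10, 8, 4, 5]], [[1, 2, 10, 9], [0, 2, 6, 5, 9, 8]]⟩,
   ⟨[1, 2, 0, 6, 5, 4, 8, 10, 9], [8, 0, 4, 9, 5, 1, 6, 10, 2],
    [[0, 1, 5, 4], [5, 6, 10, 9]], [[0, 1, 9, 10, 6, 4]]⟩,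
   ⟨[1, 2, 0, 6, 5, 4, 9, 8, 10], [4, 8, 0, 1, 9, 5, 10, 2, 6],
    [[0, 1, 5, 6, 10, 8]], [[0, 2, 10, 8], [1, 2, 6, 5]]⟩,
   ⟨[1, 2, 0, 6, 5, 4, 9, 8, 10], [8, 4, 0, 1, 5, 9, 10, 2, 6],
    [[0, 1, 5, 6, 10, 8]], [[0, 2, 10, 8], [1, 2, 6, 5]]⟩,
   ⟨[2, 0, 1, 4, 5, 6, 8, 10, 9], [0, 4, 8, 9, 5, 1, 2, 10, 6],
    [[0, 1, 5, 4], [0, 2, 6, 5, 9, 8]], [[0, 2, 10, 8], [0, 1, 9, 10, 6, 4]]⟩,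
   ⟨[2, 0, 1, 4, 5, 6, 8, 10, 9], [4, 0, 8, 9, 1, 5, 2, 10, 6],
    [[0, 1, 5, 4], [0, 2, 6, 5, 9, 8]], [[0, 1, 5, 6, 10, 8], [0, 2, 10, 9, 5, 4]]⟩,
   ⟨[2, 0, 1, 4, 6, 5, 9, 8, 10], [4, 8, 0, 9, 1, 5, 10, 6, 2],
    [[1, 2, 6, 5], [0, 1, 9, 10, 6, 4]], [[0, 1, 9, 8], [1, 2, 10, 8, 4, 5]]⟩,
   ⟨[2, 0, 1, 4, 6, 5, 10, 9, 8], [8, 0, 4, 5, 9, 1, 2, 10, 6],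
    [[5, 6, 10, 9], [1, 2, 6, 4, 8, 9]], [[0, 2, 6, 4], [0, 1, 5, 6, 10, 8]]⟩,
   ⟨[2, 0, 1, 4, 6, 5, 10, 9, 8], [8, 0, 4, 9, 5, 1, 2, 6, 10],
    [[5, 6, 10, 9], [1, 2, 6, 4, 8, 9]], [[0, 1, 9, 8], [0, 2, 10, 9, 5, 4]]⟩,
   ⟨[2, 0, 1, 5, 4, 6, 8, 9, 10], [4, 0, 8, 5, 9, 1, 10, 6, 2],
    [[0, 1, 9, 8], [5, 6, 10, 9]], [[0, 1, 5, 6, 10, 8]]⟩,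
   ⟨[2, 0, 1, 5, 4, 6, 10, 9, 8], [0, 4, 8, 1, 9, 5, 10, 2, 6],
    [[1, 2, 10, 9], [0, 2, 6, 5, 9, 8]], [[0, 2, 6, 4], [1, 2, 10, 8, 4, 5]]⟩,
   ⟨[2, 0, 1, 5, 6, 4, 8, 10, 9], [8, 0, 4, 1, 9, 5, 10, 6, 2],
    [[0, 1, 9, 8], [0, 2, 10, 9, 5, 4]], [[5, 6, 10, 9], [1, 2, 6, 4, 8, 9]]⟩,
   ⟨[2, 0, 1, 5, 6, 4, 9, 8, 10], [4, 0, 8, 1, 9, 5, 2, 6, 10],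
    [[0, 2, 6, 4], [5, 6, 10, 9]], [[0, 2, 10, 9, 5, 4]]⟩,
   ⟨[2, 0, 1, 6, 5, 4, 8, 9, 10], [8, 0, 4, 1, 9, 5, 10, 6, 2],
    [[0, 2, 6, 4], [0, 1, 5, 6, 10, 8]], [[5, 6, 10, 9], [1, 2, 6, 4, 8, 9]]⟩,
   ⟨[2, 0, 1, 6, 5, 4, 9, 10, 8], [4, 0, 8, 9, 5, 1, 10, 2, 6],
    [[0, 1, 9, 10, 6, 4]], [[0, 1, 5, 4], [5, 6, 10, 9]]⟩,
   ⟨[2, 0, 1, 6, 5, 4, 9, 10, 8], [4, 8, 0, 9, 5, 1, 2, 10, 6],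
    [[0, 1, 9, 10, 6, 4]], [[0, 1, 5, 4], [5, 6, 10, 9]]⟩,
   ⟨[2, 1, 0, 4, 5, 6, 9, 8, 10], [0, 8, 4, 9, 1, 5, 2, 6, 10],
    [[0, 1, 9, 8], [4, 6, 10, 8]], [[0, 1, 9, 10, 6, 4]]⟩,
   ⟨[2, 1, 0, 4, 5, 6, 10, 8, 9], [4, 8, 0, 9, 5, 1, 6, 2, 10],
    [[0, 2, 10, 8], [4, 5, 9, 8]], [[0, 2, 10, 9, 5, 4]]⟩,
   ⟨[2, 1, 0, 4, 6, 5, 8, 9, 10], [4, 8, 0, 9, 1, 5, 10, 6, 2],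
    [[4, 6, 10, 8], [0, 2, 6, 5, 9, 8]], [[0, 1, 9, 8], [1, 2, 10, 8, 4, 5]]⟩,
   ⟨[2, 1, 0, 4, 6, 5, 9, 10, 8], [4, 8, 0, 5, 1, 9, 2, 6, 10],
    [[0, 1, 9, 8], [1, 2, 6, 5]], [[0, 2, 6, 5, 9, 8]]⟩,
   ⟨[2, 1, 0, 5, 4, 6, 9, 10, 8], [0, 4, 8, 9, 5, 1, 6, 10, 2],
    [[0, 1, 5, 4], [1, 2, 6, 4, 8, 9]], [[1, 2, 10, 9], [0, 1, 5, 6, 10, 8]]⟩,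
   ⟨[2, 1, 0, 5, 4, 6, 9, 10, 8], [4, 0, 8, 9, 1, 5, 6, 10, 2],
    [[0, 1, 5, 4], [1, 2, 6, 4, 8, 9]], [[4, 6, 10, 8], [0, 2, 10, 9, 5, 4]]⟩,
   ⟨[2, 1, 0, 5, 6, 4, 8, 9, 10], [4, 0, 8, 1, 9, 5, 2, 6, 10],
    [[0, 2, 6, 4], [0, 1, 5, 6, 10, 8]], [[0, 1, 9, 8], [0, 2, 10, 9, 5, 4]]⟩,
   ⟨[2, 1, 0, 5, 6, 4, 10, 8, 9], [0, 4, 8, 5, 1, 9, 10, 6, 2],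
    [[0, 2, 6, 5, 9, 8]], [[0, 1, 9, 8], [1, 2, 6, 5]]⟩,
   ⟨[2, 1, 0, 5, 6, 4, 10, 8, 9], [0, 8, 4, 5, 1, 9, 6, 10, 2],
    [[4, 6, 10, 8], [0, 2, 6, 5, 9, 8]], [[1, 2, 6, 5], [0, 1, 9, 10, 6, 4]]⟩,
   ⟨[2, 1, 0, 6, 4, 5, 8, 10, 9], [0, 4, 8, 1, 9, 5, 6, 10, 2],
    [[0, 1, 5, 6, 10, 8]], [[0, 1, 5, 4], [4, 6, 10, 8]]⟩,
   ⟨[2, 1, 0, 6, 4, 5, 8, 10, 9], [0, 4, 8, 9, 1, 5, 6, 2, 10],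
    [[0, 1, 5, 6, 10, 8]], [[0, 1, 5, 4], [4, 6, 10, 8]]⟩,
   ⟨[2, 1, 0, 6, 4, 5, 9, 8, 10], [4, 8, 0, 5, 1, 9, 2, 6, 10],
    [[1, 2, 6, 5], [0, 1, 9, 10, 6, 4]], [[4, 6, 10, 8], [0, 2, 6, 5, 9, 8]]⟩]

set_option maxRecDepth 100000 in
theorem excludesAll_K33 :
    excludesAll (· / 4) (· % 4) rowsK33 [columnsK33] cyclesK33 certificatesK33 := by
  decide +kernel

/-- The edges `4 * i + j` of `Q3plus`, grouped by the segment `i` of the first cycle.  The vertices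
of degree four have the labels `3` (they come first on both cycles) and the matching removed from
`K₄,₄` consists of the edges `0`, `5` and `10`. -/
def rowsQ3plus : List (List ℕ) := [[12, 13, 14, 15], [1, 2, 3], [4, 6, 7], [8, 9, 11]]

/-- The edges of `Q3plus`, grouped by the segment `j` of the second cycle, for three of the six
cyclic orders of these segments; the other three orders are the reverses of these. -/
def columnsQ3plus : List (List (List ℕ)) :=
  [[[3, 7, 11, 15], [4, 8, 12], [1, 9, 13], [2, 6, 14]],
   [[3, 7, 11, 15], [4, 8, 12], [2, 6, 14], [1, 9, 13]],
   [[3, 7, 11, 15], [1, 9, 13], [4, 8, 12], [2, 6, 14]]]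

/-- Sufficiently many cycles and unions of two disjoint cycles of `Q3plus`, as lists of edges. -/
def cyclesQ3plus : List (List ℕ) :=
  [[1, 2, 14, 13], [1, 3, 11, 9], [1, 3, 15, 13], [2, 3, 7, 6], [2, 3, 15, 14], [4, 6, 14, 12],
   [4, 7, 11, 8], [4, 7, 15, 12], [6, 7, 15, 14], [8, 9, 13, 12], [8, 11, 15, 12], [9, 11, 15, 13],
   [1, 2, 6, 4, 8, 9], [1, 2, 6, 4, 12, 13], [1, 2, 6, 7, 11, 9], [1, 2, 6, 7, 15, 13],
   [1, 2, 14, 12, 8, 9], [1, 2, 14, 15, 11, 9], [1, 3, 7, 4, 8, 9], [1, 3, 7, 4, 12, 13],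
   [1, 3, 7, 6, 14, 13], [1, 3, 15, 12, 8, 9], [1, 3, 11, 8, 12, 13], [2, 3, 11, 8, 4, 6],
   [2, 3, 15, 12, 4, 6], [2, 3, 7, 4, 12, 14], [2, 3, 11, 8, 12, 14], [2, 3, 11, 9, 13, 14],
   [4, 6, 14, 13, 9, 8], [4, 6, 14, 15, 11, 8], [4, 7, 15, 13, 9, 8], [4, 7, 11, 9, 13, 12],
   [6, 7, 11, 8, 12, 14], [6, 7, 11, 9, 13, 14], [1, 2, 6, 4, 8, 11, 15, 13],
   [1, 2, 6, 4, 12, 15, 11, 9], [1, 2, 14, 15, 7, 4, 8, 9], [1, 2, 14, 13, 4, 7, 11, 8],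
   [1, 2, 14, 12, 4, 7, 11, 9], [1, 2, 14, 15, 7, 4, 12, 13], [1, 2, 14, 12, 4, 7, 15, 13],
   [1, 2, 14, 13, 4, 7, 15, 12], [1, 2, 6, 7, 15, 12, 8, 9], [1, 2, 6, 7, 11, 8, 12, 13],
   [1, 2, 14, 15, 11, 8, 12, 13], [1, 2, 14, 12, 8, 11, 15, 13], [1, 2, 14, 13, 8, 11, 15, 12],
   [1, 3, 15, 14, 6, 4, 8, 9], [1, 3, 11, 8, 4, 6, 14, 13], [1, 3, 11, 9, 4, 6, 14, 12],
   [1, 3, 15, 14, 6, 4, 12, 13], [1, 3, 15, 13, 4, 6, 14, 12], [1, 3, 15, 12, 4, 6, 14, 13],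
   [1, 3, 7, 4, 8, 11, 15, 13], [1, 3, 11, 8, 4, 7, 15, 13], [1, 3, 15, 13, 4, 7, 11, 8],
   [1, 3, 7, 4, 12, 15, 11, 9], [1, 3, 11, 9, 4, 7, 15, 12], [1, 3, 15, 12, 4, 7, 11, 9],
   [1, 3, 7, 6, 14, 12, 8, 9], [1, 3, 7, 6, 14, 15, 11, 9], [1, 3, 11, 9, 6, 7, 15, 14],
   [1, 3, 15, 14, 6, 7, 11, 9], [2, 3, 15, 13, 9, 8, 4, 6], [2, 3, 11, 9, 13, 12, 4, 6],
   [2, 3, 7, 4, 8, 9, 13, 14], [2, 3, 7, 4, 8, 11, 15, 14], [2, 3, 11, 8, 4, 7, 15, 14],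
   [2, 3, 15, 14, 4, 7, 11, 8], [2, 3, 7, 6, 8, 9, 13, 12], [2, 3, 7, 6, 8, 11, 15, 12],
   [2, 3, 11, 8, 12, 15, 7, 6], [2, 3, 15, 12, 8, 11, 7, 6], [2, 3, 7, 6, 9, 11, 15, 13],
   [2, 3, 11, 9, 13, 15, 7, 6], [2, 3, 15, 13, 9, 11, 7, 6], [2, 3, 15, 14, 8, 9, 13, 12],
   [2, 3, 15, 13, 9, 8, 12, 14], [2, 3, 15, 12, 8, 9, 13, 14], [4, 6, 14, 15, 11, 9, 13, 12],
   [4, 6, 14, 12, 9, 11, 15, 13], [4, 6, 14, 13, 9, 11, 15, 12], [6, 7, 15, 14, 8, 9, 13, 12],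
   [6, 7, 15, 13, 9, 8, 12, 14], [6, 7, 15, 12, 8, 9, 13, 14]]

/-- Certificates for the orders in which no member of `cyclesQ3plus` yields a contradiction; found
by linear programming. -/
def certificatesQ3plus : List FarkasCertificate :=
  [⟨[12, 13, 15, 14, 2, 1, 3, 6, 7, 4, 9, 8, 11], [3, 11, 15, 7, 12, 8, 4, 6, 2, 14, 13, 9, 1],
    [[4, 7, 11, 9, 13, 12]], [[4, 7, 11, 8], [8, 9, 13, 12]]⟩,
   ⟨[12, 13, 15, 14, 2, 1, 3, 6, 7, 4, 9, 8, 11], [3, 11, 15, 7, 12, 8, 4, 6, 14, 2, 13, 9, 1],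
    [[4, 7, 11, 9, 13, 12]], [[4, 7, 11, 8], [8, 9, 13, 12]]⟩,
   ⟨[12, 13, 15, 14, 2, 1, 3, 6, 7, 4, 9, 8, 11], [3, 11, 15, 7, 12, 8, 4, 14, 6, 2, 13, 9, 1],
    [[4, 7, 11, 9, 13, 12]], [[4, 7, 11, 8], [8, 9, 13, 12]]⟩,
   ⟨[12, 13, 15, 14, 2, 3, 1, 6, 7, 4, 9, 8, 11], [3, 11, 15, 7, 12, 8, 4, 6, 2, 14, 13, 9, 1],
    [[4, 7, 11, 9, 13, 12]], [[4, 7, 11, 8], [8, 9, 13, 12]]⟩,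
   ⟨[12, 13, 15, 14, 2, 3, 1, 6, 7, 4, 9, 8, 11], [3, 11, 15, 7, 12, 8, 4, 6, 14, 2, 13, 9, 1],
    [[4, 7, 11, 9, 13, 12]], [[4, 7, 11, 8], [8, 9, 13, 12]]⟩,
   ⟨[12, 13, 15, 14, 2, 3, 1, 6, 7, 4, 9, 8, 11], [3, 11, 15, 7, 12, 8, 4, 14, 6, 2, 13, 9, 1],
    [[4, 7, 11, 9, 13, 12]], [[4, 7, 11, 8], [8, 9, 13, 12]]⟩,
   ⟨[12, 13, 15, 14, 3, 1, 2, 6, 4, 7, 11, 9, 8], [3, 11, 15, 7, 4, 8, 12, 6, 14, 2, 9, 1, 13],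
    [[1, 2, 14, 13], [1, 3, 11, 9]], [[2, 3, 11, 9, 13, 14]]⟩,
   ⟨[12, 13, 15, 14, 3, 1, 2, 6, 4, 7, 11, 9, 8], [3, 11, 15, 7, 4, 12, 8, 6, 14, 2, 9, 1, 13],
    [[1, 2, 14, 13], [1, 3, 11, 9]], [[2, 3, 11, 9, 13, 14]]⟩,
   ⟨[12, 13, 15, 14, 3, 1, 2, 6, 7, 4, 11, 9, 8], [3, 11, 15, 7, 4, 8, 12, 6, 14, 2, 9, 1, 13],
    [[1, 2, 14, 13], [1, 3, 11, 9]], [[2, 3, 11, 9, 13, 14]]⟩,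
   ⟨[12, 13, 15, 14, 3, 1, 2, 6, 7, 4, 11, 9, 8], [3, 11, 15, 7, 4, 12, 8, 6, 14, 2, 9, 1, 13],
    [[4, 7, 11, 8], [1, 3, 7, 6, 14, 13]], [[4, 6, 14, 12], [1, 3, 11, 8, 12, 13]]⟩,
   ⟨[12, 13, 15, 14, 3, 1, 2, 7, 6, 4, 11, 9, 8], [3, 11, 15, 7, 4, 8, 12, 6, 14, 2, 9, 1, 13],
    [[1, 2, 14, 13], [1, 3, 11, 9]], [[2, 3, 11, 9, 13, 14]]⟩,
   ⟨[12, 13, 15, 14, 3, 1, 2, 7, 6, 4, 11, 9, 8], [3, 11, 15, 7, 4, 12, 8, 6, 14, 2, 9, 1, 13],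
    [[1, 2, 14, 13], [1, 3, 11, 9]], [[2, 3, 11, 9, 13, 14]]⟩,
   ⟨[12, 14, 15, 13, 3, 2, 1, 6, 7, 4, 9, 11, 8], [3, 15, 11, 7, 12, 4, 8, 6, 2, 14, 13, 1, 9],
    [[2, 3, 11, 9, 13, 14]], [[2, 3, 15, 14], [9, 11, 15, 13]]⟩,
   ⟨[12, 14, 15, 13, 3, 2, 1, 7, 6, 4, 9, 11, 8], [3, 15, 11, 7, 12, 4, 8, 6, 2, 14, 13, 1, 9],
    [[2, 3, 11, 9, 13, 14]], [[2, 3, 15, 14], [9, 11, 15, 13]]⟩,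
   ⟨[12, 15, 13, 14, 3, 2, 1, 6, 4, 7, 11, 8, 9], [3, 7, 15, 11, 12, 4, 8, 6, 14, 2, 9, 13, 1],
    [[4, 7, 15, 12], [9, 11, 15, 13]], [[4, 7, 11, 9, 13, 12]]⟩,
   ⟨[12, 15, 13, 14, 3, 2, 1, 6, 4, 7, 11, 8, 9], [3, 7, 15, 11, 12, 4, 8, 14, 6, 2, 9, 13, 1],
    [[4, 7, 15, 12], [9, 11, 15, 13]], [[4, 7, 11, 9, 13, 12]]⟩,
   ⟨[12, 13, 15, 14, 1, 2, 3, 7, 6, 4, 9, 8, 11], [3, 15, 7, 11, 9, 13, 1, 8, 4, 12, 2, 6, 14],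
    [[1, 3, 15, 13], [6, 7, 15, 14]], [[1, 3, 7, 6, 14, 13]]⟩,
   ⟨[12, 13, 15, 14, 1, 2, 3, 7, 6, 4, 9, 8, 11], [3, 15, 7, 11, 9, 13, 1, 8, 12, 4, 2, 6, 14],
    [[1, 3, 15, 13], [6, 7, 15, 14]], [[1, 3, 7, 6, 14, 13]]⟩,
   ⟨[12, 15, 13, 14, 2, 1, 3, 6, 4, 7, 8, 9, 11], [7, 15, 3, 11, 13, 9, 1, 8, 12, 4, 2, 14, 6],
    [[1, 3, 11, 9], [8, 9, 13, 12]], [[1, 3, 11, 8, 12, 13]]⟩,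
   ⟨[12, 15, 13, 14, 2, 1, 3, 6, 4, 7, 8, 9, 11], [7, 15, 3, 11, 13, 9, 1, 8, 12, 4, 14, 2, 6],
    [[1, 3, 11, 9], [8, 9, 13, 12]], [[1, 3, 11, 8, 12, 13]]⟩,
   ⟨[12, 15, 13, 14, 2, 1, 3, 6, 7, 4, 8, 9, 11], [7, 15, 3, 11, 13, 9, 1, 8, 12, 4, 2, 14, 6],
    [[1, 3, 11, 9], [8, 9, 13, 12]], [[1, 3, 11, 8, 12, 13]]⟩,
   ⟨[12, 15, 13, 14, 2, 1, 3, 6, 7, 4, 8, 9, 11], [7, 15, 3, 11, 13, 9, 1, 8, 12, 4, 14, 2, 6],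
    [[1, 3, 11, 9], [8, 9, 13, 12]], [[1, 3, 11, 8, 12, 13]]⟩,
   ⟨[12, 15, 13, 14, 2, 1, 3, 7, 6, 4, 8, 9, 11], [7, 15, 3, 11, 13, 9, 1, 8, 12, 4, 2, 14, 6],
    [[1, 3, 11, 9], [8, 9, 13, 12]], [[1, 3, 11, 8, 12, 13]]⟩,
   ⟨[12, 15, 13, 14, 2, 1, 3, 7, 6, 4, 8, 9, 11], [7, 15, 3, 11, 13, 9, 1, 8, 12, 4, 14, 2, 6],
    [[1, 3, 11, 9], [8, 9, 13, 12]], [[1, 3, 11, 8, 12, 13]]⟩,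
   ⟨[12, 15, 13, 14, 3, 2, 1, 6, 7, 4, 9, 11, 8], [7, 15, 3, 11, 9, 1, 13, 8, 4, 12, 6, 2, 14],
    [[1, 3, 7, 6, 14, 13]], [[1, 2, 14, 13], [2, 3, 7, 6]]⟩,
   ⟨[12, 15, 13, 14, 3, 2, 1, 6, 7, 4, 9, 11, 8], [7, 15, 3, 11, 9, 1, 13, 8, 12, 4, 6, 2, 14],
    [[1, 3, 7, 6, 14, 13]], [[1, 2, 14, 13], [2, 3, 7, 6]]⟩,
   ⟨[12, 15, 13, 14, 3, 2, 1, 6, 7, 4, 9, 11, 8], [7, 15, 3, 11, 9, 1, 13, 12, 8, 4, 6, 2, 14],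
    [[1, 3, 7, 6, 14, 13]], [[1, 2, 14, 13], [2, 3, 7, 6]]⟩,
   ⟨[12, 15, 13, 14, 3, 2, 1, 6, 7, 4, 11, 9, 8], [7, 15, 3, 11, 9, 1, 13, 8, 4, 12, 6, 2, 14],
    [[1, 3, 7, 6, 14, 13]], [[1, 2, 14, 13], [2, 3, 7, 6]]⟩,
   ⟨[12, 15, 13, 14, 3, 2, 1, 6, 7, 4, 11, 9, 8], [7, 15, 3, 11, 9, 1, 13, 8, 12, 4, 6, 2, 14],
    [[1, 3, 7, 6, 14, 13]], [[1, 2, 14, 13], [2, 3, 7, 6]]⟩,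
   ⟨[12, 15, 13, 14, 3, 2, 1, 6, 7, 4, 11, 9, 8], [7, 15, 3, 11, 9, 1, 13, 12, 8, 4, 6, 2, 14],
    [[1, 3, 7, 6, 14, 13]], [[1, 2, 14, 13], [2, 3, 7, 6]]⟩,
   ⟨[13, 15, 12, 14, 2, 3, 1, 6, 4, 7, 9, 8, 11], [7, 3, 15, 11, 1, 9, 13, 12, 8, 4, 2, 6, 14],
    [[1, 3, 11, 8, 12, 13]], [[1, 3, 15, 13], [8, 11, 15, 12]]⟩,
   ⟨[13, 15, 12, 14, 2, 3, 1, 6, 7, 4, 9, 8, 11], [7, 3, 15, 11, 1, 9, 13, 12, 8, 4, 2, 6, 14],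
    [[1, 3, 11, 8, 12, 13]], [[1, 3, 15, 13], [8, 11, 15, 12]]⟩]

set_option maxRecDepth 100000 in
theorem excludesAll_Q3plus :
    excludesAll (· / 4) (· % 4) rowsQ3plus columnsQ3plus cyclesQ3plus certificatesQ3plus := by
  decide +kernel

end SearchData

section PeriodicCycles

variable {V : Type*} {G : SimpleGraph V} {n : ℕ} {c : ℤ → V} {i j a b : ℤ} {v : V}

/-- The sequence `c` runs periodically around a cycle of length `n`. -/
structure IsPeriodicCycle (G : SimpleGraph V) (n : ℕ) (c : ℤ → V) : Prop where
  adj : ∀ i, G.Adj (c i) (c (i + 1))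
  eq_iff : ∀ i j, c i = c j ↔ (n : ℤ) ∣ i - j

theorem IsPeriodicCycle.neg (hc : IsPeriodicCycle G n c) :
    IsPeriodicCycle G n fun i => c (-i) where
  adj i := by simpa [add_comm] using (hc.adj (-(i + 1))).symm
  eq_iff i j := by rw [hc.eq_iff, ← dvd_neg]; ring_nf

theorem IsPeriodicCycle.eq_of_abs_lt (hc : IsPeriodicCycle G n c) (h : c i = c j)
    (hij : |i - j| < n) : i = j :=
  sub_eq_zero.1 (Int.eq_zero_of_abs_lt_dvd ((hc.eq_iff i j).1 h) hij)

theorem IsPeriodicCycle.apply_add_period (hc : IsPeriodicCycle G n c) (i : ℤ) : c (i + n) = c i :=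
  (hc.eq_iff _ _).2 (by simp)

/-- The inner vertices of the arc of `c` between the positions `a` and `b`. -/
noncomputable def arcInterior (c : ℤ → V) (a b : ℤ) : Multiset V :=
  (Finset.Ioo (min a b) (max a b)).val.map c

theorem mem_arcInterior : v ∈ arcInterior c a b ↔ ∃ i ∈ Set.uIoo a b, c i = v := by
  simp [arcInterior, Set.uIoo]

theorem arcInterior_comm (c : ℤ → V) (a b : ℤ) : arcInterior c a b = arcInterior c b a := by
  rw [arcInterior, arcInterior, min_comm, max_comm]

theorem card_arcInterior (hab : a ≠ b) : ((arcInterior c a b).card : ℤ) = |a - b| - 1 := by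
  have := max_sub_min_eq_abs' a b
  have := abs_pos.2 (sub_ne_zero.2 hab)
  simp only [arcInterior, Multiset.card_map, Finset.card_val, Int.card_Ioo]
  lia

theorem IsPeriodicCycle.nodup_arcInterior (hc : IsPeriodicCycle G n c) (hab : |a - b| ≤ n) :
    (arcInterior c a b).Nodup := by
  refine Multiset.Nodup.map_on (fun i hi j hj hij => hc.eq_of_abs_lt hij ?_) (Finset.nodup _)
  have := max_sub_min_eq_abs' a b
  simp only [Finset.mem_val, Finset.mem_Ioo] at hi hj
  exact abs_lt.2 ⟨by lia, by lia⟩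

theorem IsPeriodicCycle.exists_walk_arc (hc : IsPeriodicCycle G n c) (hab : a ≠ b) :
    ∃ w : G.Walk (c a) (c b), (w.support : Multiset V) = c a ::ₘ c b ::ₘ arcInterior c a b := by
  have ascending (a : ℤ) (m : ℕ) : ∃ w : G.Walk (c a) (c (a + m)),
      (w.support : Multiset V) = c a ::ₘ (Finset.Ioc a (a + m)).val.map c := by
    induction m with
    | zero => exact ⟨Walk.nil.copy rfl (by simp), by simp⟩
    | succ m ih =>
      obtain ⟨w, hw⟩ := ih
      refine ⟨(w.concat (hc.adj _)).copy rfl (by push_cast; ring_nf), ?_⟩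
      have hIoc : Finset.Ioc a (a + (m + 1 : ℕ)) =
          Finset.cons (a + m + 1) (Finset.Ioc a (a + m)) (by simp) := by ext; simp; lia
      rw [Walk.support_copy, Walk.support_concat, ← Multiset.coe_add, hw,
        hIoc, Finset.cons_val, Multiset.map_cons, Multiset.coe_singleton, Multiset.cons_add,
        add_comm, Multiset.singleton_add]
  have lt_case {a b : ℤ} (hab : a < b) : ∃ w : G.Walk (c a) (c b),
      (w.support : Multiset V) = c a ::ₘ c b ::ₘ arcInterior c a b := by
    obtain ⟨m, rfl⟩ := Int.exists_add_of_le hab.le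
    obtain ⟨w, hw⟩ := ascending a m
    have hIoc : Finset.Ioc a (a + m) = Finset.cons (a + m) (Finset.Ioo a (a + m)) (by simp) := by
      ext; simp; lia
    refine ⟨w, ?_⟩
    rw [hw, arcInterior, min_eq_left hab.le, max_eq_right hab.le, hIoc, Finset.cons_val,
      Multiset.map_cons]
  rcases lt_or_gt_of_ne hab with h | h
  · exact lt_case h
  · obtain ⟨w, hw⟩ := lt_case h
    refine ⟨w.reverse, ?_⟩
    rw [Walk.support_reverse, Multiset.coe_reverse, hw, arcInterior_comm, Multiset.cons_swap]

end PeriodicCycles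

section ClosedWalks

variable {V ι : Type*} {G : SimpleGraph V}

theorem length_le_of_nodup_tail_support {n : ℕ} (hn : 3 ≤ n)
    (hmax : ∀ (u : V) (w : G.Walk u u), w.IsCycle → w.length ≤ n) {u : V} {w : G.Walk u u}
    (hw : w.support.tail.Nodup) : w.length ≤ n := by
  by_contra! hlt
  refine hlt.not_ge (hmax u w (Walk.isCycle_iff_isPath_tail_and_le_length.2 ⟨?_, by lia⟩))
  rw [Walk.isPath_def, Walk.support_tail_of_not_nil w (by rintro ⟨⟩; simp at hlt)]
  exact hw

theorem exists_walk_iterate {z : ι → V} {φ : ι → ι} {B : ι → Multiset V} (m : ℕ) :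
    ∀ e, (∀ e' ∈ List.iterate φ e m,
        ∃ w : G.Walk (z e') (z (φ e')), (w.support.tail : Multiset V) = B e') →
      ∃ w : G.Walk (z e) (z (φ^[m] e)),
        (w.support.tail : Multiset V) = (List.iterate φ e m : Multiset ι).bind B := by
  induction m with
  | zero => exact fun e _ => ⟨Walk.nil, by simp⟩
  | succ m ih =>
    intro e h
    obtain ⟨w₁, hw₁⟩ := h e (by simp)
    obtain ⟨w₂, hw₂⟩ := ih (φ e) fun e' he' => h e' (by simp [he'])
    rw [Function.iterate_succ_apply]
    refine ⟨w₁.append w₂, ?_⟩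
    rw [Walk.tail_support_append, ← Multiset.coe_add, hw₁, hw₂, List.iterate, ← Multiset.cons_coe,
      Multiset.cons_bind]

theorem coe_tail_support_append {u v z : V} {I : Multiset V} {w : G.Walk u v} {w' : G.Walk v z}
    (hw : (w.support : Multiset V) = u ::ₘ v ::ₘ I) :
    ((w.append w').support.tail : Multiset V) = I + w'.support := by
  rw [← w.cons_tail_support, ← Multiset.cons_coe, Multiset.cons_inj_right] at hw
  rw [Walk.tail_support_append, ← Multiset.coe_add, hw, Multiset.cons_add, ← Multiset.add_cons,
    Multiset.cons_coe, w'.cons_tail_support]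

theorem map_iterate_perm {φ : ι → ι} {m : ℕ} {e : ι} (h : φ^[m] e = e) :
    ((List.iterate φ e m).map φ).Perm (List.iterate φ e m) := by
  have hmap : (List.iterate φ e m).map φ = List.iterate φ (φ e) m :=
    List.ext_getElem (by simp) fun i _ _ => by
      rw [List.getElem_map, List.getElem_iterate, List.getElem_iterate,
        ← Function.iterate_succ_apply, Function.iterate_succ_apply']
  have hcons : e :: List.iterate φ (φ e) m = List.iterate φ e m ++ [e] := by
    simpa [List.iterate, h] using List.iterate_add φ e m 1
  rw [← List.perm_cons e, hmap, hcons]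
  exact List.perm_append_singleton _ _

end ClosedWalks

section Linkages

variable {V ι : Type*} {G : SimpleGraph V} {X₁ X₂ : Set V} {x₁ x₂ : ι → V} {S : ι → Finset V}
  {s : Set ι}

/-- The sets `S e`, for `e ∈ s`, are the vertex sets of pairwise disjoint paths of `G` from
`x₁ e ∈ X₁` to `x₂ e ∈ X₂` that meet `X₁` and `X₂` only in their ends. -/
structure IsLinkage (G : SimpleGraph V) (X₁ X₂ : Set V) (x₁ x₂ : ι → V) (S : ι → Finset V)
    (s : Set ι) : Prop where
  fst_mem : ∀ e ∈ s, x₁ e ∈ X₁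
  snd_mem : ∀ e ∈ s, x₂ e ∈ X₂
  exists_walk : ∀ e ∈ s, ∃ w : G.Walk (x₁ e) (x₂ e), (w.support : Multiset V) = (S e).val
  eq_fst : ∀ e ∈ s, ∀ v ∈ S e, v ∈ X₁ → v = x₁ e
  eq_snd : ∀ e ∈ s, ∀ v ∈ S e, v ∈ X₂ → v = x₂ e
  disjoint : s.PairwiseDisjoint S

theorem IsLinkage.fst_mem_path (hL : IsLinkage G X₁ X₂ x₁ x₂ S s) {e : ι} (he : e ∈ s) :
    x₁ e ∈ S e := by
  obtain ⟨w, hw⟩ := hL.exists_walk e he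
  rw [← Finset.mem_val, ← hw]
  exact w.start_mem_support

theorem IsLinkage.symm (hL : IsLinkage G X₁ X₂ x₁ x₂ S s) : IsLinkage G X₂ X₁ x₂ x₁ S s where
  fst_mem := hL.snd_mem
  snd_mem := hL.fst_mem
  exists_walk e he := by
    obtain ⟨w, hw⟩ := hL.exists_walk e he
    exact ⟨w.reverse, by rw [Walk.support_reverse, Multiset.coe_reverse, hw]⟩
  eq_fst := hL.eq_snd
  eq_snd := hL.eq_fst
  disjoint := hL.disjoint

theorem IsLinkage.comp {ι' : Type*} {φ : ι' → ι} {t : Set ι'} (hL : IsLinkage G X₁ X₂ x₁ x₂ S s)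
    (hφ : Set.InjOn φ t) (hts : Set.MapsTo φ t s) :
    IsLinkage G X₁ X₂ (x₁ ∘ φ) (x₂ ∘ φ) (S ∘ φ) t where
  fst_mem _ he := hL.fst_mem _ (hts he)
  snd_mem _ he := hL.snd_mem _ (hts he)
  exists_walk _ he := hL.exists_walk _ (hts he)
  eq_fst _ he := hL.eq_fst _ (hts he)
  eq_snd _ he := hL.eq_snd _ (hts he)
  disjoint _ he _ hf hef := hL.disjoint (hts he) (hts hf) (hφ.ne he hf hef)

theorem IsLinkage.mono {t : Set ι} (hL : IsLinkage G X₁ X₂ x₁ x₂ S s) (hts : t ⊆ s) :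
    IsLinkage G X₁ X₂ x₁ x₂ S t :=
  hL.comp (Set.injOn_id t) hts

theorem IsLinkage.mono_graph {H : SimpleGraph V} (hL : IsLinkage H X₁ X₂ x₁ x₂ S s)
    (hHG : H ≤ G) : IsLinkage G X₁ X₂ x₁ x₂ S s :=
  { hL with
    exists_walk := fun e he =>
      let ⟨w, hw⟩ := hL.exists_walk e he
      ⟨w.mapLe hHG, by rw [Walk.support_mapLe_eq_support, hw]⟩ }

theorem IsLinkage.injOn_fst (hL : IsLinkage G X₁ X₂ x₁ x₂ S s) : Set.InjOn x₁ s :=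
  fun e he f hf hef => by
    by_contra hne
    exact Finset.disjoint_left.1 (hL.disjoint he hf hne) (hL.fst_mem_path he)
      (hef ▸ hL.fst_mem_path hf)

end Linkages

section Arcs

variable {V ι : Type*} {G : SimpleGraph V} {n : ℕ} {c : ℤ → V} {x : ι → V} {p : ι → ℤ}
  {f : ι → ι} {r E : List ι} {v : V}

/-- The inner vertices of all arcs of `c` between the positions `p e` and `p (f e)`, for `e` in
`E`. -/
noncomputable def arcs (c : ℤ → V) (p : ι → ℤ) (f : ι → ι) (E : List ι) : Multiset V :=
  (E : Multiset ι).bind fun e => arcInterior c (p e) (p (f e))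

theorem mem_arcs : v ∈ arcs c p f E ↔ ∃ e ∈ E, ∃ i ∈ Set.uIoo (p e) (p (f e)), c i = v := by
  simp [arcs, mem_arcInterior]

/-- The vertices `x e`, for `e ∈ r`, have positions `p e` within one period of the cycle `c`, and
`f` matches them by arcs of `c` that contain no further such vertex. -/
structure IsArcSystem (G : SimpleGraph V) (n : ℕ) (c : ℤ → V) (x : ι → V) (p : ι → ℤ) (f : ι → ι)
    (r : List ι) : Prop where
  cycle : IsPeriodicCycle G n c
  apply_eq : ∀ e ∈ r, c (p e) = x e
  window : ∃ m : ℤ, ∀ e ∈ r, p e ∈ Set.Ico m (m + n)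
  matching : IsMatchingOn f r
  consecutive : IsConsecutive p f r

namespace IsArcSystem

theorem ne_of_injOn (hA : IsArcSystem G n c x p f r) (hx : Set.InjOn x {e | e ∈ r}) {e : ι}
    (he : e ∈ r) : p e ≠ p (f e) := fun h => by
  have hfe := hA.matching.mem e he
  refine hA.matching.ne e he (hx hfe he ?_)
  rw [← hA.apply_eq e he, ← hA.apply_eq _ hfe, h]

theorem card_arcs (hA : IsArcSystem G n c x p f r) (hx : Set.InjOn x {e | e ∈ r})
    (hE : (E.map f ++ E).Perm r) :
    2 * ((arcs c p f E).card : ℤ) = (r.map fun e => |p e - p (f e)|).sum - r.length := by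
  have hEr (e : ι) (he : e ∈ E) : e ∈ r := hE.subset (List.mem_append_right _ he)
  have hcard : ((arcs c p f E).card : ℤ) = (E.map fun e => |p e - p (f e)| - 1).sum := by
    rw [arcs, Multiset.card_bind, Multiset.map_coe, Multiset.sum_coe, Nat.cast_list_sum,
      List.map_map]
    exact congrArg List.sum (List.map_congr_left fun e he =>
      card_arcInterior (hA.ne_of_injOn hx (hEr e he)))
  have hsymm : (E.map fun e => |p (f e) - p (f (f e))|) = E.map fun e => |p e - p (f e)| :=
    List.map_congr_left fun e he => by rw [hA.matching.invol e (hEr e he), abs_sub_comm]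
  rw [hcard, ← (hE.map fun e => |p e - p (f e)|).sum_eq, ← hE.length_eq, List.map_append,
    List.map_map, Function.comp_def, hsymm]
  simp only [sub_eq_add_neg, List.sum_map_add, List.map_const', List.sum_replicate,
    List.sum_append, List.length_append, List.length_map]
  push_cast
  ring

theorem eq_of_mem_uIoo (hA : IsArcSystem G n c x p f r) {e e' : ι} (he : e ∈ r) (he' : e' ∈ r)
    {i j : ℤ} (hi : i ∈ Set.uIoo (p e) (p (f e))) (hj : j ∈ Set.uIcc (p e') (p (f e')))
    (hij : c i = c j) : i = j := by
  obtain ⟨m, hm⟩ := hA.window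
  have h₁ := hm e he
  have h₂ := hm _ (hA.matching.mem e he)
  have h₃ := hm e' he'
  have h₄ := hm _ (hA.matching.mem e' he')
  refine hA.cycle.eq_of_abs_lt hij ?_
  simp only [Set.uIoo, Set.mem_Ioo, Set.mem_Ico, inf_lt_iff, lt_sup_iff, Set.mem_uIcc,
    abs_lt] at *
  lia

theorem ne_of_mem_arcs (hA : IsArcSystem G n c x p f r) (hE : E ⊆ r) (hv : v ∈ arcs c p f E)
    {e' : ι} (he' : e' ∈ r) : v ≠ x e' := by
  obtain ⟨e, he, i, hi, rfl⟩ := mem_arcs.1 hv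
  intro hie'
  rw [← hA.apply_eq e' he'] at hie'
  rw [hA.eq_of_mem_uIoo (hE he) he' hi Set.left_mem_uIcc hie'] at hi
  have := hA.consecutive e (hE he) e' he' (Set.uIoo_subset_uIcc_self hi)
  simp only [Set.uIoo, Set.mem_Ioo, inf_lt_iff, lt_sup_iff] at hi
  grind

theorem eq_or_eq_of_mem_uIoo (hA : IsArcSystem G n c x p f r) {e e' : ι} (he : e ∈ r)
    (he' : e' ∈ r) {i : ℤ} (hi : i ∈ Set.uIoo (p e) (p (f e)))
    (hi' : i ∈ Set.uIoo (p e') (p (f e'))) : e' = e ∨ e' = f e := by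
  have hf := hA.matching
  have hcons := hA.consecutive
  have h₁ := hcons e he e' he'
  have h₂ := hcons e he (f e') (hf.mem e' he')
  have h₃ := hcons e' he' e he
  have h₄ := hcons e' he' (f e) (hf.mem e he)
  have hfe := hf.invol e he
  have hfe' := hf.invol e' he'
  simp only [Set.uIoo, Set.mem_Ioo, inf_lt_iff, lt_sup_iff, Set.mem_uIcc] at *
  grind

theorem nodup_arcs (hA : IsArcSystem G n c x p f r) (hr : r.Nodup)
    (hE : (E.map f ++ E).Perm r) : (arcs c p f E).Nodup := by
  have hEr (e : ι) (he : e ∈ E) : e ∈ r := hE.subset (List.mem_append_right _ he)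
  obtain ⟨-, hEnd, hdisj⟩ := List.nodup_append'.1 (hE.nodup_iff.2 hr)
  refine Multiset.nodup_bind.2 ⟨fun e he => hA.cycle.nodup_arcInterior ?_, ?_⟩
  · obtain ⟨m, hm⟩ := hA.window
    obtain ⟨h₁, h₂⟩ := hm e (hEr e he)
    obtain ⟨h₃, h₄⟩ := hm _ (hA.matching.mem e (hEr e he))
    exact abs_le.2 ⟨by lia, by lia⟩
  · refine Multiset.Nodup.pairwise (fun e he e' he' hne => ?_) hEnd
    refine Multiset.disjoint_left.2 fun hv hv' => ?_
    obtain ⟨i, hi, rfl⟩ := mem_arcInterior.1 hv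
    obtain ⟨j, hj, hij⟩ := mem_arcInterior.1 hv'
    have := hA.eq_of_mem_uIoo (hEr e he) (hEr e' he') hi (Set.uIoo_subset_uIcc_self hj) hij.symm
    subst this
    rcases hA.eq_or_eq_of_mem_uIoo (hEr e he) (hEr e' he') hi hj with rfl | rfl
    · exact hne rfl
    · exact hdisj (List.mem_map_of_mem he) he'

theorem exists_walk (hA : IsArcSystem G n c x p f r) (hx : Set.InjOn x {e | e ∈ r}) {e : ι}
    (he : e ∈ r) : ∃ w : G.Walk (x e) (x (f e)),
      (w.support : Multiset V) = x e ::ₘ x (f e) ::ₘ arcInterior c (p e) (p (f e)) := by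
  rw [← hA.apply_eq e he, ← hA.apply_eq _ (hA.matching.mem e he)]
  exact hA.cycle.exists_walk_arc (hA.ne_of_injOn hx he)

end IsArcSystem

end Arcs

section Exchange

variable {V ι : Type*} {G : SimpleGraph V} {n : ℕ} {c₁ c₂ : ℤ → V} {x₁ x₂ : ι → V}
  {p₁ p₂ : ι → ℤ} {S : ι → Finset V} {f g : ι → ι} {r E : List ι} {h : ι}

theorem IsLinkage.exists_alternating_walk
    (hL : IsLinkage G (Set.range c₁) (Set.range c₂) x₁ x₂ S {e | e ∈ r})
    (hA₁ : IsArcSystem G n c₁ x₁ p₁ f r) (hA₂ : IsArcSystem G n c₂ x₂ p₂ g r) {e : ι}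
    (he : e ∈ r) : ∃ w : G.Walk (x₁ e) (x₁ (g (f e))), (w.support.tail : Multiset V) =
      arcInterior c₁ (p₁ e) (p₁ (f e)) + arcInterior c₂ (p₂ (f e)) (p₂ (g (f e))) +
        ((S (f e)).val + (S (g (f e))).val) := by
  have hfe := hA₁.matching.mem e he
  have hgfe := hA₂.matching.mem _ hfe
  obtain ⟨w₁, hw₁⟩ := hA₁.exists_walk hL.injOn_fst he
  obtain ⟨w₂, hw₂⟩ := hL.exists_walk _ hfe
  obtain ⟨w₃, hw₃⟩ := hA₂.exists_walk hL.symm.injOn_fst hfe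
  obtain ⟨w₄, hw₄⟩ := hL.symm.exists_walk _ hgfe
  refine ⟨(w₁.append w₂).append (w₃.append w₄), ?_⟩
  rw [Walk.tail_support_append, ← Multiset.coe_add, coe_tail_support_append hw₁,
    coe_tail_support_append hw₃, hw₂, hw₄]
  abel

theorem IsLinkage.exists_closed_walk
    (hL : IsLinkage G (Set.range c₁) (Set.range c₂) x₁ x₂ S {e | e ∈ r})
    (hA₁ : IsArcSystem G n c₁ x₁ p₁ f r) (hA₂ : IsArcSystem G n c₂ x₂ p₂ g r) {m : ℕ}
    (hm : (g ∘ f)^[m] h = h) (hE : List.iterate (g ∘ f) h m = E)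
    (hfE : (E.map f ++ E).Perm r) : ∃ w : G.Walk (x₁ h) (x₁ h),
      (w.support.tail : Multiset V) = arcs c₁ p₁ f E + arcs c₂ p₂ g (E.map f) +
        (r : Multiset ι).bind fun e => (S e).val := by
  have hEr (e : ι) (he : e ∈ E) : e ∈ r := hfE.subset (List.mem_append_right _ he)
  obtain ⟨w, hw⟩ := exists_walk_iterate (z := x₁) (φ := g ∘ f) m h fun e he =>
    hL.exists_alternating_walk hA₁ hA₂ (hEr e (hE ▸ he))
  refine ⟨w.copy rfl (by rw [hm]), ?_⟩
  have hfgE : (E.map f ++ (E.map f).map g).Perm r := by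
    rw [List.map_map, ← hE]
    exact ((map_iterate_perm hm).append_left _).trans (hE ▸ hfE)
  have hS : (E : Multiset ι).bind (fun e => (S (f e)).val + (S (g (f e))).val) =
      (r : Multiset ι).bind fun e => (S e).val := by
    rw [← Multiset.coe_eq_coe.2 hfgE, ← Multiset.coe_add, Multiset.add_bind, ← Multiset.map_coe,
      ← Multiset.map_coe, ← Multiset.map_coe, Multiset.map_map, Multiset.bind_map,
      Multiset.bind_map, Multiset.bind_add]
    rfl
  rw [Walk.support_copy, hw, hE, Multiset.bind_add, hS, Multiset.bind_add, arcs, arcs,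
    ← Multiset.map_coe, Multiset.bind_map]

theorem IsLinkage.nodup_closed_walk
    (hL : IsLinkage G (Set.range c₁) (Set.range c₂) x₁ x₂ S {e | e ∈ r}) (hr : r.Nodup)
    (hA₁ : IsArcSystem G n c₁ x₁ p₁ f r) (hA₂ : IsArcSystem G n c₂ x₂ p₂ g r)
    (hseg : ∀ e ∈ r, ∀ i ∈ Set.uIoo (p₂ e) (p₂ (g e)), c₂ i ∉ Set.range c₁)
    (hf : (E.map f ++ E).Perm r) (hg : ((E.map f).map g ++ E.map f).Perm r) :
    (arcs c₁ p₁ f E + arcs c₂ p₂ g (E.map f) +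
        (r : Multiset ι).bind fun e => (S e).val).Nodup := by
  have hEr := List.Subset.trans (List.subset_append_right _ _) hf.subset
  have hfEr := List.Subset.trans (List.subset_append_right _ _) hg.subset
  have hS : ((r : Multiset ι).bind fun e => (S e).val).Nodup :=
    Multiset.nodup_bind.2 ⟨fun e _ => (S e).nodup, Multiset.Nodup.pairwise (fun e he e' he' hne =>
      Finset.disjoint_val.2 (hL.disjoint he he' hne)) hr⟩
  refine Multiset.nodup_add.2 ⟨Multiset.nodup_add.2
    ⟨hA₁.nodup_arcs hr hf, hA₂.nodup_arcs hr hg, Multiset.disjoint_left.2 fun hv₁ hv₂ => ?_⟩, hS,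
    Multiset.disjoint_left.2 fun hv hvS => ?_⟩
  · obtain ⟨e, he, i, hi, rfl⟩ := mem_arcs.1 hv₂
    obtain ⟨-, -, j, -, hij⟩ := mem_arcs.1 hv₁
    exact hseg e (hfEr he) i hi ⟨j, hij⟩
  · obtain ⟨e, he, hve⟩ := Multiset.mem_bind.1 hvS
    rcases Multiset.mem_add.1 hv with hv | hv
    · refine hA₁.ne_of_mem_arcs hEr hv he (hL.eq_fst e he _ hve ?_)
      obtain ⟨-, -, i, -, rfl⟩ := mem_arcs.1 hv
      exact ⟨i, rfl⟩
    · refine hA₂.ne_of_mem_arcs hfEr hv he (hL.eq_snd e he _ hve ?_)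
      obtain ⟨-, -, i, -, rfl⟩ := mem_arcs.1 hv
      exact ⟨i, rfl⟩

theorem IsLinkage.sum_abs_lt (hn : 3 ≤ n)
    (hmax : ∀ (u : V) (w : G.Walk u u), w.IsCycle → w.length ≤ n)
    (hL : IsLinkage G (Set.range c₁) (Set.range c₂) x₁ x₂ S {e | e ∈ r}) (hr : r.Nodup)
    (hA₁ : IsArcSystem G n c₁ x₁ p₁ f r) (hA₂ : IsArcSystem G n c₂ x₂ p₂ g r)
    (hseg : ∀ e ∈ r, ∀ i ∈ Set.uIoo (p₂ e) (p₂ (g e)), c₂ i ∉ Set.range c₁)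
    (hS : ∃ e ∈ r, 1 < (S e).card) (hh : h ∈ r)
    (hlen : r.length = 2 * Function.minimalPeriod (g ∘ f) h) :
    (r.map fun e => |p₁ e - p₁ (f e)|).sum + (r.map fun e => |p₂ e - p₂ (g e)|).sum < 2 * n := by
  set m := Function.minimalPeriod (g ∘ f) h
  obtain ⟨E, hE⟩ : ∃ E, List.iterate (g ∘ f) h m = E := ⟨_, rfl⟩
  have hm : (g ∘ f)^[m] h = h := Function.iterate_minimalPeriod
  have hfE : (E.map f ++ E).Perm r :=
    hE ▸ hA₁.matching.perm_of_minimalPeriod hA₂.matching hh hlen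
  have hgE : ((E.map f).map g ++ E.map f).Perm r := by
    rw [List.map_map, ← hE]
    exact ((map_iterate_perm hm).append_right _).trans (List.perm_append_comm.trans (hE ▸ hfE))
  obtain ⟨w, hw⟩ := hL.exists_closed_walk hA₁ hA₂ hm hE hfE
  have hwn : w.length ≤ n := length_le_of_nodup_tail_support hn hmax
    (Multiset.coe_nodup.1 (hw ▸ hL.nodup_closed_walk hr hA₁ hA₂ hseg hfE hgE))
  have hcard := congrArg Multiset.card hw
  rw [Multiset.coe_card, List.length_tail, Walk.length_support, Nat.add_sub_cancel,
    Multiset.card_add, Multiset.card_add, Multiset.card_bind, Multiset.map_coe,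
    Multiset.sum_coe] at hcard
  have hpaths : r.length < (r.map fun e => (S e).card).sum := by
    have hpos (e : ι) (he : e ∈ r) : 1 ≤ (S e).card :=
      Finset.card_pos.2 ⟨_, hL.fst_mem_path he⟩
    simpa using List.sum_lt_sum (fun _ => 1) _ hpos hS
  have h₁ := hA₁.card_arcs hL.injOn_fst hfE
  have h₂ := hA₂.card_arcs hL.symm.injOn_fst hgE
  simp only [Function.comp_def, Finset.card_val] at hcard
  lia

end Exchange

section Placements

variable {V ι κ : Type*} {G : SimpleGraph V} {n : ℕ} {c c₁ c₂ : ℤ → V} {X : Set V}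
  {x x₁ x₂ : ι → V} {p p₁ p₂ : ι → ℤ} {S : ι → Finset V} {seg seg₁ seg₂ : ι → κ} {s : Set ι}
  {l r : List ι}

/-- The vertices `x e`, for `e ∈ s`, have positions `p e` within one period of the cycle `c`, and
`seg e` is the segment containing `x e` when `c` is cut at the vertices of `X` into half-open
segments, each of which contains its cut vertex as one of its two ends. -/
structure IsPlacement (n : ℕ) (c : ℤ → V) (X : Set V) (x : ι → V) (seg : ι → κ)
    (p : ι → ℤ) (s : Set ι) : Prop where
  apply_eq : ∀ e ∈ s, c (p e) = x e
  window : ∃ m : ℤ, ∀ e ∈ s, p e ∈ Set.Ico m (m + n)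
  segment : ∀ e ∈ s, ∀ f ∈ s, seg e = seg f →
    (∀ i ∈ Set.uIcc (p e) (p f), c i ∈ X → i = p e) ∨
      ∀ i ∈ Set.uIcc (p e) (p f), c i ∈ X → i = p f

theorem IsPlacement.comp {ι' κ' : Type*} {φ : ι' → ι} {seg' : ι' → κ'} {t : Set ι'}
    (hP : IsPlacement n c X x seg p s) (hts : Set.MapsTo φ t s)
    (hseg : ∀ e ∈ t, ∀ f ∈ t, seg' e = seg' f → seg (φ e) = seg (φ f)) :
    IsPlacement n c X (x ∘ φ) seg' (p ∘ φ) t where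
  apply_eq _ he := hP.apply_eq _ (hts he)
  window := hP.window.imp fun _ hm _ he => hm _ (hts he)
  segment e he f hf hef := hP.segment _ (hts he) _ (hts hf) (hseg e he f hf hef)

theorem IsPlacement.isArcSystem [DecidableEq ι] (hP : IsPlacement n c X x seg p s)
    (hc : IsPeriodicCycle G n c) (hl : ∀ e ∈ l, e ∈ s) (hp : l.Pairwise fun e f => p e < p f)
    (heven : Even l.length) (hlr : l.Perm r) :
    IsArcSystem G n c x p (partner (pairUp l)) r where
  cycle := hc
  apply_eq e he := hP.apply_eq e (hl e (hlr.mem_iff.2 he))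
  window := hP.window.imp fun _ hm e he => hm e (hl e (hlr.mem_iff.2 he))
  matching := (isMatchingOn_partner_pairUp (hp.imp fun h => ne_of_apply_ne p h.ne) heven).perm hlr
  consecutive := (isConsecutive_partner_pairUp hp heven).perm hlr

theorem pairwise_lt_update [DecidableEq ι] {h : ι} {t : List ι} (hr : ∀ e ∈ t, p e < p h + n)
    (hp : (h :: t).Pairwise fun e f => p e < p f) :
    (t ++ [h]).Pairwise fun e f =>
      Function.update p h (p h + n) e < Function.update p h (p h + n) f := by
  obtain ⟨hh, ht⟩ := List.pairwise_cons.1 hp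
  have hne (e : ι) (he : e ∈ t) : e ≠ h := (ne_of_apply_ne p (hh e he).ne).symm
  refine List.pairwise_append.2 ⟨ht.imp_of_mem fun he hf h => ?_, List.pairwise_singleton _ _,
    fun e he f hf => ?_⟩
  · rwa [Function.update_of_ne (hne _ he), Function.update_of_ne (hne _ hf)]
  · rw [List.mem_singleton.1 hf, Function.update_of_ne (hne e he), Function.update_self]
    exact hr e he

/-- After moving the position of the first vertex by one period, the intervals between the pairs of
`t ++ [h]` are the cyclic intervals of `h :: t` not spanned by its own pairs. -/
theorem sum_abs_partner_update [DecidableEq ι] {h : ι} {t : List ι}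
    (hr : ∀ e ∈ t, p e < p h + n) (hp : (h :: t).Pairwise fun e f => p e < p f)
    (heven : Even (h :: t).length) :
    ((h :: t).map fun e => |Function.update p h (p h + n) e -
      Function.update p h (p h + n) (partner (pairUp (t ++ [h])) e)|).sum =
      2 * (n - span p (h :: t)) := by
  have hht := (List.pairwise_cons.1 hp).1
  have hspan : span (Function.update p h (p h + n)) t = span p t := by
    refine congrArg (fun L => -L.alternatingSum) (List.map_congr_left fun e he => ?_)
    rw [Function.update_of_ne (ne_of_apply_ne p (hht e he).ne).symm]
  rw [← ((List.perm_append_singleton h t).map _).sum_eq,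
    sum_abs_partner_pairUp (pairwise_lt_update hr hp) (by simpa using heven),
    span_append_singleton, hspan, span_cons, Function.update_self,
    if_neg (by simpa [Nat.even_add_one] using heven)]
  ring

theorem IsPlacement.isArcSystem_update [DecidableEq ι] {h : ι} {t : List ι}
    (hP : IsPlacement n c X x seg p s) (hc : IsPeriodicCycle G n c) (hs : ∀ e ∈ h :: t, e ∈ s)
    (hr : ∀ e ∈ t, p e < p h + n) (hp : (h :: t).Pairwise fun e f => p e < p f)
    (heven : Even (h :: t).length) :
    IsArcSystem G n c x (Function.update p h (p h + n)) (partner (pairUp (t ++ [h])))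
      (h :: t) := by
  have hne (e : ι) (he : e ∈ t) : e ≠ h :=
    (ne_of_apply_ne p ((List.pairwise_cons.1 hp).1 e he).ne).symm
  have hlt := pairwise_lt_update hr hp
  have heven' : Even (t ++ [h]).length := by simpa using heven
  have hperm := List.perm_append_singleton h t
  refine ⟨hc, fun e he => ?_, ⟨p h + 1, fun e he => ?_⟩,
    (isMatchingOn_partner_pairUp (hlt.imp fun h => ne_of_apply_ne _ h.ne) heven').perm hperm,
    (isConsecutive_partner_pairUp hlt heven').perm hperm⟩
  · rcases List.mem_cons.1 he with rfl | het
    · rw [Function.update_self, hc.apply_add_period, hP.apply_eq e (hs e he)]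
    · rw [Function.update_of_ne (hne e het), hP.apply_eq e (hs e he)]
  · rcases List.mem_cons.1 he with rfl | het
    · obtain ⟨m, hm⟩ := hP.window
      have := hm e (hs e he)
      rw [Function.update_self]
      exact ⟨by grind, by lia⟩
    · have := (List.pairwise_cons.1 hp).1 e het
      have := hr e het
      rw [Function.update_of_ne (hne e het)]
      exact ⟨by lia, by lia⟩

theorem IsLinkage.one_lt_card (hL : IsLinkage G (Set.range c₁) (Set.range c₂) x₁ x₂ S s)
    (hP : IsPlacement n c₂ (Set.range c₁) x₂ seg p₂ s) {e f : ι} (he : e ∈ s) (hf : f ∈ s)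
    (hef : e ≠ f) (hseg : seg e = seg f) : 1 < (S e).card ∨ 1 < (S f).card := by
  by_contra! hcard
  have hmem (e : ι) (he : e ∈ s) (h : (S e).card ≤ 1) : c₂ (p₂ e) ∈ Set.range c₁ := by
    rw [hP.apply_eq e he, ← Finset.card_le_one.1 h _ (hL.fst_mem_path he) _
      (hL.symm.fst_mem_path he)]
    exact hL.fst_mem e he
  have hpos : p₂ e = p₂ f := by
    rcases hP.segment e he f hf hseg with h | h
    · exact (h _ Set.right_mem_uIcc (hmem f hf hcard.2)).symm
    · exact h _ Set.left_mem_uIcc (hmem e he hcard.1)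
  exact hef (hL.symm.injOn_fst he hf (by rw [← hP.apply_eq e he, ← hP.apply_eq f hf, hpos]))

theorem IsPlacement.notMem_of_mem_uIoo (hP : IsPlacement n c X x seg p s) {e f : ι} (he : e ∈ s)
    (hf : f ∈ s) (hseg : seg e = seg f) {i : ℤ} (hi : i ∈ Set.uIoo (p e) (p f)) : c i ∉ X :=
  fun hX => by
    have hi' := Set.uIoo_subset_uIcc_self hi
    rcases hP.segment e he f hf hseg with h | h <;>
      · rw [h i hi' hX] at hi
        simp only [Set.uIoo, Set.mem_Ioo, inf_lt_iff, lt_sup_iff] at hi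
        lia

theorem IsLinkage.exchangeInequality [DecidableEq ι] (hn : 3 ≤ n)
    (hmax : ∀ (u : V) (w : G.Walk u u), w.IsCycle → w.length ≤ n)
    (hc₁ : IsPeriodicCycle G n c₁) (hc₂ : IsPeriodicCycle G n c₂)
    (hL : IsLinkage G (Set.range c₁) (Set.range c₂) x₁ x₂ S {e | e ∈ l})
    (hP₁ : IsPlacement n c₁ X x₁ seg₁ p₁ {e | e ∈ l})
    (hP₂ : IsPlacement n c₂ (Set.range c₁) x₂ seg₂ p₂ {e | e ∈ l}) :
    ExchangeInequality seg₂ p₁ p₂ l := by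
  intro r₁ r₂ hr hsub hs₁ hs₂ hpairs hclose
  obtain _ | ⟨h, t⟩ := r₁
  · simp [closesUp] at hclose
  have heven := even_length_of_closesUp hclose
  have heven₂ := hr.length_eq ▸ heven
  have hnd := hs₁.imp fun h => ne_of_apply_ne p₁ h.ne
  have hseg (e : ι) : seg₂ e = seg₂ (partner (pairUp r₂) e) := (apply_partner_eq hpairs e).symm
  have hlt₁ (e : ι) (he : e ∈ t) : p₁ e < p₁ h + n := by
    obtain ⟨m, hm⟩ := hP₁.window
    have h₁ := hm e (hsub (List.mem_cons_of_mem h he))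
    have h₂ := hm h (hsub List.mem_cons_self)
    grind
  have hA₁ := hP₁.isArcSystem_update hc₁ hsub hlt₁ hs₁ heven
  have hsum₁ := sum_abs_partner_update hlt₁ hs₁ heven
  have hA₂ := hP₂.isArcSystem hc₂ (fun e he => hsub (hr.mem_iff.2 he)) hs₂ heven₂ hr.symm
  have hmem := hA₂.matching.mem
  have hL' := hL.mono (fun e he => hsub he : {e | e ∈ h :: t} ⊆ {e | e ∈ l})
  have hS : ∃ e ∈ h :: t, 1 < (S e).card := by
    have hh : h ∈ h :: t := List.mem_cons_self
    rcases hL.one_lt_card hP₂ (hsub hh) (hsub (hmem h hh)) (hA₂.matching.ne h hh).symm (hseg h)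
      with hS | hS
    exacts [⟨_, hh, hS⟩, ⟨_, hmem h hh, hS⟩]
  have hlt := hL'.sum_abs_lt hn hmax hnd hA₁ hA₂
    (fun e he i hi => hP₂.notMem_of_mem_uIoo (hsub he) (hsub (hmem e he)) (hseg e) hi) hS
    List.mem_cons_self (minimalPeriod_of_closesUp hclose)
  rw [hsum₁, (hr.map _).sum_eq, sum_abs_partner_pairUp hs₂ heven₂] at hlt
  lia

end Placements

section Segments

variable {V ι κ : Type*} {G : SimpleGraph V} {n : ℕ} {c : ℤ → V} {X : Set V} {P : V → ℤ}
  {x : ι → V} {seg : ι → κ} {p : ι → ℤ} {Q : κ → ℤ} {m : ℤ} {a b v w : V}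

/-- `a` is the last vertex of `X` that a walk along the cycle `c` visits before or on arrival at
`v`; it represents the segment of `c` containing `v` when `c` is cut at the vertices of `X`. -/
def IsSegmentStart (c : ℤ → V) (X : Set V) (a v : V) : Prop :=
  ∃ j i, j ≤ i ∧ c j = a ∧ c i = v ∧ a ∈ X ∧ ∀ k ∈ Set.Ioc j i, c k ∉ X

theorem IsPeriodicCycle.exists_mem_Ico (hc : IsPeriodicCycle G n c) (hn : 0 < n) (m : ℤ)
    (hv : v ∈ Set.range c) : ∃ i ∈ Set.Ico m (m + n), c i = v := by
  obtain ⟨i, rfl⟩ := hv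
  have hn' : (0 : ℤ) < n := by exact_mod_cast hn
  exact ⟨toIcoMod hn' m i, toIcoMod_mem_Ico hn' m i,
    (hc.eq_iff _ _).2 (by simp [toIcoMod])⟩

theorem IsPeriodicCycle.exists_isSegmentStart (hc : IsPeriodicCycle G n c) (hn : 0 < n)
    (hX : (Set.range c ∩ X).Nonempty) (hv : v ∈ Set.range c) : ∃ a, IsSegmentStart c X a v := by
  obtain ⟨i, rfl⟩ := hv
  obtain ⟨w, hw, hwX⟩ := hX
  obtain ⟨j, hj, rfl⟩ := hc.exists_mem_Ico hn (i - n) hw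
  obtain ⟨k, ⟨hki, hkX⟩, hk⟩ := Int.exists_greatest_of_bdd (P := fun k => k ≤ i ∧ c k ∈ X)
    ⟨i, fun k hk => hk.1⟩ ⟨j, by have := hj.2; lia, hwX⟩
  exact ⟨c k, k, i, hki, rfl, rfl, hkX, fun l hl hlX => (hk l ⟨hl.2, hlX⟩).not_gt hl.1⟩

theorem IsSegmentStart.exists_le (ha : IsSegmentStart c X a v) (hc : IsPeriodicCycle G n c) {i : ℤ}
    (hi : c i = v) : ∃ j ≤ i, c j = a ∧ ∀ k ∈ Set.Ioc j i, c k ∉ X := by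
  obtain ⟨j, i', hji, rfl, hi', -, hk⟩ := ha
  have hshift (k : ℤ) : c (k + (i' - i)) = c k := (hc.eq_iff _ _).2 <| by
    simpa using (hc.eq_iff _ _).1 (hi'.trans hi.symm)
  refine ⟨j - (i' - i), by lia, ?_, fun k hk' => ?_⟩
  · rw [← hshift, sub_add_cancel]
  · rw [← hshift]
    exact hk _ ⟨by have := hk'.1; lia, by have := hk'.2; lia⟩

/-- `P` assigns to each vertex of the cycle `c` its position in the period starting at `m`. -/
structure IsChart (n : ℕ) (c : ℤ → V) (m : ℤ) (P : V → ℤ) : Prop where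
  mem_Ico : ∀ v ∈ Set.range c, P v ∈ Set.Ico m (m + n)
  apply_eq : ∀ v ∈ Set.range c, c (P v) = v

theorem IsPeriodicCycle.exists_isChart (hc : IsPeriodicCycle G n c) (hn : 0 < n) (m : ℤ) :
    ∃ P, IsChart n c m P := by
  choose! P hP using fun v hv => hc.exists_mem_Ico (v := v) hn m hv
  exact ⟨P, fun v hv => (hP v hv).1, fun v hv => (hP v hv).2⟩

theorem IsChart.eq_of_mem_Ico (hP : IsChart n c m P) (hc : IsPeriodicCycle G n c) {i : ℤ}
    (hi : i ∈ Set.Ico m (m + n)) : P (c i) = i := by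
  have := hP.mem_Ico _ ⟨i, rfl⟩
  exact hc.eq_of_abs_lt (hP.apply_eq _ ⟨i, rfl⟩) (abs_lt.2 (by grind))

theorem IsChart.injOn (hP : IsChart n c m P) : Set.InjOn P (Set.range c) := fun v hv w hw h => by
  rw [← hP.apply_eq v hv, h, hP.apply_eq w hw]

theorem IsChart.apply_base_le (hP : IsChart n c m P) (hc : IsPeriodicCycle G n c) (hn : 0 < n)
    (hv : v ∈ Set.range c) : P (c m) ≤ P v := by
  rw [hP.eq_of_mem_Ico hc ⟨le_rfl, by lia⟩]
  exact (hP.mem_Ico v hv).1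

theorem IsChart.exists_isChart_next (hP : IsChart n c m P) (hc : IsPeriodicCycle G n c)
    (hn : 0 < n) (hm : c m ∈ X) : ∃ m' P', IsChart n c m' P' ∧ c m' ∈ X ∧
      ∀ v ∈ Set.range c ∩ X, v ≠ c m → P' v = P v ∧ P' v < P' (c m) := by
  obtain ⟨m', ⟨hmm', hm'⟩, hleast⟩ := Int.exists_least_of_bdd (P := fun k => m < k ∧ c k ∈ X)
    ⟨m, fun k hk => hk.1.le⟩ ⟨m + n, by lia, by rwa [hc.apply_add_period]⟩
  have hle : m' ≤ m + n := hleast _ ⟨by lia, by rwa [hc.apply_add_period]⟩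
  obtain ⟨P', hP'⟩ := hc.exists_isChart hn m'
  refine ⟨m', P', hP', hm', fun v ⟨hv, hvX⟩ hne => ?_⟩
  have hPv := hP.mem_Ico v hv
  rw [← hP.apply_eq v hv] at hvX hne
  have hlt : m < P v := hPv.1.lt_of_ne fun h => hne (by rw [h])
  have hP'v : P' v = P v := by
    conv_lhs => rw [← hP.apply_eq v hv]
    exact hP'.eq_of_mem_Ico hc ⟨hleast _ ⟨hlt, hvX⟩, hPv.2.trans (by lia)⟩
  refine ⟨hP'v, ?_⟩
  rw [hP'v, ← hc.apply_add_period m, hP'.eq_of_mem_Ico hc ⟨hle, by lia⟩]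
  exact hPv.2

theorem IsChart.segmentStart (hP : IsChart n c m P) (hc : IsPeriodicCycle G n c) (hm : c m ∈ X)
    (ha : IsSegmentStart c X a v) : P a ≤ P v ∧ ∀ k ∈ Set.Ioc (P a) (P v), c k ∉ X := by
  have hv : v ∈ Set.range c := let ⟨_, i, _, _, hi, _⟩ := ha; ⟨i, hi⟩
  have hPv := hP.mem_Ico v hv
  obtain ⟨j, hj, rfl, hk⟩ := ha.exists_le hc (hP.apply_eq v hv)
  have hmj : m ≤ j := by
    by_contra! hjm
    exact hk m ⟨hjm, hPv.1⟩ hm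
  rw [hP.eq_of_mem_Ico hc ⟨hmj, hj.trans_lt hPv.2⟩]
  exact ⟨hj, hk⟩

theorem IsChart.lt_of_lt (hP : IsChart n c m P) (hc : IsPeriodicCycle G n c) (hm : c m ∈ X)
    (ha : IsSegmentStart c X a v) (hb : IsSegmentStart c X b w) (hab : P a < P b) : P v < P w := by
  refine lt_of_lt_of_le ?_ (hP.segmentStart hc hm hb).1
  by_contra! hle
  obtain ⟨j, -, -, rfl, -, hjX, -⟩ := hb
  exact (hP.segmentStart hc hm ha).2 _ ⟨hab, hle⟩ (by rwa [hP.apply_eq _ ⟨j, rfl⟩])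

/-- The vertices `x e` have positions `p e` within one period of the cycle `c`, and the segments
`seg e` containing them when `c` is cut at the vertices of `X` come in the order given by `Q`. -/
structure IsOrderedPlacement (n : ℕ) (c : ℤ → V) (X : Set V) (x : ι → V) (seg : ι → κ)
    (p : ι → ℤ) (Q : κ → ℤ) : Prop extends IsPlacement n c X x seg p Set.univ where
  lt_of_lt : ∀ e f, Q (seg e) < Q (seg f) → p e < p f

theorem IsOrderedPlacement.neg (hP : IsOrderedPlacement n c X x seg p Q) :
    IsOrderedPlacement n (fun i => c (-i)) X x seg (-p) (-Q) where
  apply_eq e he := by simpa using hP.apply_eq e he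
  window := by
    obtain ⟨m, hm⟩ := hP.window
    exact ⟨-(m + n) + 1, fun e he => by have := hm e he; simp at this ⊢; lia⟩
  segment e he f hf hef := by
    have hneg {i : ℤ} (hi : i ∈ Set.uIcc ((-p) e) ((-p) f)) : -i ∈ Set.uIcc (p e) (p f) := by
      simp only [Set.mem_uIcc, Pi.neg_apply] at hi ⊢
      lia
    exact (hP.segment e he f hf hef).imp (fun h i hi hX => neg_eq_iff_eq_neg.1 (h _ (hneg hi) hX))
      fun h i hi hX => neg_eq_iff_eq_neg.1 (h _ (hneg hi) hX)
  lt_of_lt e f h := neg_lt_neg (hP.lt_of_lt f e (neg_lt_neg_iff.1 h))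

theorem IsChart.isOrderedPlacement {a : ι → V} (hP : IsChart n c m P) (hc : IsPeriodicCycle G n c)
    (hm : c m ∈ X) (ha : ∀ e, IsSegmentStart c X (a e) (x e)) :
    IsOrderedPlacement n c X x a (P ∘ x) P where
  apply_eq e _ := let ⟨_, i, _, _, hi, _⟩ := ha e; hP.apply_eq _ ⟨i, hi⟩
  window := ⟨m, fun e _ => let ⟨_, i, _, _, hi, _⟩ := ha e; hP.mem_Ico _ ⟨i, hi⟩⟩
  segment e _ f _ hef := by
    obtain ⟨he, heX⟩ := hP.segmentStart hc hm (ha e)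
    obtain ⟨hf, hfX⟩ := hP.segmentStart hc hm (ha f)
    rw [← hef] at hf hfX
    simp only [Function.comp_apply, Set.mem_uIcc, Set.mem_Ioc] at heX hfX ⊢
    grind
  lt_of_lt e f h := hP.lt_of_lt hc hm (ha e) (ha f) h

end Segments

section SegmentedLinkages

variable {V ι : Type*} {G : SimpleGraph V} {n : ℕ} {c₁ c₂ : ℤ → V} {x₁ x₂ : ι → V}
  {S : ι → Finset V} {a b : ι → V}

theorem ExchangeInequality.abs_sub_lt {α κ : Type*} [DecidableEq α] {seg : α → κ}
    {p₁ p₂ : α → ℤ} {s : List α} (hE : ExchangeInequality seg p₁ p₂ s) {e f : α} (he : e ∈ s)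
    (hf : f ∈ s) (h₁ : p₁ e ≠ p₁ f) (h₂ : p₂ e ≠ p₂ f) (hseg : seg e = seg f) :
    |p₂ e - p₂ f| < |p₁ e - p₁ f| := by
  wlog h₁ : p₁ e < p₁ f generalizing e f
  · rw [abs_sub_comm, abs_sub_comm (p₁ e)]
    exact this hf he (by tauto) (by tauto) hseg.symm (by lia)
  have hef : e ≠ f := ne_of_apply_ne p₁ h₁.ne
  have hsub : [e, f] ⊆ s := by simp [he, hf]
  rw [abs_sub_comm (p₁ e), abs_of_pos (sub_pos.2 h₁)]
  rcases h₂.lt_or_gt with h₂ | h₂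
  · have := hE (List.Perm.refl [e, f]) hsub (by simpa) (by simpa) (by simpa [pairUp])
      (by simp [closesUp, pairUp, partner_cons, hef, hef.symm])
    simp only [span_cons, span_nil] at this
    exact abs_lt.2 (by lia)
  · have := hE (List.Perm.swap f e []) hsub (by simpa) (by simpa)
      (by simpa [pairUp] using hseg.symm) (by simp [closesUp, pairUp, partner_cons, hef])
    simp only [span_cons, span_nil] at this
    exact abs_lt.2 (by lia)

/-- Disjoint paths joining two longest cycles, with vertex sets `S e` and ends `x₁ e` and `x₂ e`,
where `a e` and `b e` represent the segments of the two cycles that contain these ends. -/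
structure IsSegmentedLinkage (G : SimpleGraph V) (n : ℕ) (c₁ c₂ : ℤ → V) (x₁ x₂ : ι → V)
    (S : ι → Finset V) (a b : ι → V) : Prop where
  three_le : 3 ≤ n
  length_le : ∀ (u : V) (w : G.Walk u u), w.IsCycle → w.length ≤ n
  cycle₁ : IsPeriodicCycle G n c₁
  cycle₂ : IsPeriodicCycle G n c₂
  linkage : IsLinkage G (Set.range c₁) (Set.range c₂) x₁ x₂ S Set.univ
  start₁ : ∀ e, IsSegmentStart c₁ (Set.range c₂) (a e) (x₁ e)
  start₂ : ∀ e, IsSegmentStart c₂ (Set.range c₁) (b e) (x₂ e)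

theorem IsSegmentedLinkage.symm (hL : IsSegmentedLinkage G n c₁ c₂ x₁ x₂ S a b) :
    IsSegmentedLinkage G n c₂ c₁ x₂ x₁ S b a :=
  ⟨hL.three_le, hL.length_le, hL.cycle₂, hL.cycle₁, hL.linkage.symm, hL.start₂, hL.start₁⟩

theorem IsSegmentedLinkage.mem_range (hL : IsSegmentedLinkage G n c₁ c₂ x₁ x₂ S a b) (e : ι) :
    a e ∈ Set.range c₁ ∩ Set.range c₂ :=
  let ⟨j, _, _, hj, _, hX, _⟩ := hL.start₁ e
  ⟨⟨j, hj⟩, hX⟩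

theorem IsSegmentedLinkage.exists_isChart (hL : IsSegmentedLinkage G n c₁ c₂ x₁ x₂ S a b) (e : ι) :
    ∃ m P, IsChart n c₁ m P ∧ c₁ m = a e := by
  obtain ⟨m, hm⟩ := (hL.mem_range e).1
  obtain ⟨P, hP⟩ := hL.cycle₁.exists_isChart (by have := hL.three_le; lia) m
  exact ⟨m, P, hP, hm⟩

theorem IsSegmentedLinkage.isOrderedPlacement (hL : IsSegmentedLinkage G n c₁ c₂ x₁ x₂ S a b)
    {m : ℤ} {P : V → ℤ} (hP : IsChart n c₁ m P) (hm : c₁ m ∈ Set.range c₂) :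
    IsOrderedPlacement n c₁ (Set.range c₂) x₁ a (P ∘ x₁) P :=
  hP.isOrderedPlacement hL.cycle₁ hm hL.start₁

theorem IsPlacement.injOn {κ : Type*} {c : ℤ → V} {X : Set V} {x : ι → V} {seg : ι → κ} {p : ι → ℤ}
    {s : Set ι} (hP : IsPlacement n c X x seg p s) (hx : Set.InjOn x s) : Set.InjOn p s :=
  fun e he f hf hef => hx he hf (by rw [← hP.apply_eq e he, hef, hP.apply_eq f hf])

theorem IsSegmentedLinkage.injective (hL : IsSegmentedLinkage G n c₁ c₂ x₁ x₂ S a b) {e f : ι}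
    (ha : a e = a f) (hb : b e = b f) : e = f := by
  classical
  by_contra hef
  obtain ⟨m₁, P₁, hP₁, hm₁⟩ := hL.exists_isChart e
  obtain ⟨m₂, P₂, hP₂, hm₂⟩ := hL.symm.exists_isChart e
  replace hP₁ := hL.isOrderedPlacement hP₁ (hm₁ ▸ (hL.mem_range e).2)
  replace hP₂ := hL.symm.isOrderedPlacement hP₂ (hm₂ ▸ (hL.symm.mem_range e).2)
  have h₁ := (hP₁.injOn hL.linkage.injOn_fst).ne (Set.mem_univ e) (Set.mem_univ f) hef
  have h₂ := (hP₂.injOn hL.linkage.symm.injOn_fst).ne (Set.mem_univ e) (Set.mem_univ f) hef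
  have hl := Set.subset_univ {g | g ∈ [e, f]}
  have hP₁' := hP₁.comp (φ := id) hl fun _ _ _ _ h => h
  have hP₂' := hP₂.comp (φ := id) hl fun _ _ _ _ h => h
  have hlt₁ := ((hL.linkage.mono hl).exchangeInequality hL.three_le hL.length_le hL.cycle₁ hL.cycle₂
    hP₁' hP₂').abs_sub_lt (by simp) (by simp) h₁ h₂ hb
  have hlt₂ := ((hL.linkage.mono hl).symm.exchangeInequality hL.three_le hL.length_le hL.cycle₂
    hL.cycle₁ hP₂' hP₁').abs_sub_lt (by simp) (by simp) h₂ h₁ ha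
  exact hlt₁.asymm hlt₂

end SegmentedLinkages

section Exclusion

variable {V ι κ : Type*} {G : SimpleGraph V} {n : ℕ} {c₁ c₂ : ℤ → V} {x₁ x₂ : ι → V}
  {S : ι → Finset V} {a b : ι → κ} {p₁ p₂ : ι → ℤ} {Q₁ Q₂ : κ → ℤ}

theorem IsOrderedPlacement.exists_mem_blockOrders {c : ℤ → V} {X : Set V} {x : ι → V}
    {seg : ι → κ} {p : ι → ℤ} {Q : κ → ℤ} (hP : IsOrderedPlacement n c X x seg p Q)
    (hx : Function.Injective x) {Bs : List (List ℕ)} {φ : ℕ → ι} (hnd : Bs.flatten.Nodup)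
    (hφ : Set.InjOn φ {e | e ∈ Bs.flatten}) {code : ℕ → ℕ} {A : ℕ → κ}
    (hA : ∀ e ∈ Bs.flatten, seg (φ e) = A (code e))
    (hlt : Bs.Pairwise fun l l' => ∀ e ∈ l, ∀ f ∈ l', Q (A (code e)) < Q (A (code f))) :
    ∃ o ∈ blockOrders Bs, o.Pairwise fun e f => p (φ e) < p (φ f) := by
  refine exists_pairwise_mem_blockOrders (p := p ∘ φ)
    (((hP.injOn hx.injOn).comp hφ) fun _ _ => Set.mem_univ _) hnd
    (hlt.imp_of_mem fun hl hl' h e he f hf => hP.lt_of_lt _ _ ?_)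
  rw [hA e (List.mem_flatten_of_mem hl he), hA f (List.mem_flatten_of_mem hl' hf)]
  exact h e he f hf

/-- The number `e` encodes a path from the segment `A (e / 4)` of the first cycle to the segment
`B (e % 4)` of the second one. -/
theorem IsLinkage.false_of_excludesAll (hn : 3 ≤ n)
    (hmax : ∀ (u : V) (w : G.Walk u u), w.IsCycle → w.length ≤ n)
    (hc₁ : IsPeriodicCycle G n c₁) (hc₂ : IsPeriodicCycle G n c₂)
    (hL : IsLinkage G (Set.range c₁) (Set.range c₂) x₁ x₂ S Set.univ)
    (hP₁ : IsOrderedPlacement n c₁ (Set.range c₂) x₁ a p₁ Q₁)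
    (hP₂ : IsOrderedPlacement n c₂ (Set.range c₁) x₂ b p₂ Q₂) {Bs C : List (List ℕ)}
    {Cs : List (List (List ℕ))} {Hs : List (List ℕ)} {certs : List FarkasCertificate}
    (h : excludesAll (· / 4) (· % 4) Bs Cs Hs certs) (hC : C ∈ Cs) {φ : ℕ → ι} {A B : ℕ → κ}
    (hφ : Set.InjOn φ {e | e ∈ Bs.flatten})
    (hAB : ∀ e ∈ Bs.flatten, a (φ e) = A (e / 4) ∧ b (φ e) = B (e % 4))
    (hlt₁ : Bs.Pairwise fun l l' => ∀ e ∈ l, ∀ f ∈ l', Q₁ (A (e / 4)) < Q₁ (A (f / 4)))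
    (hlt₂ : C.Pairwise fun l l' => ∀ e ∈ l, ∀ f ∈ l', Q₂ (B (e % 4)) < Q₂ (B (f % 4))) :
    False := by
  have hperms := h
  simp only [excludesAll, Bool.and_eq_true, decide_eq_true_eq, List.all_eq_true,
    List.isPerm_iff] at hperms
  obtain ⟨⟨⟨⟨hnd, hCs⟩, -⟩, -⟩, -⟩ := hperms
  have hCB := (hCs C hC).1
  obtain ⟨o₁, ho₁, hs₁⟩ := hP₁.exists_mem_blockOrders (Set.injOn_univ.1 hL.injOn_fst) hnd hφ
    (fun e he => (hAB e he).1) hlt₁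
  obtain ⟨o₂, ho₂, hs₂⟩ := hP₂.exists_mem_blockOrders (Set.injOn_univ.1 hL.symm.injOn_fst)
    (hCB.nodup_iff.2 hnd) (hφ.mono hCB.subset) (fun e he => (hAB e (hCB.subset he)).2) hlt₂
  have hsub := (perm_flatten_of_mem_blockOrders ho₁).subset
  have hLφ := hL.comp (hφ.mono hsub : Set.InjOn φ {e | e ∈ o₁}) (Set.mapsTo_univ _ _)
  have hP₁φ := hP₁.comp (seg' := (· / 4)) (Set.mapsTo_univ φ {e | e ∈ o₁})
    fun e he f hf hef => by rw [(hAB e (hsub he)).1, (hAB f (hsub hf)).1, hef]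
  have hP₂φ := hP₂.comp (seg' := (· % 4)) (Set.mapsTo_univ φ {e | e ∈ o₁})
    fun e he f hf hef => by rw [(hAB e (hsub he)).2, (hAB f (hsub hf)).2, hef]
  exact LongestCycles.false_of_excludesAll h hC ho₁ ho₂ hs₁ hs₂
    (hLφ.exchangeInequality hn hmax hc₁ hc₂ hP₁φ hP₂φ)
    (hLφ.symm.exchangeInequality hn hmax hc₂ hc₁ hP₂φ hP₁φ)

/-- The members of `l` are the codes `4 * i + j` used in the certificates. -/
theorem exists_injOn_code {d : ℕ} [NeZero d] {A B : Fin d → κ} (hA : Function.Injective A)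
    (hB : Function.Injective B) {l : List ℕ} (hl : l ≠ [])
    (hd : ∀ e ∈ l, e / 4 < d ∧ e % 4 < d)
    (hAB : ∀ e ∈ l, ∃ g, a g = A (Fin.ofNat d (e / 4)) ∧ b g = B (Fin.ofNat d (e % 4))) :
    ∃ φ : ℕ → ι, Set.InjOn φ {e | e ∈ l} ∧
      ∀ e ∈ l, a (φ e) = A (Fin.ofNat d (e / 4)) ∧ b (φ e) = B (Fin.ofNat d (e % 4)) := by
  have : Nonempty ι := let ⟨e, he⟩ := List.exists_mem_of_ne_nil l hl; ⟨(hAB e he).choose⟩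
  choose! φ hφ using hAB
  refine ⟨φ, fun e he f hf hef => ?_, hφ⟩
  have hdiv := hA ((hφ e he).1.symm.trans (hef ▸ (hφ f hf).1))
  have hmod := hB ((hφ e he).2.symm.trans (hef ▸ (hφ f hf).2))
  simp only [Fin.ext_iff, Fin.val_ofNat, Nat.mod_eq_of_lt (hd e he).1,
    Nat.mod_eq_of_lt (hd e he).2, Nat.mod_eq_of_lt (hd f hf).1,
    Nat.mod_eq_of_lt (hd f hf).2] at hdiv hmod
  lia

theorem IsSegmentedLinkage.false_of_K33 {a b : ι → V}
    (hL : IsSegmentedLinkage G n c₁ c₂ x₁ x₂ S a b) {A B : Fin 3 → V} (hA : Function.Injective A)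
    (hB : Function.Injective B) (hAB : ∀ i j, ∃ g, a g = A i ∧ b g = B j) : False := by
  obtain ⟨g, -⟩ := hAB 0 0
  obtain ⟨m₁, P₁, hP₁, hm₁⟩ := hL.exists_isChart g
  obtain ⟨m₂, P₂, hP₂, hm₂⟩ := hL.symm.exists_isChart g
  have hinj₁ : Function.Injective (P₁ ∘ A) := fun i j h =>
    let ⟨_, hi, _⟩ := hAB i 0
    let ⟨_, hj, _⟩ := hAB j 0
    hA (hP₁.injOn (hi ▸ (hL.mem_range _).1) (hj ▸ (hL.mem_range _).1) h)
  have hinj₂ : Function.Injective (P₂ ∘ B) := fun i j h =>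
    let ⟨_, _, hi⟩ := hAB 0 i
    let ⟨_, _, hj⟩ := hAB 0 j
    hB (hP₂.injOn (hi ▸ (hL.symm.mem_range _).1) (hj ▸ (hL.symm.mem_range _).1) h)
  have hmono₁ := (Tuple.monotone_sort (P₁ ∘ A)).strictMono_of_injective
    (hinj₁.comp (Equiv.injective _))
  have hmono₂ := (Tuple.monotone_sort (P₂ ∘ B)).strictMono_of_injective
    (hinj₂.comp (Equiv.injective _))
  obtain ⟨φ, hφ, hφAB⟩ := exists_injOn_code (hA.comp (Tuple.sort (P₁ ∘ A)).injective)
    (hB.comp (Tuple.sort (P₂ ∘ B)).injective) (l := rowsK33.flatten) (by decide) (by decide)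
    fun _ _ => hAB _ _
  have hrows : rowsK33.Pairwise fun l l' => ∀ e ∈ l, ∀ f ∈ l',
      Fin.ofNat 3 (e / 4) < Fin.ofNat 3 (f / 4) := by decide
  have hcolumns : columnsK33.Pairwise fun l l' => ∀ e ∈ l, ∀ f ∈ l',
      Fin.ofNat 3 (e % 4) < Fin.ofNat 3 (f % 4) := by decide
  exact hL.linkage.false_of_excludesAll hL.three_le hL.length_le hL.cycle₁ hL.cycle₂
    (hL.isOrderedPlacement hP₁ (hm₁ ▸ (hL.mem_range g).2))
    (hL.symm.isOrderedPlacement hP₂ (hm₂ ▸ (hL.symm.mem_range g).2))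
    excludesAll_K33 (List.mem_singleton_self _) hφ
    (A := fun i => A (Tuple.sort (P₁ ∘ A) (Fin.ofNat 3 i)))
    (B := fun j => B (Tuple.sort (P₂ ∘ B) (Fin.ofNat 3 j))) hφAB
    (hrows.imp fun h e he f hf => hmono₁ (h e he f hf))
    (hcolumns.imp fun h e he f hf => hmono₂ (h e he f hf))

theorem exists_perm_apply_last {d : ℕ} {q : Fin (d + 1) → ℤ} (hq : Function.Injective q)
    (hlast : ∀ i, q (Fin.last d) ≤ q i) :
    ∃ σ : Equiv.Perm (Fin (d + 1)), σ (Fin.last d) = Fin.last d ∧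
      ∀ i j, i + 1 < j + 1 → q (σ i) < q (σ j) := by
  have hmono := Tuple.monotone_sort q
  refine ⟨(Equiv.addRight 1).trans (Tuple.sort q), ?_, fun i j hij =>
    hmono.strictMono_of_injective (hq.comp (Equiv.injective _)) hij⟩
  have hle := hmono (Fin.zero_le ((Tuple.sort q).symm (Fin.last d)))
  simp only [Function.comp_apply, Equiv.apply_symm_apply] at hle
  simpa using hq (hle.antisymm (hlast _))

theorem exists_mem_columnsQ3plus {q : Fin 4 → ℤ} (hq : Function.Injective q) (h₃ : ∀ i, q 3 ≤ q i)
    (h₀₂ : q 0 < q 2) :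
    ∃ C ∈ columnsQ3plus, C.Pairwise fun l l' => ∀ e ∈ l, ∀ f ∈ l',
      q (Fin.ofNat 4 (e % 4)) < q (Fin.ofNat 4 (f % 4)) := by
  have h₃₀ : q 3 < q 0 := (h₃ 0).lt_of_ne (hq.ne (by decide))
  have h₃₁ : q 3 < q 1 := (h₃ 1).lt_of_ne (hq.ne (by decide))
  rcases hq.ne (show (0 : Fin 4) ≠ 1 by decide) |>.lt_or_gt with h₀₁ | h₀₁
  · rcases hq.ne (show (1 : Fin 4) ≠ 2 by decide) |>.lt_or_gt with h₁₂ | h₁₂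
    · refine ⟨[[3, 7, 11, 15], [4, 8, 12], [1, 9, 13], [2, 6, 14]], by decide, ?_⟩
      simp
      lia
    · refine ⟨[[3, 7, 11, 15], [4, 8, 12], [2, 6, 14], [1, 9, 13]], by decide, ?_⟩
      simp
      lia
  · refine ⟨[[3, 7, 11, 15], [1, 9, 13], [4, 8, 12], [2, 6, 14]], by decide, ?_⟩
    simp
    lia

theorem IsLinkage.false_of_Q3plus (hn : 3 ≤ n)
    (hmax : ∀ (u : V) (w : G.Walk u u), w.IsCycle → w.length ≤ n)
    (hc₁ : IsPeriodicCycle G n c₁) (hc₂ : IsPeriodicCycle G n c₂)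
    (hL : IsLinkage G (Set.range c₁) (Set.range c₂) x₁ x₂ S Set.univ)
    (hP₁ : IsOrderedPlacement n c₁ (Set.range c₂) x₁ a p₁ Q₁)
    (hP₂ : IsOrderedPlacement n c₂ (Set.range c₁) x₂ b p₂ Q₂) {A B : Fin 4 → κ}
    (hA : Function.Injective A) (hQ₁ : ∀ i j, i + 1 < j + 1 → Q₁ (A i) < Q₁ (A j))
    (hB : Function.Injective (Q₂ ∘ B)) (h₃ : ∀ j, Q₂ (B 3) ≤ Q₂ (B j))
    (h₀₂ : Q₂ (B 0) < Q₂ (B 2))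
    (hAB : ∀ i j, (i = j → i = 3) → ∃ g, a g = A i ∧ b g = B j) : False := by
  obtain ⟨C, hC, hcolumns⟩ := exists_mem_columnsQ3plus hB h₃ h₀₂
  have hcodes : ∀ e ∈ rowsQ3plus.flatten,
      Fin.ofNat 4 (e / 4) = Fin.ofNat 4 (e % 4) → Fin.ofNat 4 (e / 4) = 3 := by decide
  obtain ⟨φ, hφ, hφAB⟩ := exists_injOn_code hA hB.of_comp (l := rowsQ3plus.flatten) (by decide)
    (by decide) fun e he => hAB _ _ (hcodes e he)
  have hrows : rowsQ3plus.Pairwise fun l l' => ∀ e ∈ l, ∀ f ∈ l',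
      Fin.ofNat 4 (e / 4) + 1 < Fin.ofNat 4 (f / 4) + 1 := by decide
  exact hL.false_of_excludesAll hn hmax hc₁ hc₂ hP₁ hP₂ excludesAll_Q3plus hC hφ
    (A := fun i => A (Fin.ofNat 4 i)) (B := fun j => B (Fin.ofNat 4 j)) hφAB
    (hrows.imp fun h e he f hf => hQ₁ _ _ (h e he f hf)) hcolumns

/-- Reversing the cycle, if necessary, one may choose the order of `u` and `v` after `a g`. -/
theorem IsSegmentedLinkage.exists_isOrderedPlacement_lt {a b : ι → V}
    (hL : IsSegmentedLinkage G n c₁ c₂ x₁ x₂ S a b) {g : ι} {u v : V}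
    (hu : u ∈ Set.range c₁ ∩ Set.range c₂) (hv : v ∈ Set.range c₁ ∩ Set.range c₂) (huv : u ≠ v)
    (hug : u ≠ a g) (hvg : v ≠ a g) :
    ∃ c, IsPeriodicCycle G n c ∧ Set.range c = Set.range c₁ ∧
      ∃ p Q, IsOrderedPlacement n c (Set.range c₂) x₁ a p Q ∧ Set.InjOn Q (Set.range c₁) ∧
        (∀ w ∈ Set.range c₁ ∩ Set.range c₂, Q (a g) ≤ Q w) ∧ Q u < Q v := by
  have hn : 0 < n := by have := hL.three_le; lia
  obtain ⟨m, P, hP, hm⟩ := hL.exists_isChart g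
  have hmc₂ : c₁ m ∈ Set.range c₂ := hm ▸ (hL.mem_range g).2
  rcases (hP.injOn.ne hu.1 hv.1 huv).lt_or_gt with hlt | hlt
  · exact ⟨c₁, hL.cycle₁, rfl, _, P, hL.isOrderedPlacement hP hmc₂, hP.injOn,
      fun w hw => hm ▸ hP.apply_base_le hL.cycle₁ hn hw.1, hlt⟩
  obtain ⟨m', P', hP', hm', hnext⟩ := hP.exists_isChart_next hL.cycle₁ hn hmc₂
  rw [hm] at hnext
  refine ⟨_, hL.cycle₁.neg, (Equiv.neg ℤ).surjective.range_comp c₁, _, _,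
    (hL.isOrderedPlacement hP' hm').neg, neg_injective.comp_injOn hP'.injOn, fun w hw => ?_, ?_⟩
  · rcases eq_or_ne w (a g) with rfl | hwg
    · exact le_rfl
    · exact neg_le_neg (hnext w hw hwg).2.le
  · simpa [(hnext u hu hug).1, (hnext v hv hvg).1] using hlt

theorem IsSegmentedLinkage.false_of_Q3plus {a b : ι → V}
    (hL : IsSegmentedLinkage G n c₁ c₂ x₁ x₂ S a b) {A B : Fin 4 → V} (hA : Function.Injective A)
    (hB : Function.Injective B) (hAB : ∀ i j, (i = j → i = 3) → ∃ g, a g = A i ∧ b g = B j) :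
    False := by
  obtain ⟨g, hga, hgb⟩ := hAB 3 3 fun _ => rfl
  have hA_mem (i) : A i ∈ Set.range c₁ :=
    let ⟨_, h, _⟩ := hAB i 3 id
    h ▸ (hL.mem_range _).1
  have hB_mem (j) : B j ∈ Set.range c₂ ∩ Set.range c₁ :=
    let ⟨_, _, h⟩ := hAB 3 j fun _ => rfl
    h ▸ hL.symm.mem_range _
  obtain ⟨m, P, hP, hm⟩ := hL.exists_isChart g
  obtain ⟨σ, hσ, hlt⟩ := exists_perm_apply_last (q := P ∘ A)
    (fun i j h => hA (hP.injOn (hA_mem i) (hA_mem j) h)) fun i =>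
      (congrArg P (hm.trans hga)).ge.trans
        (hP.apply_base_le hL.cycle₁ (by have := hL.three_le; lia) (hA_mem i))
  change σ 3 = 3 at hσ
  have hBσ := hB.comp σ.injective
  have hgσ : b g = B (σ 3) := by rw [hσ, hgb]
  obtain ⟨c, hc, hrange, p, Q, hQ, hQinj, hQg, h₀₂⟩ := hL.symm.exists_isOrderedPlacement_lt (g := g)
    (hB_mem (σ 0)) (hB_mem (σ 2)) (hBσ.ne (by decide)) (hgσ ▸ hBσ.ne (by decide))
    (hgσ ▸ hBσ.ne (by decide))
  refine IsLinkage.false_of_Q3plus hL.three_le hL.length_le hL.cycle₁ hc (hrange ▸ hL.linkage)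
    (hrange ▸ hL.isOrderedPlacement hP (hm ▸ (hL.mem_range g).2)) hQ (hA.comp σ.injective) hlt
    (fun i j h => hBσ (hQinj (hB_mem _).1 (hB_mem _).1 h)) (fun j => hgσ ▸ hQg _ (hB_mem (σ j))) h₀₂
    fun i j hij => hAB _ _ fun h => ?_
  rw [hij (σ.injective h), hσ]

end Exclusion

section Menger

variable {V : Type*} {G : SimpleGraph V} {A B C S T : Finset V} {x y : V}

theorem isSeparator_iff_forall_walk :
    IsSeparator G A B S ↔ ∀ a ∈ A, ∀ b ∈ B, ∀ w : G.Walk a b, ∃ s ∈ S, s ∈ w.support := by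
  classical
  refine ⟨fun h a ha b hb w => ?_, fun h a b ha hb w _ => h a ha b hb w⟩
  obtain ⟨s, hs, hsw⟩ := h a b ha hb w.bypass w.bypass_isPath
  exact ⟨s, hs, w.support_bypass_subset_support hsw⟩

theorem _root_.IsSeparator.symm (h : IsSeparator G A B S) : IsSeparator G B A S :=
  fun b a hb ha w hw =>
    let ⟨s, hs, hsw⟩ := h a b ha hb w.reverse hw.reverse
    ⟨s, hs, by simpa using hsw⟩

theorem _root_.IsSeparator.mono_right (h : IsSeparator G A B S) (hCB : C ⊆ B) :
    IsSeparator G A C S :=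
  fun a c ha hc => h a c ha (hCB hc)

theorem _root_.IsSeparator.trans (hS : IsSeparator G A B S) (hT : IsSeparator G A S T) :
    IsSeparator G A B T := by
  classical
  intro a b ha hb w hw
  obtain ⟨s, hs, hsw⟩ := hS a b ha hb w hw
  obtain ⟨t, ht, htw⟩ := hT a s ha hs (w.takeUntil s hsw) (hw.takeUntil hsw)
  exact ⟨t, ht, w.support_takeUntil_subset_support hsw htw⟩

theorem isSeparator_singleton_of_mem (hx : x ∈ S) : IsSeparator G A {x} S := fun _ _ _ hb w _ =>
  ⟨x, hx, Finset.mem_singleton.1 hb ▸ w.end_mem_support⟩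

theorem _root_.IsSeparator.singleton_or_singleton (h : IsSeparator G A B S) (x : V) :
    IsSeparator G A {x} S ∨ IsSeparator G B {x} S := by
  simp only [isSeparator_iff_forall_walk, Finset.mem_singleton, forall_eq] at h ⊢
  by_contra! ⟨⟨a, ha, w, hw⟩, b, hb, w', hw'⟩
  obtain ⟨s, hs, hsw⟩ := h a ha b hb (w.append w'.reverse)
  rw [Walk.mem_support_append_iff, Walk.support_reverse, List.mem_reverse] at hsw
  exact hsw.elim (hw s hs) (hw' s hs)

theorem _root_.IsSeparator.insert_of_deleteEdges [DecidableEq V]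
    (h : IsSeparator (G.deleteEdges {s(x, y)}) A B S) : IsSeparator G A B (insert x S) := by
  intro a b ha hb w hw
  by_cases hx : x ∈ w.support
  · exact ⟨x, Finset.mem_insert_self x S, hx⟩
  have hxy : ∀ e ∈ w.edges, e ∉ ({s(x, y)} : Set (Sym2 V)) := fun e he hexy =>
    hx (w.fst_mem_support_of_mem_edges (Set.mem_singleton_iff.1 hexy ▸ he))
  obtain ⟨s, hs, hsw⟩ := h a b ha hb (w.toDeleteEdges _ hxy) (hw.toDeleteEdges _ _ hxy)
  exact ⟨s, Finset.mem_insert_of_mem hs, by simpa using hsw⟩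

theorem _root_.IsSeparator.of_deleteEdges (h : IsSeparator (G.deleteEdges {s(x, y)}) A B S)
    (hx : IsSeparator (G.deleteEdges {s(x, y)}) A {x} S)
    (hy : IsSeparator (G.deleteEdges {s(x, y)}) A {y} S) : IsSeparator G A B S := by
  simp only [isSeparator_iff_forall_walk, Finset.mem_singleton, forall_eq] at h hx hy ⊢
  by_contra! ⟨a, ha, b, hb, w, hw⟩
  suffices ∀ {u a} (w : G.Walk u a), a ∈ A → (∀ s ∈ S, s ∉ w.support) →
      ∃ w' : (G.deleteEdges {s(x, y)}).Walk a u, ∀ s ∈ S, s ∉ w'.support by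
    obtain ⟨w', hw'⟩ := this w.reverse ha (by simpa using hw)
    obtain ⟨s, hs, hsw⟩ := h a ha b hb w'
    exact hw' s hs hsw
  intro u a w ha hw
  induction w with
  | nil => exact ⟨.nil, by simpa using hw⟩
  | @cons u v a huv w ih =>
    simp only [Walk.support_cons, List.mem_cons, not_or] at hw
    obtain ⟨w', hw'⟩ := ih ha fun s hs => (hw s hs).2
    have hvx : v ≠ x := by
      rintro rfl
      exact let ⟨s, hs, hsw⟩ := hx a ha w'; hw' s hs hsw
    have hvy : v ≠ y := by
      rintro rfl
      exact let ⟨s, hs, hsw⟩ := hy a ha w'; hw' s hs hsw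
    refine ⟨w'.concat (deleteEdges_adj.2 ⟨huv.symm, by simp [hvx, hvy]⟩), fun s hs => ?_⟩
    simp [hw' s hs, (hw s hs).1]

variable {ι : Type*} {x₁ x₂ : ι → V} {P : ι → Finset V} {s : Set ι}

theorem IsLinkage.exists_isPath {A B : Set V} (hL : IsLinkage G A B x₁ x₂ P s) {e : ι}
    (he : e ∈ s) : ∃ w : G.Walk (x₁ e) (x₂ e), w.IsPath ∧ ∀ v, v ∈ w.support ↔ v ∈ P e := by
  obtain ⟨w, hw⟩ := hL.exists_walk e he
  exact ⟨w, .mk' (Multiset.coe_nodup.1 (hw ▸ (P e).nodup)), fun v => by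
    rw [← Finset.mem_val, ← hw, Multiset.mem_coe]⟩

theorem IsLinkage.not_isSeparator_singleton {X : Finset V}
    (hL : IsLinkage G A X x₁ x₂ P s) (hSX : S ⊆ X) {e : ι} (he : e ∈ s) (hx : x ∈ P e)
    (hne : x ≠ x₂ e) : ¬ IsSeparator G A {x} S := by
  classical
  intro h
  obtain ⟨w, hpath, hmem⟩ := hL.exists_isPath he
  obtain ⟨v, hv, hvw⟩ := h _ x (hL.fst_mem e he) (Finset.mem_singleton_self x)
    (w.takeUntil x ((hmem x).2 hx)) (hpath.takeUntil _)
  have hvx₂ := hL.eq_snd e he v ((hmem v).1 (w.support_takeUntil_subset_support _ hvw)) (hSX hv)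
  exact Walk.endpoint_notMem_support_takeUntil hpath ((hmem x).2 hx) hne.symm (hvx₂ ▸ hvw)

theorem exists_isPath_meeting_ends {A B : Set V} {T : Finset V}
    (h : ∃ a ∈ A, ∃ b ∈ B, ∃ w : G.Walk a b, ∀ v ∈ w.support, v ∈ T) :
    ∃ a ∈ A, ∃ b ∈ B, ∃ w : G.Walk a b, w.IsPath ∧ (∀ v ∈ w.support, v ∈ T) ∧
      (∀ v ∈ w.support, v ∈ A → v = a) ∧ ∀ v ∈ w.support, v ∈ B → v = b := by
  classical
  have hlen : ∃ l, ∃ a ∈ A, ∃ b ∈ B, ∃ w : G.Walk a b, (∀ v ∈ w.support, v ∈ T) ∧ w.length = l :=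
    let ⟨a, ha, b, hb, w, hw⟩ := h
    ⟨_, a, ha, b, hb, w, hw, rfl⟩
  obtain ⟨a, ha, b, hb, w, hwT, hw⟩ := Nat.find_spec hlen
  have hwT' : ∀ v ∈ w.bypass.support, v ∈ T := fun v hv =>
    hwT v (w.support_bypass_subset_support hv)
  have hmin {a' b' : V} (ha' : a' ∈ A) (hb' : b' ∈ B) (w' : G.Walk a' b')
      (hw' : w'.support ⊆ w.bypass.support) : w.bypass.length ≤ w'.length :=
    w.length_bypass_le_length.trans (hw ▸ Nat.find_min' hlen
      ⟨a', ha', b', hb', w', fun v hv => hwT' v (hw' hv), rfl⟩)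
  refine ⟨a, ha, b, hb, w.bypass, w.bypass_isPath, hwT', fun v hv hvA => ?_, fun v hv hvB => ?_⟩
  · have := hmin hvA hb _ (w.bypass.support_dropUntil_subset_support hv)
    have := congrArg Walk.length (w.bypass.take_spec hv)
    rw [Walk.length_append] at this
    exact (Walk.eq_of_length_eq_zero (p := w.bypass.takeUntil v hv) (by lia)).symm
  · have := hmin ha hvB _ (w.bypass.support_takeUntil_subset_support hv)
    have := congrArg Walk.length (w.bypass.take_spec hv)
    rw [Walk.length_append] at this
    exact Walk.eq_of_length_eq_zero (p := w.bypass.dropUntil v hv) (by lia)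

theorem exists_isLinkage_of_pairwiseDisjoint {A B : Set V} {T : ι → Finset V}
    (hT : Pairwise fun e f => Disjoint (T e) (T f))
    (h : ∀ e, ∃ a ∈ A, ∃ b ∈ B, ∃ w : G.Walk a b, ∀ v ∈ w.support, v ∈ T e) :
    ∃ x₁ x₂ P, IsLinkage G A B x₁ x₂ P (Set.univ : Set ι) := by
  classical
  choose x₁ hx₁ x₂ hx₂ w hw hwT heq₁ heq₂ using fun e => exists_isPath_meeting_ends (h e)
  refine ⟨x₁, x₂, fun e => (w e).support.toFinset, fun e _ => hx₁ e, fun e _ => hx₂ e,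
    fun e _ => ⟨w e, ?_⟩, fun e _ v hv => heq₁ e v (List.mem_toFinset.1 hv),
    fun e _ v hv => heq₂ e v (List.mem_toFinset.1 hv),
    fun e _ f _ hef => (hT hef).mono ?_ ?_⟩
  · rw [List.toFinset_val, (hw e).support_nodup.dedup]
  all_goals exact fun v hv => hwT _ v (List.mem_toFinset.1 hv)

theorem IsLinkage.exists_snd_eq [Fintype ι] {A : Set V} {X : Finset V}
    (hL : IsLinkage G A X x₁ x₂ P Set.univ) (hX : X.card ≤ Fintype.card ι) (hx : x ∈ X) :
    ∃ e, x₂ e = x := by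
  classical
  have hsub : Finset.univ.image x₂ ⊆ X := Finset.image_subset_iff.2 fun e _ => hL.snd_mem e trivial
  have heq := Finset.eq_of_subset_of_card_le hsub (by
    rwa [Finset.card_image_of_injective _ (Set.injOn_univ.1 hL.symm.injOn_fst)])
  rw [← heq] at hx
  simpa using hx

theorem IsLinkage.snd_eq_fst_of_mem {X Y : Finset V} {y₁ y₂ : ι → V} {Q : ι → Finset V}
    {t : Set ι} (hP : IsLinkage G A X x₁ x₂ P s) (hQ : IsLinkage G Y B y₁ y₂ Q t)
    (hS : IsSeparator G A B S) (hSX : S ⊆ X) (hSY : S ⊆ Y)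
    (hX : ∀ z ∈ X, IsSeparator G B {z} S) (hY : ∀ z ∈ Y, IsSeparator G A {z} S) {e f : ι}
    (he : e ∈ s) (hf : f ∈ t) (hxP : x ∈ P e) (hxQ : x ∈ Q f) : x₂ e = y₁ f := by
  have hxy (h : IsSeparator G B {x} S) : x = y₁ f := by
    by_contra hne
    exact hQ.symm.not_isSeparator_singleton hSY hf hxQ hne h
  have hxx : x = x₂ e := by
    by_contra hne
    have hA := hP.not_isSeparator_singleton hSX he hxP hne
    exact hA (hY x (hxy ((hS.singleton_or_singleton x).resolve_left hA) ▸ hQ.fst_mem f hf))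
  exact hxx.symm.trans (hxy (hX x (hxx ▸ hP.snd_mem e he)))

theorem IsLinkage.exists_extension [DecidableEq V] [Fintype ι] {A B : Set V} {y₁ y₂ : ι → V}
    {Q : ι → Finset V} (hyS : y ∉ S) (hxy : x ≠ y) (hcard : S.card + 1 = Fintype.card ι)
    (hP : IsLinkage G A ↑(insert x S) x₁ x₂ P Set.univ)
    (hQ : IsLinkage G ↑(insert y S) B y₁ y₂ Q Set.univ) :
    ∃ φ : ι → ι, Function.Injective φ ∧ (∀ e, y₁ (φ e) = if x₂ e = x then y else x₂ e) ∧
      ∀ e f, x₂ e = y₁ (φ f) → e = f := by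
  have hne (e) : x₂ e ≠ y := fun h => by simpa [h, hxy.symm, hyS] using hP.snd_mem e trivial
  have hinj := Set.injOn_univ.1 hP.symm.injOn_fst
  have hnext (e) : ∃ f, y₁ f = if x₂ e = x then y else x₂ e := by
    refine hQ.symm.exists_snd_eq (by rw [Finset.card_insert_of_notMem hyS, hcard]) ?_
    have := hP.snd_mem e trivial
    split_ifs <;> simp_all
  choose φ hφ using hnext
  refine ⟨φ, fun e f hef => hinj ?_, hφ, fun e f hef => hinj ?_⟩
  · have := (hφ e).symm.trans (hef ▸ hφ f)
    have := hne e
    have := hne f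
    split_ifs at * <;> simp_all
  · have := hef.trans (hφ f)
    have := hne e
    split_ifs at * <;> simp_all

theorem IsLinkage.exists_isLinkage_of_deleteEdges [DecidableEq V] [Fintype ι] {y₁ y₂ : ι → V}
    {Q : ι → Finset V} (hxy : G.Adj x y) (hS : IsSeparator (G.deleteEdges {s(x, y)}) A B S)
    (hyS : y ∉ S) (hy : IsSeparator (G.deleteEdges {s(x, y)}) A {y} S)
    (hx : IsSeparator (G.deleteEdges {s(x, y)}) B {x} S) (hcard : S.card + 1 = Fintype.card ι)
    (hP : IsLinkage (G.deleteEdges {s(x, y)}) A ↑(insert x S) x₁ x₂ P Set.univ)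
    (hQ : IsLinkage (G.deleteEdges {s(x, y)}) ↑(insert y S) B y₁ y₂ Q Set.univ) :
    ∃ z₁ z₂ R, IsLinkage G A B z₁ z₂ R (Set.univ : Set ι) := by
  have hX : ∀ z ∈ insert x S, IsSeparator (G.deleteEdges {s(x, y)}) B {z} S :=
    Finset.forall_mem_insert .. |>.2 ⟨hx, fun z hz => isSeparator_singleton_of_mem hz⟩
  have hY : ∀ z ∈ insert y S, IsSeparator (G.deleteEdges {s(x, y)}) A {z} S :=
    Finset.forall_mem_insert .. |>.2 ⟨hy, fun z hz => isSeparator_singleton_of_mem hz⟩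
  obtain ⟨φ, hφinj, hφ, hφeq⟩ := hP.exists_extension hyS hxy.ne hcard hQ
  have hmeet {e f : ι} (hef : ¬ Disjoint (P e) (Q (φ f))) : e = f := by
    obtain ⟨v, hvP, hvQ⟩ := Finset.not_disjoint_iff.1 hef
    exact hφeq e f <| hP.snd_eq_fst_of_mem hQ hS (Finset.subset_insert _ _)
      (Finset.subset_insert _ _) hX hY trivial trivial hvP hvQ
  refine exists_isLinkage_of_pairwiseDisjoint (T := fun e => P e ∪ Q (φ e)) (fun e f hef => ?_)
    fun e => ⟨x₁ e, hP.fst_mem e trivial, y₂ (φ e), hQ.snd_mem _ trivial, ?_⟩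
  · simp only [Finset.disjoint_union_left, Finset.disjoint_union_right]
    exact ⟨⟨hP.disjoint trivial trivial hef, (not_imp_comm.1 hmeet hef.symm).symm⟩,
      not_imp_comm.1 hmeet hef, hQ.disjoint trivial trivial (hφinj.ne hef)⟩
  · obtain ⟨w, -, hw⟩ := hP.exists_isPath (e := e) trivial
    obtain ⟨w', -, hw'⟩ := hQ.exists_isPath (e := φ e) trivial
    have hjoin : ∃ w : G.Walk (x₂ e) (y₁ (φ e)), w.support ⊆ [x₂ e, y₁ (φ e)] := by
      by_cases h : x₂ e = x
      · have hadj : G.Adj (x₂ e) (y₁ (φ e)) := by simpa [hφ, h] using hxy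
        exact ⟨hadj.toWalk, by simp⟩
      · have heq : x₂ e = y₁ (φ e) := by simp [hφ, h]
        exact ⟨Walk.nil.copy rfl heq, by simp⟩
    obtain ⟨j, hj⟩ := hjoin
    refine ⟨((w.mapLe (deleteEdges_le _)).append j).append (w'.mapLe (deleteEdges_le _)),
      fun v hv => ?_⟩
    have hxP := (hw _).1 w.end_mem_support
    have hyQ := (hw' _).1 w'.start_mem_support
    simp only [Walk.mem_support_append_iff, Walk.support_mapLe_eq_support, hw, hw'] at hv
    have := @hj v
    grind

theorem _root_.IsSeparator.singleton_and_singleton_of_deleteEdges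
    (hS : IsSeparator (G.deleteEdges {s(x, y)}) A B S) (hGS : ¬ IsSeparator G A B S) :
    IsSeparator (G.deleteEdges {s(x, y)}) A {x} S ∧ IsSeparator (G.deleteEdges {s(x, y)}) B {y} S ∨
      IsSeparator (G.deleteEdges {s(x, y)}) A {y} S ∧
        IsSeparator (G.deleteEdges {s(x, y)}) B {x} S := by
  have hA := fun hx hy => hGS (hS.of_deleteEdges hx hy)
  have hB := fun hx hy => hGS (hS.symm.of_deleteEdges hx hy).symm
  have hx := hS.singleton_or_singleton x
  have hy := hS.singleton_or_singleton y
  tauto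

theorem _root_.IsSeparator.of_deleteEdges_insert [DecidableEq V]
    (hS : IsSeparator (G.deleteEdges {s(x, y)}) A B S)
    (hy : IsSeparator (G.deleteEdges {s(x, y)}) A {y} S)
    (hT : IsSeparator (G.deleteEdges {s(x, y)}) A (insert x S) T) : IsSeparator G A B T :=
  have hST := hT.mono_right (Finset.subset_insert x S)
  (hS.trans hST).of_deleteEdges
    (hT.mono_right (Finset.singleton_subset_iff.2 (Finset.mem_insert_self x S))) (hy.trans hST)

theorem exists_isLinkage_of_card_lt [Fintype ι] (hxy : G.Adj x y)
    (h : ∀ S, IsSeparator G A B S → Fintype.card ι ≤ S.card)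
    (ih : ∀ A B, (∀ S, IsSeparator (G.deleteEdges {s(x, y)}) A B S → Fintype.card ι ≤ S.card) →
      ∃ x₁ x₂ P, IsLinkage (G.deleteEdges {s(x, y)}) A B x₁ x₂ P (Set.univ : Set ι))
    (hS : IsSeparator (G.deleteEdges {s(x, y)}) A B S) (hcard : S.card < Fintype.card ι)
    (hy : IsSeparator (G.deleteEdges {s(x, y)}) A {y} S)
    (hx : IsSeparator (G.deleteEdges {s(x, y)}) B {x} S) :
    ∃ x₁ x₂ P, IsLinkage G A B x₁ x₂ P (Set.univ : Set ι) := by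
  classical
  have hswap : G.deleteEdges {s(y, x)} = G.deleteEdges {s(x, y)} := by rw [Sym2.eq_swap]
  have hxS := h _ hS.insert_of_deleteEdges
  have hyS := h _ (hswap ▸ hS : IsSeparator (G.deleteEdges {s(y, x)}) A B S).insert_of_deleteEdges
  have hnotMem {z : V} (hz : Fintype.card ι ≤ (insert z S).card) : z ∉ S := fun hzS => by
    rw [Finset.insert_eq_of_mem hzS] at hz
    exact hz.not_gt hcard
  obtain ⟨x₁, x₂, P, hP⟩ := ih A (insert x S) fun T hT => h T (hS.of_deleteEdges_insert hy hT)
  obtain ⟨y₁, y₂, Q, hQ⟩ := ih B (insert y S) fun T hT => h T <| by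
    rw [← hswap] at hS hx hT
    exact (hS.symm.of_deleteEdges_insert hx hT).symm
  refine hP.exists_isLinkage_of_deleteEdges hxy hS (hnotMem hyS) hy hx ?_ hQ.symm
  rw [Finset.card_insert_of_notMem (hnotMem hxS)] at hxS
  lia

/-- Menger's theorem, by Göring's induction on the edges: if some `S` with fewer than `card ι`
vertices separates `A` from `B` once the edge `xy` is deleted, then linkages from `A` to `S ∪ {x}`
and from `S ∪ {y}` to `B` can be joined along `S` and `xy`. -/
theorem exists_isLinkage_of_forall_isSeparator [Finite V] [Fintype ι] (G : SimpleGraph V)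
    (A B : Finset V) (h : ∀ S, IsSeparator G A B S → Fintype.card ι ≤ S.card) :
    ∃ x₁ x₂ P, IsLinkage G A B x₁ x₂ P (Set.univ : Set ι) := by
  classical
  induction G using WellFoundedLT.induction generalizing A B with | _ G ih
  by_cases hG : ∃ x y, G.Adj x y
  · obtain ⟨x, y, hxy⟩ := hG
    have hlt : G.deleteEdges {s(x, y)} < G :=
      (deleteEdges_le _).lt_of_ne fun heq => by
      rw [← heq] at hxy
      simp at hxy
    by_cases hG' : ∀ S, IsSeparator (G.deleteEdges {s(x, y)}) A B S → Fintype.card ι ≤ S.card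
    · obtain ⟨x₁, x₂, P, hP⟩ := ih _ hlt A B hG'
      exact ⟨x₁, x₂, P, hP.mono_graph hlt.le⟩
    push Not at hG'
    obtain ⟨S, hS, hcard⟩ := hG'
    have hGS : ¬ IsSeparator G A B S := fun hGS => (h S hGS).not_gt hcard
    rcases hS.singleton_and_singleton_of_deleteEdges hGS with ⟨hx, hy⟩ | ⟨hy, hx⟩
    · rw [Sym2.eq_swap] at hS hx hy hlt
      exact exists_isLinkage_of_card_lt hxy.symm h (ih _ hlt) hS hcard hx hy
    · exact exists_isLinkage_of_card_lt hxy h (ih _ hlt) hS hcard hy hx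
  · have hAB : IsSeparator G A B (A ∩ B) := fun a b ha hb w _ => by
      cases w with
      | nil => exact ⟨a, Finset.mem_inter.2 ⟨ha, hb⟩, by simp⟩
      | cons hadj _ => exact absurd ⟨_, _, hadj⟩ hG
    obtain ⟨z⟩ : Nonempty (ι ↪ ↥(A ∩ B)) :=
      Function.Embedding.nonempty_of_card_le (by simpa using h _ hAB)
    have hz (e) := Finset.mem_inter.1 (z e).2
    refine exists_isLinkage_of_pairwiseDisjoint (T := fun e => {(z e : V)}) (fun e f hef => ?_)
      fun e => ⟨z e, (hz e).1, z e, (hz e).2, .nil, by simp⟩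
    simpa using hef

end Menger

section Patterns

variable {α β κ κ' ι : Type*} {H : SimpleGraph (κ ⊕ κ')} {a : ι → α} {b : ι → β}

/-- The bipartite graph with parts `α` and `β` whose edges are the pairs `(a e, b e)`. -/
def pairGraph (a : ι → α) (b : ι → β) : SimpleGraph (α ⊕ β) :=
  fromEdgeSet (Set.range fun e => s(Sum.inl (a e), Sum.inr (b e)))

theorem pairGraph_adj {u v : α ⊕ β} : (pairGraph a b).Adj u v ↔
    ∃ e, u = .inl (a e) ∧ v = .inr (b e) ∨ u = .inr (b e) ∧ v = .inl (a e) := by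
  simp only [pairGraph, fromEdgeSet_adj, Set.mem_range, Sym2.eq_iff]
  grind

theorem ncard_edgeSet_pairGraph (h : Function.Injective fun e => (a e, b e)) :
    (pairGraph a b).edgeSet.ncard = Nat.card ι := by
  rw [pairGraph, edgeSet_fromEdgeSet, sdiff_eq_left.2, Set.ncard_range_of_injective]
  · intro e f hef
    exact h (by simpa using hef)
  · exact Set.disjoint_left.2 (by simp)

/-- The bipartite graph `H` embeds, with its left part going to the left, into the bipartite
graph of the pairs `(a e, b e)`. -/
def ContainsPairs (H : SimpleGraph (κ ⊕ κ')) (a : ι → α) (b : ι → β) : Prop :=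
  ∃ A : κ → α, ∃ B : κ' → β, Function.Injective A ∧ Function.Injective B ∧
    ∀ i j, H.Adj (.inl i) (.inr j) → ∃ e, a e = A i ∧ b e = B j

theorem ContainsPairs.comp {α' β' : Type*} {f : α → α'} {g : β → β'} (h : ContainsPairs H a b)
    (hf : Function.Injective f) (hg : Function.Injective g) :
    ContainsPairs H (f ∘ a) (g ∘ b) := by
  obtain ⟨A, B, hA, hB, hAB⟩ := h
  refine ⟨f ∘ A, g ∘ B, hf.comp hA, hg.comp hB, fun i j hij => ?_⟩
  obtain ⟨e, ha, hb⟩ := hAB i j hij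
  exact ⟨e, congrArg f ha, congrArg g hb⟩

theorem containsPairs_of_eq_inl {f : κ ⊕ κ' → α ⊕ β} (hf : Function.Injective f)
    (hadj : ∀ u v, H.Adj u v → (pairGraph a b).Adj (f u) (f v)) {i₀ : κ} {j₀ : κ'}
    (hi₀ : ∀ j, H.Adj (.inl i₀) (.inr j)) (hj₀ : ∀ i, H.Adj (.inl i) (.inr j₀)) {x : α}
    (hx : f (.inl i₀) = .inl x) : ContainsPairs H a b := by
  have hB (j) : ∃ y, f (.inr j) = .inr y := by
    obtain ⟨e, h | h⟩ := pairGraph_adj.1 (hadj _ _ (hi₀ j))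
    · exact ⟨_, h.2⟩
    · simp [hx] at h
  choose B hB using hB
  have hA (i) : ∃ y, f (.inl i) = .inl y := by
    obtain ⟨e, h | h⟩ := pairGraph_adj.1 (hadj _ _ (hj₀ i))
    · exact ⟨_, h.1⟩
    · simp [hB] at h
  choose A hA using hA
  refine ⟨A, B, fun i j hij => ?_, fun i j hij => ?_, fun i j hij => ?_⟩
  · exact Sum.inl_injective (hf (by rw [hA, hA, hij]))
  · exact Sum.inr_injective (hf (by rw [hB, hB, hij]))
  · have := pairGraph_adj.1 (hadj _ _ hij)
    simp only [hA, hB, Sum.inl.injEq, Sum.inr.injEq, reduceCtorEq, false_and, or_false] at this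
    exact this.imp fun e he => ⟨he.1.symm, he.2.symm⟩

theorem containsPairs_or_of_containsCopy (h : ContainsCopy H (pairGraph a b)) {i₀ : κ}
    {j₀ : κ'} (hi₀ : ∀ j, H.Adj (.inl i₀) (.inr j)) (hj₀ : ∀ i, H.Adj (.inl i) (.inr j₀)) :
    ContainsPairs H a b ∨ ContainsPairs H b a := by
  obtain ⟨f, hf, hadj⟩ := h
  rcases hx : f (.inl i₀) with x | y
  · exact .inl (containsPairs_of_eq_inl hf hadj hi₀ hj₀ hx)
  · refine .inr (containsPairs_of_eq_inl (f := Sum.swap ∘ f)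
      (Sum.swap_leftInverse.injective.comp hf) (fun u v huv => ?_) hi₀ hj₀ (x := y) (by simp [hx]))
    obtain ⟨e, h | h⟩ := pairGraph_adj.1 (hadj u v huv)
    all_goals exact pairGraph_adj.2 ⟨e, by simp [h]⟩

theorem K33_adj (i j : Fin 3) : K33.Adj (.inl i) (.inr j) := by
  simp [K33]

theorem Q3plus_adj {i j : Fin 4} (h : i = j → i = 3) : Q3plus.Adj (.inl i) (.inr j) := by
  simp only [Q3plus, deleteEdges_adj, completeBipartiteGraph_adj, Set.mem_ofPred_eq, Sym2.eq_iff]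
  grind

end Patterns

section PairGraphOfLinkage

variable {V ι : Type*} {G : SimpleGraph V} {n : ℕ} {c₁ c₂ : ℤ → V} {x₁ x₂ a b : ι → V}
  {S : ι → Finset V}

theorem IsSegmentedLinkage.not_containsPairs_K33
    (hL : IsSegmentedLinkage G n c₁ c₂ x₁ x₂ S a b) : ¬ ContainsPairs K33 a b :=
  fun ⟨_, _, hA, hB, hAB⟩ => hL.false_of_K33 hA hB fun i j => hAB i j (K33_adj i j)

theorem IsSegmentedLinkage.not_containsPairs_Q3plus
    (hL : IsSegmentedLinkage G n c₁ c₂ x₁ x₂ S a b) : ¬ ContainsPairs Q3plus a b :=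
  fun ⟨_, _, hA, hB, hAB⟩ => hL.false_of_Q3plus hA hB fun i j hij => hAB i j (Q3plus_adj hij)

theorem IsSegmentedLinkage.exists_graph_ncard_edgeSet_eq
    (hL : IsSegmentedLinkage G n c₁ c₂ x₁ x₂ S a b) {I : Finset V}
    (hI : Set.range c₁ ∩ Set.range c₂ ⊆ I) :
    ∃ F : SimpleGraph (Fin (2 * I.card)), ¬ ContainsCopy Q3plus F ∧ ¬ ContainsCopy K33 F ∧
      F.edgeSet.ncard = Nat.card ι := by
  let a' (e : ι) : I := ⟨a e, hI (hL.mem_range e)⟩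
  let b' (e : ι) : I := ⟨b e, hI (hL.symm.mem_range e).symm⟩
  have hcard : Fintype.card (I ⊕ I) = 2 * I.card := by simp [two_mul]
  let φ := (pairGraph a' b').overFinIso hcard
  have hcopy {κ : Type} {H : SimpleGraph (κ ⊕ κ)} (i₀ : κ)
      (hi₀ : ∀ j, H.Adj (.inl i₀) (.inr j)) (hj₀ : ∀ i, H.Adj (.inl i) (.inr i₀))
      (ha : ¬ ContainsPairs H a b) (hb : ¬ ContainsPairs H b a) :
      ¬ ContainsCopy H ((pairGraph a' b').overFin hcard) := by
    rintro ⟨f, hf, hadj⟩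
    have : ContainsCopy H (pairGraph a' b') :=
      ⟨φ.symm ∘ f, φ.symm.injective.comp hf, fun u v huv => φ.symm.map_adj_iff.2 (hadj u v huv)⟩
    rcases containsPairs_or_of_containsCopy this hi₀ hj₀ with h | h
    · exact ha (h.comp Subtype.val_injective Subtype.val_injective)
    · exact hb (h.comp Subtype.val_injective Subtype.val_injective)
  refine ⟨_, hcopy 3 ?_ ?_ hL.not_containsPairs_Q3plus hL.symm.not_containsPairs_Q3plus,
    hcopy 0 (K33_adj 0) (K33_adj · 0) hL.not_containsPairs_K33 hL.symm.not_containsPairs_K33, ?_⟩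
  · exact fun j => Q3plus_adj (by simp)
  · exact fun i => Q3plus_adj (by simp)
  · rw [← ncard_edgeSet_pairGraph (a := a') (b := b'), ← Nat.card_coe_set_eq,
      Nat.card_congr φ.symm.mapEdgeSet, Nat.card_coe_set_eq]
    intro e f hef
    simp only [Prod.mk.injEq, Subtype.mk.injEq, a', b'] at hef
    exact hL.injective hef.1 hef.2

end PairGraphOfLinkage

section CycleOfWalk

variable {V : Type*} {G : SimpleGraph V} {u : V}

theorem getVert_emod_add_one (w : G.Walk u u) (hw : 0 < w.length) (i : ℤ) :
    w.getVert ((i + 1) % w.length).toNat = w.getVert ((i % w.length).toNat + 1) := by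
  have hnonneg := Int.emod_nonneg i (b := w.length) (by lia)
  have hlt := Int.emod_lt_of_pos i (b := w.length) (by lia)
  rw [← Int.emod_add_emod]
  rcases (Int.add_one_le_of_lt hlt).lt_or_eq with h | h
  · rw [Int.emod_eq_of_lt (by lia) h, Int.toNat_add hnonneg (by lia), Int.toNat_one]
  · rw [h, Int.emod_self, show (i % w.length).toNat + 1 = w.length by lia, Walk.getVert_length]
    simp

theorem exists_isPeriodicCycle_of_isCycle {w : G.Walk u u} (hw : w.IsCycle) :
    ∃ c, IsPeriodicCycle G w.length c ∧ Set.range c = {v | v ∈ w.support} := by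
  have hlen := hw.three_le_length
  have hnonneg (i : ℤ) := Int.emod_nonneg i (b := w.length) (by lia)
  have hlt (i : ℤ) := Int.emod_lt_of_pos i (b := w.length) (by lia)
  have hmem (i : ℤ) : (i % w.length).toNat ∈ {m | m ≤ w.length - 1} := by
    have := hlt i
    rw [Set.mem_ofPred_eq]
    lia
  refine ⟨fun i => w.getVert (i % w.length).toNat, ⟨fun i => ?_, fun i j => ?_⟩, ?_⟩
  · rw [getVert_emod_add_one w (by lia)]
    exact w.adj_getVert_succ (by have := hlt i; lia)
  · rw [dvd_sub_comm, ← Int.modEq_iff_dvd]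
    refine ⟨fun hij => ?_, fun hij => congrArg (fun k : ℤ => w.getVert k.toNat) hij⟩
    have := hw.getVert_injOn' (hmem i) (hmem j) hij
    have := hnonneg i
    have := hnonneg j
    exact (by lia : i % w.length = j % w.length)
  · ext v
    refine ⟨?_, fun hv => ?_⟩
    · rintro ⟨i, rfl⟩
      exact w.getVert_mem_support _
    obtain ⟨t, rfl, ht⟩ := Walk.mem_support_iff_exists_getVert.1 hv
    rcases ht.lt_or_eq with ht | rfl
    · exact ⟨t, by simp [← Int.natCast_emod, Nat.mod_eq_of_lt ht]⟩
    · exact ⟨0, by simp⟩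

end CycleOfWalk

section Existence

variable {V ι : Type*} {G : SimpleGraph V} {u v : V}

theorem exists_isSegmentedLinkage [Finite V] [DecidableEq V] [Fintype ι] {c₁ : G.Walk u u}
    {c₂ : G.Walk v v} (h₁ : IsLongestCycle G c₁) (h₂ : IsLongestCycle G c₂)
    (hmeet : (c₁.support.toFinset ∩ c₂.support.toFinset).Nonempty)
    (hsep : ∀ S, IsSeparator G c₁.support.toFinset c₂.support.toFinset S →
      Fintype.card ι ≤ S.card) :
    ∃ d₁ d₂ x₁ x₂ P a b, IsSegmentedLinkage (ι := ι) G c₁.length d₁ d₂ x₁ x₂ P a b ∧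
      Set.range d₁ ∩ Set.range d₂ = ↑(c₁.support.toFinset ∩ c₂.support.toFinset) := by
  obtain ⟨d₁, hd₁, hr₁⟩ := exists_isPeriodicCycle_of_isCycle h₁.1
  obtain ⟨d₂, hd₂, hr₂⟩ := exists_isPeriodicCycle_of_isCycle h₂.1
  rw [le_antisymm (h₁.2 _ _ h₂.1) (h₂.2 _ _ h₁.1)] at hd₂
  rw [← List.coe_toFinset] at hr₁ hr₂
  obtain ⟨x₁, x₂, P, hP⟩ := exists_isLinkage_of_forall_isSeparator G _ _ hsep
  rw [← hr₁, ← hr₂] at hP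
  have hpos : 0 < c₁.length := by have := h₁.1.three_le_length; lia
  have hinter : Set.range d₁ ∩ Set.range d₂ = ↑(c₁.support.toFinset ∩ c₂.support.toFinset) := by
    rw [Finset.coe_inter, hr₁, hr₂]
  rw [← Finset.coe_nonempty, ← hinter] at hmeet
  choose a ha using fun e => hd₁.exists_isSegmentStart hpos hmeet (hP.fst_mem e trivial)
  choose b hb using fun e =>
    hd₂.exists_isSegmentStart hpos (Set.inter_comm _ _ ▸ hmeet) (hP.snd_mem e trivial)
  exact ⟨d₁, d₂, x₁, x₂, P, a, b, ⟨h₁.1.three_le_length, h₁.2, hd₁, hd₂, hP, ha, hb⟩, hinter⟩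

end Existence

end LongestCycles

theorem separator_size_turan (V : Type) [Fintype V] [DecidableEq V] (G : SimpleGraph V)
    (u v : V) (c1 : G.Walk u u) (c2 : G.Walk v v)
    (h1 : IsLongestCycle G c1) (h2 : IsLongestCycle G c2)
    (k : ℕ) (hk : k = (c1.support.toFinset ∩ c2.support.toFinset).card) (hkpos : 0 < k)
    (S : Finset V)
    (hS : IsMinSeparator G (c1.support.toFinset \ c2.support.toFinset)
      (c2.support.toFinset \ c1.support.toFinset) S) :
    ∃ (m : ℕ) (F : SimpleGraph (Fin m)), m ≤ 2 * k ∧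
      ¬ ContainsCopy Q3plus F ∧ ¬ ContainsCopy K33 F ∧ S.card ≤ F.edgeSet.ncard := by
  subst hk
  have hsep : ∀ T, IsSeparator G c1.support.toFinset c2.support.toFinset T →
      Fintype.card S ≤ T.card := fun T hT => by
    rw [Fintype.card_coe]
    exact hS.2 T fun a b ha hb => hT a b (Finset.mem_sdiff.1 ha).1 (Finset.mem_sdiff.1 hb).1
  obtain ⟨d₁, d₂, x₁, x₂, P, a, b, hL, hI⟩ :=
    LongestCycles.exists_isSegmentedLinkage h1 h2 (Finset.card_pos.1 hkpos) hsep
  obtain ⟨F, hQ, hK, hF⟩ := hL.exists_graph_ncard_edgeSet_eq hI.subset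
  exact ⟨_, F, le_rfl, hQ, hK, by simp [hF]⟩
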